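/- arXiv:1907.05253 — 2 statements merged into one kernel-verified Lean document; each statement's English description precedes it below -/
import Mathlib

section
/- Weighted Dirichlet estimate for stable solutions: Let f ∈ C¹, Ω ⊂ ℝⁿ a smooth bounded domain, u a smooth stable solution of −Δu = f(u) in Ω, and α satisfy 0 ≤ α < n−1 and (α−2)²/4 < (n−1−α)²/(n−1). Then for every δ > 0 and every y ∈ K_δ := {x ∈ Ω : dist(x,∂Ω) ≥ δ}, ∫_Ω |∇u(x)|² |x−y|^{−α} dx ≤ C ‖∇u‖²_{L²(Ω∖K_δ)}, with C depending only on Ω, δ, and α. -/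
/-!
Let `p = ∇u`, `A = D²u`, `X = x - y`, `R = |X|² + s²`, `w = R ^ (-α/2)`, and let `ζ` be a cutoff
supported in `Ω`.

The vector field `ζ²w (|p|² X - (X · p) p)` is tangent to the level sets of `u`. The divergence
theorem for it is the geometric Hardy identity (`hardy_identity`)
`0 = ∫ ∇(ζ²w) · (|p|² X - (X · p) p) + ∫ ζ²w ((n - 1)|p|² + (Ap - (tr A)p) · X)`,
and differentiating `w` costs at most `α |p|²`. The remaining bad term is controlled pointwise by
`|Ap - (tr A)p|² ≤ (n - 1)(|p|²|A|² - |Ap|²)` (`hessian_ineq`). Thus, up to errors involving `∇ζ`,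
the integral `(n - 1 - α)² ∫ ζ²w|p|²` is at most `(n - 1) ∫ η² (|A|² - |Ap|²/|p|²)`, where
`η = ζ R ^ ((2 - α)/4)`.

The Sternberg–Zumbrun inequality (`sternberg_zumbrun`) bounds the last integral by `∫ |p|²|∇η|²`,
and `|∇η|² ≤ ((2 - α)/2)² ζ²w` up to errors involving `∇ζ`. The hypothesis
`(α - 2)²/4 < (n - 1 - α)²/(n - 1)` says exactly that the bulk term can be absorbed, which gives
`weighted_cutoff_estimate`. Stability is tested with `η √(|p|² + ε²)` and `ε` is sent to `0`, to
stay smooth at critical points of `u`.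

With `ζ = 1` at distance at least `δ/2` from the boundary, the terms with `∇ζ` live where
`|x - y| ≥ δ/2`, so the weight there is bounded independently of `s` (`regularized_estimate`).
Fatou's lemma as `s → 0` concludes.
-/

open MeasureTheory

noncomputable section

/-- Laplacian `Δf = ∑ᵢ ∂ᵢᵢf`. -/
def lap {n : ℕ} (f : EuclideanSpace ℝ (Fin n) → ℝ)
    (x : EuclideanSpace ℝ (Fin n)) : ℝ :=
  ∑ i : Fin n,
    fderiv ℝ (fun y => fderiv ℝ f y (EuclideanSpace.single i 1)) x
      (EuclideanSpace.single i 1)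

namespace StableEstimate

/-! ### Partial derivatives -/

/-- The `i`-th partial derivative of a function on Euclidean space. -/
def pd {n : ℕ} (i : Fin n) (g : EuclideanSpace ℝ (Fin n) → ℝ)
    (x : EuclideanSpace ℝ (Fin n)) : ℝ :=
  fderiv ℝ g x (EuclideanSpace.single i 1)

section Calculus

variable {n : ℕ} {g h : EuclideanSpace ℝ (Fin n) → ℝ} {x : EuclideanSpace ℝ (Fin n)}

lemma lap_eq (g : EuclideanSpace ℝ (Fin n) → ℝ) : lap g = fun x => ∑ i, pd i (pd i g) x := rfl

lemma contDiff_pd (i : Fin n) (hg : ContDiff ℝ (⊤ : ℕ∞) g) : ContDiff ℝ (⊤ : ℕ∞) (pd i g) :=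
  (hg.fderiv_right (m := (⊤ : ℕ∞)) (by simp)).clm_apply contDiff_const

lemma continuous_pd (i : Fin n) (hg : ContDiff ℝ 1 g) : Continuous (pd i g) :=
  (hg.continuous_fderiv one_ne_zero).clm_apply continuous_const

lemma norm_gradient_sq (g : EuclideanSpace ℝ (Fin n) → ℝ) (x : EuclideanSpace ℝ (Fin n)) :
    ‖gradient g x‖ ^ 2 = ∑ i, pd i g x ^ 2 := by
  rw [EuclideanSpace.norm_sq_eq]
  refine Finset.sum_congr rfl fun i _ => ?_
  have : gradient g x i = pd i g x := by
    rw [pd, ← InnerProductSpace.toDual_symm_apply (𝕜 := ℝ), ← gradient]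
    rw [real_inner_comm, EuclideanSpace.inner_single_left]
    simp
  rw [this, Real.norm_eq_abs, sq_abs]

lemma pd_mul (i : Fin n) (hg : DifferentiableAt ℝ g x) (hh : DifferentiableAt ℝ h x) :
    pd i (fun y => g y * h y) x = pd i g x * h x + g x * pd i h x := by
  simp only [pd]
  rw [fderiv_fun_mul hg hh]
  simp; ring

lemma pd_sub (i : Fin n) (hg : DifferentiableAt ℝ g x) (hh : DifferentiableAt ℝ h x) :
    pd i (fun y => g y - h y) x = pd i g x - pd i h x := by
  simp only [pd]
  rw [fderiv_fun_sub hg hh]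
  simp

lemma pd_sum {ι : Type*} (s : Finset ι) (i : Fin n)
    {G : ι → EuclideanSpace ℝ (Fin n) → ℝ} (hG : ∀ j ∈ s, DifferentiableAt ℝ (G j) x) :
    pd i (fun y => ∑ j ∈ s, G j y) x = ∑ j ∈ s, pd i (G j) x := by
  simp only [pd]
  rw [fderiv_fun_sum hG]
  simp

lemma pd_comp (i : Fin n) {φ : ℝ → ℝ} (hφ : DifferentiableAt ℝ φ (g x))
    (hg : DifferentiableAt ℝ g x) :
    pd i (fun y => φ (g y)) x = deriv φ (g x) * pd i g x := by
  simp only [pd]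
  have := (hφ.hasDerivAt.comp_hasFDerivAt x hg.hasFDerivAt).fderiv
  simp only [Function.comp_def] at this
  rw [this]; simp

lemma pd_coord_sub (i j : Fin n) (y : EuclideanSpace ℝ (Fin n)) :
    pd i (fun z => z j - y j) x = if i = j then 1 else 0 := by
  simp only [pd]
  rw [fderiv_sub_const]
  have : (fun z : EuclideanSpace ℝ (Fin n) => z j) = EuclideanSpace.proj (𝕜 := ℝ) j := rfl
  rw [this, ContinuousLinearMap.fderiv]
  simp [eq_comm]

lemma pd_comm (i j : Fin n) (hg : ContDiff ℝ (⊤ : ℕ∞) g) :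
    pd i (pd j g) = pd j (pd i g) := by
  have hd : Differentiable ℝ (fderiv ℝ g) :=
    (hg.fderiv_right (m := (⊤ : ℕ∞)) (by simp)).differentiable (by simp)
  have key : ∀ (a b : Fin n) z, pd a (pd b g) z =
      fderiv ℝ (fderiv ℝ g) z (EuclideanSpace.single a 1) (EuclideanSpace.single b 1) := by
    intro a b z
    have h1 : pd b g = fun y => fderiv ℝ g y (EuclideanSpace.single b 1) := rfl
    rw [pd, h1, fderiv_clm_apply (hd z) (differentiableAt_const _)]
    simp
  funext z
  rw [key, key]
  refine hg.contDiffAt.isSymmSndFDerivAt ?_ _ _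
  simpa using WithTop.coe_le_coe.2 (le_top : (2 : ℕ∞) ≤ ⊤)

lemma integral_pd_eq_zero (i : Fin n) (hg : ContDiff ℝ 1 g) (hc : HasCompactSupport g) :
    ∫ x, pd i g x = 0 := by
  have hi : Integrable (pd i g) :=
    (continuous_pd i hg).integrable_of_hasCompactSupport (hc.fderiv_apply (𝕜 := ℝ) _)
  have := integral_mul_fderiv_eq_neg_fderiv_mul_of_integrable (𝕜 := ℝ) (μ := volume)
    (f := fun _ : EuclideanSpace ℝ (Fin n) => (1 : ℝ)) (g := g) (v := EuclideanSpace.single i 1)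
    (by simp) (by simp only [one_mul]; exact hi)
    (by simpa using hg.continuous.integrable_of_hasCompactSupport hc)
    (fun _ _ => differentiableAt_const _) (fun x _ => hg.differentiable (by simp) x)
  simpa [pd] using this

end Calculus

/-! ### Pointwise inequalities -/

/-- The algebraic inequality behind the Hardy estimate. At a point where `p = ∇u ≠ 0` and `A = D²u`,
let `T` be the projection onto `pᗮ`, of dimension `n - 1`. The component of `Ap - (tr A)p` along `p`
is `-(tr TAT)|p|`, and `(tr TAT)² ≤ (n - 1)|TAT|²`; the component orthogonal to `p` is compensated
by the mixed part of `|A|²`. -/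
lemma hessian_ineq {n : ℕ} (hn : 2 ≤ n) (A : Fin n → Fin n → ℝ) (hA : ∀ i j, A i j = A j i)
    (p : Fin n → ℝ) :
    ∑ i, (∑ j, A i j * p j - (∑ k, A k k) * p i) ^ 2 ≤
      ((n : ℝ) - 1) * ((∑ i, p i ^ 2) * (∑ i, ∑ j, A i j ^ 2) - ∑ i, (∑ j, A i j * p j) ^ 2) := by
  set P := ∑ i, p i ^ 2 with hP
  set S := ∑ i, ∑ j, A i j ^ 2 with hS
  set τ := ∑ k, A k k with hτ
  set q : Fin n → ℝ := fun i => ∑ j, A i j * p j with hq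
  set Z := ∑ i, q i ^ 2 with hZ
  set m := ∑ i, q i * p i with hm
  have hn' : (2 : ℝ) ≤ n := by exact_mod_cast hn
  have hP0 : 0 ≤ P := Finset.sum_nonneg fun i _ => sq_nonneg _
  have e1 : ∑ i, (q i - τ * p i) ^ 2 = Z - 2 * τ * m + τ ^ 2 * P := by
    simp only [hZ, hm, hP, Finset.mul_sum, ← Finset.sum_add_distrib, ← Finset.sum_sub_distrib]
    exact Finset.sum_congr rfl fun i _ => by ring
  change ∑ i, (q i - τ * p i) ^ 2 ≤ ((n : ℝ) - 1) * (P * S - Z)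
  rw [e1]
  rcases hP0.eq_or_lt with h0 | hPpos
  · have hp : ∀ i, p i = 0 := by
      intro i
      have := (Finset.sum_eq_zero_iff_of_nonneg (fun i _ => sq_nonneg (p i))).1 (hP ▸ h0.symm) i
        (Finset.mem_univ i)
      simpa using this
    have hq0 : ∀ i, q i = 0 := by intro i; simp [hq, hp]
    simp [hZ, hm, ← h0, hq0, hp]
  -- Cauchy–Schwarz between the vectors `q` and `p`
  have hcs : m ^ 2 ≤ Z * P := Finset.sum_mul_sq_le_sq_mul_sq _ _ _
  -- with `T` the projection onto `pᗮ`, the squared Frobenius norm of `P² TAT - t P T` is nonnegative;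
  -- the choice of `t` below makes this matrix trace-free on `pᗮ`
  have key : ∀ t : ℝ, 0 ≤ P ^ 2 * (P ^ 2 * S - 2 * P * Z + m ^ 2)
      - 2 * t * P ^ 2 * (P * τ - m) + t ^ 2 * P ^ 2 * ((n : ℝ) - 1) := by
    intro t
    have hnn : 0 ≤ ∑ i, ∑ j, (P ^ 2 * A i j - P * (p i * q j + q i * p j) + m * (p i * p j)
        - t * (P * (if i = j then 1 else 0) - p i * p j)) ^ 2 :=
      Finset.sum_nonneg fun i _ => Finset.sum_nonneg fun j _ => sq_nonneg _
    have s1 : ∑ i, ∑ j, A i j * (p i * q j) = Z := by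
      rw [Finset.sum_comm, hZ]
      refine Finset.sum_congr rfl fun j _ => ?_
      rw [sq]; conv_rhs => rw [hq]
      simp only [Finset.sum_mul]
      exact Finset.sum_congr rfl fun i _ => by rw [hA i j]; ring
    have s2 : ∑ i, ∑ j, A i j * (q i * p j) = Z := by
      rw [hZ]
      refine Finset.sum_congr rfl fun i _ => ?_
      rw [sq]; conv_rhs => rw [hq]
      simp only [Finset.sum_mul]
      exact Finset.sum_congr rfl fun j _ => by ring
    have s3 : ∑ i, ∑ j, A i j * (p i * p j) = m := by
      rw [hm]
      refine Finset.sum_congr rfl fun i _ => ?_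
      rw [hq]
      simp only [Finset.sum_mul]
      exact Finset.sum_congr rfl fun j _ => by ring
    have s4 : ∑ i, ∑ j, A i j * (if i = j then (1:ℝ) else 0) = τ := by simp [hτ]
    have prod : ∀ a b : Fin n → ℝ, ∑ i, ∑ j, a i * b j = (∑ i, a i) * ∑ j, b j := by
      intro a b; rw [Finset.sum_mul_sum]
    have s5 : ∑ i, ∑ j, (p i ^ 2) * (p j ^ 2) = P ^ 2 := by rw [prod]; ring
    have s6 : ∑ i, ∑ j, (p i ^ 2) * (q j ^ 2) = P * Z := by rw [prod]
    have s7 : ∑ i, ∑ j, (q i ^ 2) * (p j ^ 2) = P * Z := by rw [prod]; ring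
    have s8 : ∑ i, ∑ j, (q i * p i) * (q j * p j) = m ^ 2 := by rw [prod]; ring
    have s9 : ∑ i, ∑ j, (p i ^ 2) * (q j * p j) = P * m := by rw [prod]
    have s10 : ∑ i, ∑ j, (q i * p i) * (p j ^ 2) = P * m := by rw [prod]; ring
    have s11 : ∑ i, ∑ j, (p i * p j) * (if i = j then (1:ℝ) else 0) = P := by
      simp [hP, sq]
    have s12 : ∑ i, ∑ j, (p i * q j + q i * p j) * (if i = j then (1:ℝ) else 0) = 2 * m := by
      simp [hm, two_mul, ← Finset.sum_add_distrib]
      exact Finset.sum_congr rfl fun j _ => by ring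
    have s13 : ∑ i : Fin n, ∑ j : Fin n, (if i = j then (1:ℝ) else 0) = n := by simp
    have expand : ∑ i, ∑ j, (P ^ 2 * A i j - P * (p i * q j + q i * p j) + m * (p i * p j)
        - t * (P * (if i = j then 1 else 0) - p i * p j)) ^ 2
        = P ^ 4 * (∑ i, ∑ j, A i j ^ 2)
          - 2 * P ^ 3 * (∑ i, ∑ j, A i j * (p i * q j))
          - 2 * P ^ 3 * (∑ i, ∑ j, A i j * (q i * p j))
          + 2 * P ^ 2 * (m + t) * (∑ i, ∑ j, A i j * (p i * p j))
          - 2 * P ^ 3 * t * (∑ i, ∑ j, A i j * (if i = j then (1:ℝ) else 0))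
          + P ^ 2 * (∑ i, ∑ j, (p i ^ 2) * (q j ^ 2))
          + P ^ 2 * (∑ i, ∑ j, (q i ^ 2) * (p j ^ 2))
          + 2 * P ^ 2 * (∑ i, ∑ j, (q i * p i) * (q j * p j))
          - 2 * P * (m + t) * (∑ i, ∑ j, (p i ^ 2) * (q j * p j))
          - 2 * P * (m + t) * (∑ i, ∑ j, (q i * p i) * (p j ^ 2))
          + 2 * P ^ 2 * t * (∑ i, ∑ j, (p i * q j + q i * p j) * (if i = j then (1:ℝ) else 0))
          + (m + t) ^ 2 * (∑ i, ∑ j, (p i ^ 2) * (p j ^ 2))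
          - 2 * (m + t) * t * P * (∑ i, ∑ j, (p i * p j) * (if i = j then (1:ℝ) else 0))
          + t ^ 2 * P ^ 2 * (∑ i : Fin n, ∑ j : Fin n, (if i = j then (1:ℝ) else 0)) := by
      simp only [Finset.mul_sum, ← Finset.sum_add_distrib, ← Finset.sum_sub_distrib]
      refine Finset.sum_congr rfl fun i _ => Finset.sum_congr rfl fun j _ => ?_
      split_ifs <;> ring
    rw [expand, s1, s2, s3, s4, s5, s6, s7, s8, s9, s10, s11, s12, s13] at hnn
    linarith [hnn]
  have hn1 : (0:ℝ) < n - 1 := by linarith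
  clear_value P S τ q Z m
  have k := key ((P * τ - m) / ((n : ℝ) - 1))
  have k2 : P ^ 2 * (P ^ 2 * S - 2 * P * Z + m ^ 2)
      - 2 * ((P * τ - m) / ((n : ℝ) - 1)) * P ^ 2 * (P * τ - m)
      + ((P * τ - m) / ((n : ℝ) - 1)) ^ 2 * P ^ 2 * ((n : ℝ) - 1)
      = P ^ 2 / ((n : ℝ) - 1) * (((n : ℝ) - 1) * (P ^ 2 * S - 2 * P * Z + m ^ 2)
        - (P * τ - m) ^ 2) := by
    field_simp; ring
  rw [k2] at k
  have k3 : 0 ≤ ((n : ℝ) - 1) * (P ^ 2 * S - 2 * P * Z + m ^ 2) - (P * τ - m) ^ 2 :=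
    nonneg_of_mul_nonneg_right k (by positivity)
  have k4 : 0 ≤ ((n : ℝ) - 2) * (Z * P - m ^ 2) :=
    mul_nonneg (by linarith) (by linarith)
  refine le_of_mul_le_mul_left ?_ hPpos
  linarith [k3, k4]

lemma neg_add_le_of_sq_le {a b Y : ℝ} (ha : 0 ≤ a) (hb : 0 ≤ b) (h : Y ^ 2 ≤ 4 * (a * b)) :
    -(a + b) ≤ Y :=
  (abs_le_of_sq_le_sq' (by nlinarith [sq_nonneg (a - b)]) (by positivity)).1

lemma sum_sub_sq {n : ℕ} (a b : ℝ) (X p : Fin n → ℝ) :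
    ∑ i, (a * X i - b * p i) ^ 2 =
      a ^ 2 * (∑ i, X i ^ 2) - 2 * a * b * (∑ i, X i * p i) + b ^ 2 * ∑ i, p i ^ 2 := by
  simp only [Finset.mul_sum, ← Finset.sum_add_distrib, ← Finset.sum_sub_distrib]
  exact Finset.sum_congr rfl fun i _ => by ring

lemma sum_mul_sub {n : ℕ} (a b : ℝ) (X p : Fin n → ℝ) :
    ∑ i, X i * (a * X i - b * p i) = a * (∑ i, X i ^ 2) - b * ∑ i, X i * p i := by
  simp only [Finset.mul_sum, ← Finset.sum_sub_distrib]
  exact Finset.sum_congr rfl fun i _ => by ring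

/-- The integrand of the geometric Hardy identity, combined with the curvature term. Here `p = ∇u`,
`A = D²u`, `X = x - y`, `z = ∇ζ`, `w = R ^ (-α/2)`. Writing `N = n - 1 - α`, Young's inequality
with weight `N / 2` splits `ζ²w (Ap - (tr A)p) · X` into half of the main term `N ζ²w|p|²` and a
multiple of the curvature, by `hessian_ineq`; the gradient of the cutoff costs another `κ`. -/
lemma hardy_pointwise {n : ℕ} (hn : 2 ≤ n) (A : Fin n → Fin n → ℝ) (hA : ∀ i j, A i j = A j i)
    (p X z : Fin n → ℝ) {α ε κ ζ w R : ℝ} (hα0 : 0 ≤ α) (hα1 : α < (n : ℝ) - 1) (hε : 0 < ε)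
    (hκ : 0 < κ) (hw : 0 ≤ w) (hR : 0 < R) (hXR : ∑ i, X i ^ 2 ≤ R) :
    (((n : ℝ) - 1 - α) / 2 - κ) * (ζ ^ 2 * w * ∑ i, p i ^ 2) ≤
      (∑ i, (2 * ζ * z i * w - α * ζ ^ 2 * (w / R) * X i) *
          ((∑ j, p j ^ 2) * X i - (∑ j, X j * p j) * p i)
        + ζ ^ 2 * w * (((n : ℝ) - 1) * (∑ i, p i ^ 2)
          + ∑ i, (∑ j, A i j * p j - (∑ k, A k k) * p i) * X i))
      + ((n : ℝ) - 1) / (2 * ((n : ℝ) - 1 - α)) * (ζ ^ 2 * (w * R) *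
          ((∑ i, ∑ j, A i j ^ 2) - (∑ i, (∑ j, A i j * p j) ^ 2) / ((∑ i, p i ^ 2) + ε ^ 2)))
      + 1 / κ * (w * R * (∑ i, z i ^ 2) * ∑ i, p i ^ 2) := by
  have hess := hessian_ineq hn A hA p
  have hn' : (2 : ℝ) ≤ n := by exact_mod_cast hn
  have hP0 : 0 ≤ ∑ i, p i ^ 2 := Finset.sum_nonneg fun i _ => sq_nonneg _
  have hz0 : 0 ≤ ∑ i, z i ^ 2 := Finset.sum_nonneg fun i _ => sq_nonneg _
  have hX0 : 0 ≤ ∑ i, X i ^ 2 := Finset.sum_nonneg fun i _ => sq_nonneg _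
  have hS0 : 0 ≤ ∑ i, ∑ j, A i j ^ 2 :=
    Finset.sum_nonneg fun i _ => Finset.sum_nonneg fun j _ => sq_nonneg _
  have hZ0 : 0 ≤ ∑ i, (∑ j, A i j * p j) ^ 2 := Finset.sum_nonneg fun i _ => sq_nonneg _
  have hL0 : 0 ≤ ∑ i, (∑ j, A i j * p j - (∑ k, A k k) * p i) ^ 2 :=
    Finset.sum_nonneg fun i _ => sq_nonneg _
  have csY : (∑ i, (∑ j, A i j * p j - (∑ k, A k k) * p i) * X i) ^ 2 ≤
      (∑ i, (∑ j, A i j * p j - (∑ k, A k k) * p i) ^ 2) * ∑ i, X i ^ 2 :=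
    Finset.sum_mul_sq_le_sq_mul_sq _ _ _
  have csX : (∑ j, X j * p j) ^ 2 ≤ (∑ i, X i ^ 2) * ∑ i, p i ^ 2 :=
    Finset.sum_mul_sq_le_sq_mul_sq _ _ _
  have csG : (∑ i, z i * ((∑ j, p j ^ 2) * X i - (∑ j, X j * p j) * p i)) ^ 2 ≤
      (∑ i, z i ^ 2) * ∑ i, ((∑ j, p j ^ 2) * X i - (∑ j, X j * p j) * p i) ^ 2 :=
    Finset.sum_mul_sq_le_sq_mul_sq _ _ _
  set P := ∑ i, p i ^ 2 with hP
  set S := ∑ i, ∑ j, A i j ^ 2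
  set Z := ∑ i, (∑ j, A i j * p j) ^ 2
  set L := ∑ i, (∑ j, A i j * p j - (∑ k, A k k) * p i) ^ 2
  set Y := ∑ i, (∑ j, A i j * p j - (∑ k, A k k) * p i) * X i
  set r := ∑ i, X i ^ 2 with hr
  set s := ∑ j, X j * p j with hs
  set z2 := ∑ i, z i ^ 2
  have eT : ∑ i, (P * X i - s * p i) ^ 2 = P * (P * r - s ^ 2) := by
    rw [sum_sub_sq, ← hr, ← hs, ← hP]; ring
  have eX : ∑ i, X i * (P * X i - s * p i) = P * r - s ^ 2 := by
    rw [sum_mul_sub, ← hr, ← hs]; ring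
  have eD : ∑ i, (2 * ζ * z i * w - α * ζ ^ 2 * (w / R) * X i) * (P * X i - s * p i)
      = 2 * ζ * w * (∑ i, z i * (P * X i - s * p i))
        - α * ζ ^ 2 * (w / R) * ∑ i, X i * (P * X i - s * p i) := by
    simp only [Finset.mul_sum, ← Finset.sum_sub_distrib]
    exact Finset.sum_congr rfl fun i _ => by ring
  rw [eD, eX]
  rw [eT] at csG
  set G := ∑ i, z i * (P * X i - s * p i)
  clear_value P S Z L Y r s z2 G
  clear eD eX eT hr hs hP
  set N := (n : ℝ) - 1 - α with hN
  have hNpos : 0 < N := by rw [hN]; linarith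
  set Q := S - Z / (P + ε ^ 2) with hQ
  have hPe : 0 < P + ε ^ 2 := by positivity
  have hn1 : (0 : ℝ) < n - 1 := by linarith
  have hPSZ : 0 ≤ P * S - Z := nonneg_of_mul_nonneg_right (hL0.trans hess) hn1
  have hQ0 : 0 ≤ Q := by
    rw [hQ, sub_nonneg, div_le_iff₀ hPe]
    nlinarith [mul_nonneg hS0 (sq_nonneg ε)]
  have hPQ : P * S - Z ≤ P * Q := by
    have : Z / (P + ε ^ 2) * P ≤ Z := by
      rw [div_mul_eq_mul_div, div_le_iff₀ hPe]
      nlinarith [mul_nonneg hZ0 (sq_nonneg ε)]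
    rw [hQ]; linarith
  -- Young's inequality with weight `N / 2`, then the Hessian inequality
  have b1 : -(N / 2 * P + ((n : ℝ) - 1) / (2 * N) * (R * Q)) ≤ Y := by
    refine neg_add_le_of_sq_le (by positivity) (by positivity) ?_
    have e : 4 * (N / 2 * P * (((n : ℝ) - 1) / (2 * N) * (R * Q))) =
        ((n : ℝ) - 1) * (P * Q) * R := by field_simp; ring
    rw [e]
    calc Y ^ 2 ≤ L * r := csY
      _ ≤ (((n : ℝ) - 1) * (P * Q)) * R := by
        refine mul_le_mul (hess.trans ?_) hXR hX0 (by positivity)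
        exact mul_le_mul_of_nonneg_left hPQ hn1.le
  -- the tangential part of `X` is no longer than `X` itself, and `|X|² ≤ R`
  have b2 : (w / R) * (P * r - s ^ 2) ≤ w * P := by
    rw [div_mul_eq_mul_div, div_le_iff₀ hR, mul_assoc]
    refine mul_le_mul_of_nonneg_left ?_ hw
    nlinarith [mul_le_mul_of_nonneg_left hXR hP0, sq_nonneg s]
  have b3 : -(κ * ζ ^ 2 * P + 1 / κ * (R * z2 * P)) ≤ 2 * ζ * G := by
    refine neg_add_le_of_sq_le (by positivity) (by positivity) ?_
    have e : 4 * (κ * ζ ^ 2 * P * (1 / κ * (R * z2 * P))) = 4 * ζ ^ 2 * (z2 * (P * (P * R))) := by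
      field_simp
    rw [e]
    have : G ^ 2 ≤ z2 * (P * (P * R)) := csG.trans <| by
      refine mul_le_mul_of_nonneg_left (mul_le_mul_of_nonneg_left ?_ hP0) hz0
      nlinarith [mul_le_mul_of_nonneg_left hXR hP0, sq_nonneg s]
    nlinarith [mul_le_mul_of_nonneg_left this (sq_nonneg ζ)]
  have c1 := mul_le_mul_of_nonneg_left b1 (mul_nonneg (sq_nonneg ζ) hw)
  have c2 := mul_le_mul_of_nonneg_left b2 (mul_nonneg hα0 (sq_nonneg ζ))
  have c3 := mul_le_mul_of_nonneg_left b3 hw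
  have hnN : (n : ℝ) - 1 = N + α := by rw [hN]; ring
  generalize ((n : ℝ) - 1) / (2 * N) = b at *
  clear_value Q N
  rw [hnN]
  linarith

/-- Young's inequality for `|∇(ζ v)|²` where `v` is a power of `R`, so `∇v = β (v / R) X`. -/
lemma cutoff_pointwise {n : ℕ} (X z : Fin n → ℝ) {β ζ v R t : ℝ} (hR : 0 < R) (ht : 0 < t)
    (hXR : ∑ i, X i ^ 2 ≤ R) :
    ∑ i, (z i * v + ζ * (β * (v / R) * X i)) ^ 2 ≤
      (1 + t) * β ^ 2 * (ζ ^ 2 * (v ^ 2 / R)) + (1 + 1 / t) * (v ^ 2 * ∑ i, z i ^ 2) := by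
  have h1 : ∀ i, (z i * v + ζ * (β * (v / R) * X i)) ^ 2 ≤
      (1 + t) * (β ^ 2 * ζ ^ 2 * (v ^ 2 / R ^ 2)) * X i ^ 2 + (1 + 1 / t) * v ^ 2 * z i ^ 2 := by
    intro i
    have key : ∀ a b : ℝ, (a + b) ^ 2 ≤ (1 + t) * b ^ 2 + (1 + 1 / t) * a ^ 2 := by
      intro a b
      have : (1 + t) * b ^ 2 + (1 + 1 / t) * a ^ 2 - (a + b) ^ 2 = (t * b - a) ^ 2 / t := by
        field_simp; ring
      have h2 : 0 ≤ (t * b - a) ^ 2 / t := by positivity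
      linarith
    refine (key _ _).trans (le_of_eq ?_)
    field_simp
  refine (Finset.sum_le_sum fun i _ => h1 i).trans ?_
  rw [Finset.sum_add_distrib, ← Finset.mul_sum, ← Finset.mul_sum]
  have h3 : (1 + t) * (β ^ 2 * ζ ^ 2 * (v ^ 2 / R ^ 2)) * ∑ i, X i ^ 2 ≤
      (1 + t) * (β ^ 2 * ζ ^ 2 * (v ^ 2 / R ^ 2)) * R :=
    mul_le_mul_of_nonneg_left hXR (by positivity)
  have h4 : (1 + t) * (β ^ 2 * ζ ^ 2 * (v ^ 2 / R ^ 2)) * R =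
      (1 + t) * β ^ 2 * (ζ ^ 2 * (v ^ 2 / R)) := by field_simp
  linarith

/-! ### The Sternberg–Zumbrun inequality and the geometric Hardy identity -/

/-- The squared length `|∇u|²`, written in coordinates. -/
def gradSq {n : ℕ} (u : EuclideanSpace ℝ (Fin n) → ℝ) (x : EuclideanSpace ℝ (Fin n)) : ℝ :=
  ∑ i, pd i u x ^ 2

/-- The `i`-th coordinate of `D²u ∇u`, which is also `½ ∂ᵢ|∇u|²`. -/
def hessGrad {n : ℕ} (i : Fin n) (u : EuclideanSpace ℝ (Fin n) → ℝ)
    (x : EuclideanSpace ℝ (Fin n)) : ℝ :=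
  ∑ j, pd i (pd j u) x * pd j u x

/-- The squared Frobenius norm `|D²u|²`. -/
def hessSq {n : ℕ} (u : EuclideanSpace ℝ (Fin n) → ℝ) (x : EuclideanSpace ℝ (Fin n)) : ℝ :=
  ∑ i, ∑ j, pd i (pd j u) x ^ 2

/-- The regularization `|D²u|² - |D²u ∇u|² / (|∇u|² + ε²)` of the quantity
`|D²u|² - |∇|∇u||²`; the latter is singular at the critical points of `u`. -/
def curv {n : ℕ} (ε : ℝ) (u : EuclideanSpace ℝ (Fin n) → ℝ) (x : EuclideanSpace ℝ (Fin n)) : ℝ :=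
  hessSq u x - (∑ i, hessGrad i u x ^ 2) / (gradSq u x + ε ^ 2)

section Fields

variable {n : ℕ} {u : EuclideanSpace ℝ (Fin n) → ℝ}

lemma gradSq_nonneg (u : EuclideanSpace ℝ (Fin n) → ℝ) (x : EuclideanSpace ℝ (Fin n)) :
    0 ≤ gradSq u x := Finset.sum_nonneg fun _ _ => sq_nonneg _

lemma contDiff_gradSq (hu : ContDiff ℝ (⊤ : ℕ∞) u) : ContDiff ℝ (⊤ : ℕ∞) (gradSq u) :=
  ContDiff.sum fun i _ => (contDiff_pd i hu).pow 2

lemma contDiff_hessGrad (i : Fin n) (hu : ContDiff ℝ (⊤ : ℕ∞) u) :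
    ContDiff ℝ (⊤ : ℕ∞) (hessGrad i u) :=
  ContDiff.sum fun j _ => (contDiff_pd i (contDiff_pd j hu)).mul (contDiff_pd j hu)

lemma contDiff_hessSq (hu : ContDiff ℝ (⊤ : ℕ∞) u) : ContDiff ℝ (⊤ : ℕ∞) (hessSq u) :=
  ContDiff.sum fun i _ => ContDiff.sum fun j _ => (contDiff_pd i (contDiff_pd j hu)).pow 2

lemma continuous_curv {ε : ℝ} (hε : 0 < ε) (hu : ContDiff ℝ (⊤ : ℕ∞) u) :
    Continuous (curv ε u) := by
  refine (contDiff_hessSq hu).continuous.sub (Continuous.div ?_ ?_ ?_)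
  · exact continuous_finsetSum _ fun i _ => (contDiff_hessGrad i hu).continuous.pow 2
  · exact (contDiff_gradSq hu).continuous.add continuous_const
  · intro x
    have := gradSq_nonneg u x
    positivity

lemma pd_gradSq (i : Fin n) (hu : ContDiff ℝ (⊤ : ℕ∞) u) (x : EuclideanSpace ℝ (Fin n)) :
    pd i (gradSq u) x = 2 * hessGrad i u x := by
  have hd : ∀ j, DifferentiableAt ℝ (pd j u) x := fun j =>
    (contDiff_pd j hu).differentiable (by simp) x
  have : gradSq u = fun y => ∑ j, pd j u y * pd j u y := by
    funext y; exact Finset.sum_congr rfl fun j _ => sq _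
  rw [this, pd_sum _ _ fun j _ => (hd j).fun_mul (hd j), hessGrad, Finset.mul_sum]
  refine Finset.sum_congr rfl fun j _ => ?_
  rw [pd_mul i (hd j) (hd j)]; ring

/-- Bochner's identity `div (D²u ∇u) = |D²u|² + ∇(Δu) · ∇u`. -/
lemma div_hessGrad (hu : ContDiff ℝ (⊤ : ℕ∞) u) (x : EuclideanSpace ℝ (Fin n)) :
    ∑ i, pd i (hessGrad i u) x = hessSq u x + ∑ j, pd j (lap u) x * pd j u x := by
  have hd : ∀ j, DifferentiableAt ℝ (pd j u) x := fun j =>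
    (contDiff_pd j hu).differentiable (by simp) x
  have hd2 : ∀ i j, DifferentiableAt ℝ (pd i (pd j u)) x := fun i j =>
    (contDiff_pd i (contDiff_pd j hu)).differentiable (by simp) x
  have h1 : ∀ i, pd i (hessGrad i u) x =
      ∑ j, (pd i (pd j u) x ^ 2 + pd j (pd i (pd i u)) x * pd j u x) := by
    intro i
    have : hessGrad i u = fun y => ∑ j, pd i (pd j u) y * pd j u y := rfl
    rw [this, pd_sum _ _ fun j _ => (hd2 i j).fun_mul (hd j)]
    refine Finset.sum_congr rfl fun j _ => ?_
    rw [pd_mul i (hd2 i j) (hd j), pd_comm i j hu, pd_comm i j (contDiff_pd i hu),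
      ← pd_comm i j hu]
    ring
  have h2 : ∀ j, pd j (lap u) x = ∑ i, pd j (pd i (pd i u)) x := by
    intro j
    rw [lap_eq, pd_sum _ _ fun i _ => hd2 i i]
  simp only [h1, h2, Finset.sum_add_distrib, hessSq, Finset.sum_mul]
  rw [add_right_inj, Finset.sum_comm]

lemma pd_eq_zero_of_notMem_tsupport {g : EuclideanSpace ℝ (Fin n) → ℝ} (i : Fin n)
    {x : EuclideanSpace ℝ (Fin n)} (hx : x ∉ tsupport g) : pd i g x = 0 := by
  have : fderiv ℝ g x = 0 := by
    by_contra h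
    exact hx (support_fderiv_subset ℝ h)
  simp [pd, this]

lemma integrable_of_eq_zero_off {K : Set (EuclideanSpace ℝ (Fin n))} (hK : IsCompact K)
    {g : EuclideanSpace ℝ (Fin n) → ℝ} (hg : Continuous g) (h0 : ∀ x ∉ K, g x = 0) :
    Integrable g :=
  hg.integrable_of_hasCompactSupport (HasCompactSupport.intro hK h0)

/-- The divergence theorem for a compactly supported vector field. -/
lemma integral_div_eq_zero {V : Fin n → EuclideanSpace ℝ (Fin n) → ℝ}
    (hV : ∀ i, ContDiff ℝ 1 (V i)) (hc : ∀ i, HasCompactSupport (V i)) :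
    ∫ x, ∑ i, pd i (V i) x = 0 := by
  rw [integral_finsetSum]
  · exact Finset.sum_eq_zero fun i _ => integral_pd_eq_zero i (hV i) (hc i)
  · exact fun i _ =>
      (continuous_pd i (hV i)).integrable_of_hasCompactSupport ((hc i).fderiv_apply (𝕜 := ℝ) _)

/-- The Sternberg–Zumbrun inequality, from the test function `η √(|∇u|² + ε²)` in the stability
inequality. The linearized equation `-Δ(∂ⱼu) = f'(u) ∂ⱼu` enters through Bochner's identity. -/
lemma sternberg_zumbrun {Ω : Set (EuclideanSpace ℝ (Fin n))} (hΩo : IsOpen Ω) {f : ℝ → ℝ}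
    (hf : ContDiff ℝ 1 f) (hu : ContDiff ℝ (⊤ : ℕ∞) u) (heq : ∀ x ∈ Ω, -(lap u x) = f (u x))
    (hstab : ∀ ξ : EuclideanSpace ℝ (Fin n) → ℝ, ContDiff ℝ 1 ξ →
      (∀ x ∈ frontier Ω, ξ x = 0) →
        ∫ x in Ω, deriv f (u x) * ξ x ^ 2 ≤ ∫ x in Ω, ‖gradient ξ x‖ ^ 2)
    {η : EuclideanSpace ℝ (Fin n) → ℝ} (hη : ContDiff ℝ (⊤ : ℕ∞) η) (hηc : HasCompactSupport η)
    (hηΩ : tsupport η ⊆ Ω) {ε : ℝ} (hε : 0 < ε) :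
    ∫ x, η x ^ 2 * curv ε u x ≤ (∫ x, gradSq u x * gradSq η x) +
      ε ^ 2 * ((∫ x, gradSq η x) - ∫ x, deriv f (u x) * η x ^ 2) := by
  have hPpos : ∀ x, 0 < gradSq u x + ε ^ 2 := fun x => by
    have := gradSq_nonneg u x; positivity
  have hη0 : ∀ x ∉ tsupport η, η x = 0 := fun x hx => image_eq_zero_of_notMem_tsupport hx
  have hz0 : ∀ x ∉ tsupport η, ∀ i, pd i η x = 0 := fun x hx i => pd_eq_zero_of_notMem_tsupport i hx
  set ξ : EuclideanSpace ℝ (Fin n) → ℝ := fun x => √(gradSq u x + ε ^ 2) * η x with hξ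
  have hroot : ContDiff ℝ (⊤ : ℕ∞) fun x => √(gradSq u x + ε ^ 2) :=
    ((contDiff_gradSq hu).add contDiff_const).sqrt fun x => (hPpos x).ne'
  have hξs : ContDiff ℝ 1 ξ := (hroot.mul hη).of_le (by simp)
  have hξ0 : ∀ x ∉ Ω, ξ x = 0 := fun x hx => by
    simp [hξ, hη0 x fun h => hx (hηΩ h)]
  have hst := hstab ξ hξs fun x hx => hξ0 x fun h => by
    rw [hΩo.frontier_eq] at hx; exact hx.2 h
  have hgrad : ∀ x, ‖gradient ξ x‖ ^ 2 =
      η x ^ 2 * ((∑ i, hessGrad i u x ^ 2) / (gradSq u x + ε ^ 2))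
        + (2 * η x * (∑ i, pd i η x * hessGrad i u x)
        + (gradSq u x + ε ^ 2) * gradSq η x) := by
    intro x
    have hsq : √(gradSq u x + ε ^ 2) ^ 2 = gradSq u x + ε ^ 2 := Real.sq_sqrt (hPpos x).le
    have hs0 : √(gradSq u x + ε ^ 2) ≠ 0 := (Real.sqrt_pos.2 (hPpos x)).ne'
    have hpd : ∀ i, pd i ξ x = hessGrad i u x / √(gradSq u x + ε ^ 2) * η x
        + √(gradSq u x + ε ^ 2) * pd i η x := by
      intro i
      have hdP : DifferentiableAt ℝ (gradSq u) x := (contDiff_gradSq hu).differentiable (by simp) x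
      have h1 : pd i (fun y => √(gradSq u y + ε ^ 2)) x
          = hessGrad i u x / √(gradSq u x + ε ^ 2) := by
        simp only [pd]
        rw [fderiv_sqrt (hdP.add_const _) (hPpos x).ne', fderiv_add_const]
        have := pd_gradSq i hu x
        rw [pd] at this
        rw [smul_apply, this, smul_eq_mul]
        field_simp
      rw [hξ, pd_mul i (hroot.differentiable (by simp) x) (hη.differentiable (by simp) x), h1]
    rw [norm_gradient_sq, ← hsq]
    simp only [hpd, gradSq, Finset.mul_sum, Finset.sum_div, ← Finset.sum_add_distrib]
    refine Finset.sum_congr rfl fun i _ => ?_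
    change (_ / √(gradSq u x + ε ^ 2) * _ + √(gradSq u x + ε ^ 2) * _) ^ 2 =
      _ * (_ / √(gradSq u x + ε ^ 2) ^ 2) + (_ + √(gradSq u x + ε ^ 2) ^ 2 * _)
    field_simp
    ring
  -- the right side of `hdiv` is the expanded divergence of `η² D²u ∇u`, where the linearized equation
  -- is available on the support of `η`
  have hdiv : ∀ x, ∑ i, pd i (fun y => η y ^ 2 * hessGrad i u y) x =
      2 * η x * (∑ i, pd i η x * hessGrad i u x)
        + (η x ^ 2 * hessSq u x - deriv f (u x) * gradSq u x * η x ^ 2) := by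
    intro x
    have hdη : DifferentiableAt ℝ η x := hη.differentiable (by simp) x
    have h1 : ∀ i, pd i (fun y => η y ^ 2 * hessGrad i u y) x =
        2 * η x * (pd i η x * hessGrad i u x) + η x ^ 2 * pd i (hessGrad i u) x := by
      intro i
      rw [pd_mul i (hdη.fun_pow 2) ((contDiff_hessGrad i hu).differentiable (by simp) x)]
      have : pd i (fun y => η y ^ 2) x = 2 * η x * pd i η x := by
        simp only [sq]; rw [pd_mul i hdη hdη]; ring
      rw [this]; ring
    simp only [h1, Finset.sum_add_distrib, ← Finset.mul_sum]
    rw [div_hessGrad hu, add_right_inj]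
    by_cases hx : x ∈ tsupport η
    · have hlap : ∀ j, pd j (lap u) x = -(deriv f (u x) * pd j u x) := by
        intro j
        have hev : lap u =ᶠ[nhds x] fun y => -(f (u y)) := by
          filter_upwards [hΩo.mem_nhds (hηΩ hx)] with y hy
          rw [← heq y hy, neg_neg]
        rw [pd, hev.fderiv_eq, fderiv_fun_neg]
        have := pd_comp j (hf.differentiable (by simp) (u x)) (hu.differentiable (by simp) x)
        rw [pd] at this
        simp [this]
      have : ∑ j, pd j (lap u) x * pd j u x = -(deriv f (u x) * gradSq u x) := by
        simp only [hlap, gradSq, Finset.mul_sum, ← Finset.sum_neg_distrib]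
        exact Finset.sum_congr rfl fun j _ => by ring
      rw [this]; ring
    · rw [hη0 x hx]; ring
  have hd0 := integral_div_eq_zero (V := fun i y => η y ^ 2 * hessGrad i u y)
    (fun i => ((hη.pow 2).mul (contDiff_hessGrad i hu)).of_le (by simp))
    (fun i => HasCompactSupport.intro hηc fun x hx => by simp [hη0 x hx])
  simp only [hdiv] at hd0
  have cη := hη.continuous
  have cP := (contDiff_gradSq hu).continuous
  have cE := (contDiff_gradSq hη).continuous
  have cS := (contDiff_hessSq hu).continuous
  have cq := fun i => (contDiff_hessGrad i hu).continuous
  have cz := fun i => (contDiff_pd i hη).continuous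
  have cf : Continuous fun x => deriv f (u x) := (hf.continuous_deriv le_rfl).comp hu.continuous
  have cF : Continuous fun x => (∑ i, hessGrad i u x ^ 2) / (gradSq u x + ε ^ 2) :=
    Continuous.div (by fun_prop) (by fun_prop) fun x => (hPpos x).ne'
  have hE0 : ∀ x ∉ tsupport η, gradSq η x = 0 := fun x hx => by simp [gradSq, hz0 x hx]
  have i1 : Integrable fun x => deriv f (u x) * gradSq u x * η x ^ 2 :=
    integrable_of_eq_zero_off hηc (by fun_prop) fun x hx => by simp [hη0 x hx]
  have i2 : Integrable fun x => deriv f (u x) * η x ^ 2 :=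
    integrable_of_eq_zero_off hηc (by fun_prop) fun x hx => by simp [hη0 x hx]
  have i3 : Integrable fun x => η x ^ 2 * ((∑ i, hessGrad i u x ^ 2) / (gradSq u x + ε ^ 2)) :=
    integrable_of_eq_zero_off hηc ((cη.pow 2).mul cF) fun x hx => by simp [hη0 x hx]
  have i4 : Integrable fun x => η x ^ 2 * hessSq u x :=
    integrable_of_eq_zero_off hηc (by fun_prop) fun x hx => by simp [hη0 x hx]
  have i5 : Integrable fun x => 2 * η x * (∑ i, pd i η x * hessGrad i u x) :=
    integrable_of_eq_zero_off hηc (by fun_prop) fun x hx => by simp [hη0 x hx]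
  have i6 : Integrable fun x => gradSq u x * gradSq η x :=
    integrable_of_eq_zero_off hηc (by fun_prop) fun x hx => by simp [hE0 x hx]
  have i7 : Integrable fun x => gradSq η x :=
    integrable_of_eq_zero_off hηc (by fun_prop) fun x hx => by simp [hE0 x hx]
  have i8 : Integrable fun x => (gradSq u x + ε ^ 2) * gradSq η x :=
    integrable_of_eq_zero_off hηc (by fun_prop) fun x hx => by simp [hE0 x hx]
  have hlhs : ∫ x in Ω, deriv f (u x) * ξ x ^ 2 =
      (∫ x, deriv f (u x) * gradSq u x * η x ^ 2) + ε ^ 2 * ∫ x, deriv f (u x) * η x ^ 2 := by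
    rw [setIntegral_eq_integral_of_forall_compl_eq_zero fun x hx => by simp [hξ0 x hx],
      ← integral_const_mul, ← integral_add i1 (i2.const_mul _)]
    refine integral_congr_ae (Filter.Eventually.of_forall fun x => ?_)
    simp only [hξ, mul_pow, Real.sq_sqrt (hPpos x).le]
    ring
  have hrhs : ∫ x in Ω, ‖gradient ξ x‖ ^ 2 ≤
      (∫ x, η x ^ 2 * ((∑ i, hessGrad i u x ^ 2) / (gradSq u x + ε ^ 2)))
      + ((∫ x, 2 * η x * (∑ i, pd i η x * hessGrad i u x))
      + ((∫ x, gradSq u x * gradSq η x) + ε ^ 2 * ∫ x, gradSq η x)) := by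
    have e8 : ∫ x, (gradSq u x + ε ^ 2) * gradSq η x =
        (∫ x, gradSq u x * gradSq η x) + ε ^ 2 * ∫ x, gradSq η x := by
      rw [← integral_const_mul, ← integral_add i6 (i7.const_mul _)]
      simp only [add_mul]
    have i58 : Integrable fun x => 2 * η x * (∑ i, pd i η x * hessGrad i u x)
        + (gradSq u x + ε ^ 2) * gradSq η x := i5.add i8
    rw [← e8, ← integral_add i5 i8, ← integral_add i3 i58]
    simp only [hgrad]
    refine setIntegral_le_integral (i3.add i58) (Filter.Eventually.of_forall fun x => ?_)
    have := hgrad x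
    simp only [Pi.zero_apply]
    rw [← this]; positivity
  have i41 : Integrable fun x =>
      η x ^ 2 * hessSq u x - deriv f (u x) * gradSq u x * η x ^ 2 := i4.sub i1
  rw [integral_add i5 i41, integral_sub i4 i1] at hd0
  have hl : ∫ x, η x ^ 2 * curv ε u x = (∫ x, η x ^ 2 * hessSq u x) -
      ∫ x, η x ^ 2 * ((∑ i, hessGrad i u x ^ 2) / (gradSq u x + ε ^ 2)) := by
    rw [← integral_sub i4 i3]
    refine integral_congr_ae (Filter.Eventually.of_forall fun x => ?_)
    simp only [curv]; ring
  rw [hl]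
  linarith

/-- The geometric Hardy identity: the divergence theorem for the vector field
`φ (|∇u|² X - (X · ∇u) ∇u)`, where `X = x - y`. This field is tangent to the level sets of `u`. -/
lemma hardy_identity (hu : ContDiff ℝ (⊤ : ℕ∞) u) {φ : EuclideanSpace ℝ (Fin n) → ℝ}
    (hφ : ContDiff ℝ (⊤ : ℕ∞) φ) (hφc : HasCompactSupport φ) (y : EuclideanSpace ℝ (Fin n)) :
    ∫ x, (∑ i, pd i φ x * (gradSq u x * (x i - y i) -
          (∑ j, (x j - y j) * pd j u x) * pd i u x)
        + φ x * (((n : ℝ) - 1) * gradSq u x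
          + ∑ i, (hessGrad i u x - (∑ k, pd k (pd k u) x) * pd i u x) * (x i - y i))) = 0 := by
  have hX : ∀ j, ContDiff ℝ (⊤ : ℕ∞) fun x : EuclideanSpace ℝ (Fin n) => x j - y j := fun j =>
    (EuclideanSpace.proj (𝕜 := ℝ) j).contDiff.sub contDiff_const
  have hXp : ContDiff ℝ (⊤ : ℕ∞) fun x => ∑ j, (x j - y j) * pd j u x :=
    ContDiff.sum fun j _ => (hX j).mul (contDiff_pd j hu)
  have hT : ∀ i, ContDiff ℝ (⊤ : ℕ∞) fun x => gradSq u x * (x i - y i) -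
      (∑ j, (x j - y j) * pd j u x) * pd i u x := fun i =>
    ((contDiff_gradSq hu).mul (hX i)).sub (hXp.mul (contDiff_pd i hu))
  rw [← integral_div_eq_zero (V := fun i x => φ x * (gradSq u x * (x i - y i) -
      (∑ j, (x j - y j) * pd j u x) * pd i u x))
    (fun i => (hφ.mul (hT i)).of_le (by simp)) (fun i => hφc.mul_right)]
  refine integral_congr_ae (Filter.Eventually.of_forall fun x => ?_)
  have df : ∀ {g : EuclideanSpace ℝ (Fin n) → ℝ}, ContDiff ℝ (⊤ : ℕ∞) g → DifferentiableAt ℝ g x :=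
    fun hg => hg.differentiable (by simp) x
  have h1 : ∀ i, pd i (fun x => ∑ j, (x j - y j) * pd j u x) x =
      pd i u x + ∑ j, (x j - y j) * pd i (pd j u) x := by
    intro i
    rw [pd_sum _ _ fun j _ => (df (hX j)).fun_mul (df (contDiff_pd j hu))]
    have : ∀ j, pd i (fun x => (x j - y j) * pd j u x) x =
        (if i = j then pd j u x else 0) + (x j - y j) * pd i (pd j u) x := by
      intro j
      rw [pd_mul i (df (hX j)) (df (contDiff_pd j hu)), pd_coord_sub]
      split_ifs <;> ring
    simp [this, Finset.sum_add_distrib]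
  have h2 : ∀ i, pd i (fun x => φ x * (gradSq u x * (x i - y i) -
      (∑ j, (x j - y j) * pd j u x) * pd i u x)) x =
      pd i φ x * (gradSq u x * (x i - y i) - (∑ j, (x j - y j) * pd j u x) * pd i u x)
      + φ x * (2 * (hessGrad i u x * (x i - y i)) + gradSq u x - pd i u x ^ 2
        - (∑ j, (x j - y j) * pd i (pd j u) x) * pd i u x
        - (∑ j, (x j - y j) * pd j u x) * pd i (pd i u) x) := by
    intro i
    rw [pd_mul i (df hφ) (df (hT i)),
      pd_sub i ((df (contDiff_gradSq hu)).fun_mul (df (hX i))) ((df hXp).fun_mul (df (contDiff_pd i hu))),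
      pd_mul i (df (contDiff_gradSq hu)) (df (hX i)), pd_mul i (df hXp) (df (contDiff_pd i hu)),
      pd_coord_sub, pd_gradSq i hu, h1]
    simp only [if_true]
    ring
  simp only [h2, Finset.sum_add_distrib, Finset.sum_sub_distrib, ← Finset.mul_sum]
  have h3 : ∑ i, (∑ j, (x j - y j) * pd i (pd j u) x) * pd i u x =
      ∑ i, hessGrad i u x * (x i - y i) := by
    simp only [hessGrad, Finset.sum_mul]
    rw [Finset.sum_comm]
    refine Finset.sum_congr rfl fun i _ => Finset.sum_congr rfl fun j _ => ?_
    rw [pd_comm i j hu]; ring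
  have h4 : ∑ i, (hessGrad i u x - (∑ k, pd k (pd k u) x) * pd i u x) * (x i - y i) =
      ∑ i, hessGrad i u x * (x i - y i)
        - (∑ j, (x j - y j) * pd j u x) * ∑ k, pd k (pd k u) x := by
    rw [Finset.sum_mul, ← Finset.sum_sub_distrib]
    exact Finset.sum_congr rfl fun i _ => by ring
  rw [h3, h4]
  simp only [Finset.sum_const, Finset.card_univ, Fintype.card_fin, nsmul_eq_mul]
  rw [show ∑ i, pd i u x ^ 2 = gradSq u x from rfl]
  ring

end Fields

/-! ### The estimate with a cutoff and a regularized weight -/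

/-- The regularized squared distance `|x - y|² + s²`. -/
def rad {n : ℕ} (y : EuclideanSpace ℝ (Fin n)) (s : ℝ) (x : EuclideanSpace ℝ (Fin n)) : ℝ :=
  ∑ i, (x i - y i) ^ 2 + s ^ 2

section Weights

variable {n : ℕ} {y : EuclideanSpace ℝ (Fin n)} {s : ℝ}

lemma rad_eq (y : EuclideanSpace ℝ (Fin n)) (s : ℝ) (x : EuclideanSpace ℝ (Fin n)) :
    rad y s x = ‖x - y‖ ^ 2 + s ^ 2 := by
  rw [EuclideanSpace.norm_sq_eq]
  simp [rad]

lemma rad_pos (hs : 0 < s) (x : EuclideanSpace ℝ (Fin n)) : 0 < rad y s x := by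
  rw [rad_eq]; positivity

lemma contDiff_rad : ContDiff ℝ (⊤ : ℕ∞) (rad y s) :=
  (ContDiff.sum fun i _ =>
    ((EuclideanSpace.proj (𝕜 := ℝ) i).contDiff.sub contDiff_const).pow 2).add contDiff_const

lemma contDiff_rad_rpow (hs : 0 < s) (a : ℝ) : ContDiff ℝ (⊤ : ℕ∞) fun x => rad y s x ^ a :=
  contDiff_rad.rpow_const_of_ne fun x => (rad_pos hs x).ne'

lemma pd_rad_rpow (hs : 0 < s) (a : ℝ) (i : Fin n) (x : EuclideanSpace ℝ (Fin n)) :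
    pd i (fun x => rad y s x ^ a) x = 2 * a * (rad y s x ^ a / rad y s x) * (x i - y i) := by
  have hX : ∀ j, DifferentiableAt ℝ (fun x : EuclideanSpace ℝ (Fin n) => x j - y j) x := fun j =>
    (EuclideanSpace.proj (𝕜 := ℝ) j).differentiableAt.sub_const _
  have hR : pd i (rad y s) x = 2 * (x i - y i) := by
    have h0 : pd i (rad y s) x = pd i (fun x => ∑ j, (x j - y j) * (x j - y j)) x := by
      have : rad y s = fun x => (∑ j, (x j - y j) * (x j - y j)) + s ^ 2 := by
        funext x; simp only [rad, sq]
      rw [this]; simp only [pd]; rw [fderiv_add_const]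
    rw [h0, pd_sum _ _ fun j _ => (hX j).fun_mul (hX j)]
    have : ∀ j, pd i (fun x => (x j - y j) * (x j - y j)) x =
        if i = j then 2 * (x j - y j) else 0 := by
      intro j
      rw [pd_mul i (hX j) (hX j), pd_coord_sub]
      split_ifs <;> ring
    simp [this]
  have hd := Real.hasDerivAt_rpow_const (p := a) (Or.inl (rad_pos (y := y) hs x).ne')
  rw [pd_comp (φ := fun r => r ^ a) i hd.differentiableAt (contDiff_rad.differentiable (by simp) x),
    hd.deriv, hR, Real.rpow_sub_one (rad_pos hs x).ne']
  ring

/-- The estimate with a cutoff `ζ` and the regularized weight: the bulk integral is controlled by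
the region where `∇ζ ≠ 0`, with a constant independent of the regularization `s`. -/
lemma weighted_cutoff_estimate (n : ℕ) (α : ℝ) (hα0 : 0 ≤ α) (hα1 : α < (n : ℝ) - 1)
    (hα2 : (α - 2) ^ 2 / 4 < ((n : ℝ) - 1 - α) ^ 2 / ((n : ℝ) - 1)) :
    ∃ c : ℝ, 0 < c ∧ ∀ (Ω : Set (EuclideanSpace ℝ (Fin n))) (f : ℝ → ℝ)
      (u ζ : EuclideanSpace ℝ (Fin n) → ℝ) (y : EuclideanSpace ℝ (Fin n)) (s : ℝ),
      IsOpen Ω → ContDiff ℝ 1 f → ContDiff ℝ (⊤ : ℕ∞) u →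
      (∀ x ∈ Ω, -(lap u x) = f (u x)) →
      (∀ ξ : EuclideanSpace ℝ (Fin n) → ℝ, ContDiff ℝ 1 ξ →
        (∀ x ∈ frontier Ω, ξ x = 0) →
          ∫ x in Ω, deriv f (u x) * ξ x ^ 2 ≤ ∫ x in Ω, ‖gradient ξ x‖ ^ 2) →
      ContDiff ℝ (⊤ : ℕ∞) ζ → HasCompactSupport ζ → tsupport ζ ⊆ Ω → 0 < s →
      ∫ x, ζ x ^ 2 * rad y s x ^ (-α / 2) * gradSq u x ≤
        c * ∫ x, rad y s x ^ (-α / 2) * rad y s x * gradSq ζ x * gradSq u x := by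
  have hn1 : (0 : ℝ) < n - 1 := by linarith
  have hn : 2 ≤ n := by
    have : (1 : ℝ) < n := by linarith
    exact_mod_cast this
  obtain ⟨N, hN⟩ : ∃ N : ℝ, N = (n : ℝ) - 1 - α := ⟨_, rfl⟩
  obtain ⟨b, hb⟩ : ∃ b : ℝ, b = ((n : ℝ) - 1) / (2 * N) := ⟨_, rfl⟩
  obtain ⟨K, hK⟩ : ∃ K : ℝ, K = ((n : ℝ) - 1) * ((2 - α) / 2) ^ 2 := ⟨_, rfl⟩
  have hNpos : 0 < N := by linarith
  have hbpos : 0 < b := by rw [hb]; positivity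
  have hK0 : 0 ≤ K := by rw [hK]; positivity
  have hKN : K < N ^ 2 := by
    rw [← hN, lt_div_iff₀ hn1] at hα2
    rw [hK]
    linarith
  -- `κ` and `t` are so small that half of the gap `N² - K` survives the Young inequalities
  obtain ⟨κ, hκ⟩ : ∃ κ : ℝ, κ = (N ^ 2 - K) / (8 * N) := ⟨_, rfl⟩
  obtain ⟨t, ht⟩ : ∃ t : ℝ, t = (N ^ 2 - K) / (2 * (K + 1)) := ⟨_, rfl⟩
  have hgap : 0 < N ^ 2 - K := by linarith
  have hκpos : 0 < κ := by rw [hκ]; positivity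
  have htpos : 0 < t := by rw [ht]; positivity
  have htK : t * K ≤ (N ^ 2 - K) / 2 := by
    rw [ht, div_mul_eq_mul_div, div_le_div_iff₀ (by positivity) two_pos]
    nlinarith
  have hγ : κ ≤ N / 2 - κ - b * ((1 + t) * ((2 - α) / 2) ^ 2) := by
    have e1 : b * ((1 + t) * ((2 - α) / 2) ^ 2) = (K + t * K) / (2 * N) := by
      rw [hb, hK]; field_simp
    have e2 : (K + t * K) / (2 * N) ≤ (N ^ 2 + K) / (4 * N) := by
      rw [div_le_div_iff₀ (by positivity) (by positivity)]
      nlinarith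
    have e3 : N / 2 - κ - (N ^ 2 + K) / (4 * N) = κ := by rw [hκ]; field_simp; ring
    linarith
  refine ⟨(b * (1 + 1 / t) + 1 / κ) / κ, by positivity, ?_⟩
  intro Ω f u ζ y s hΩo hf hu heq hstab hζ hζc hζΩ hs
  have hRpos : ∀ x, 0 < rad y s x := rad_pos hs
  have hXR : ∀ x, ∑ i, (x i - y i) ^ 2 ≤ rad y s x := fun x => by
    have := sq_nonneg s
    simp only [rad]; linarith
  have hv2 : ∀ x, (rad y s x ^ ((2 - α) / 4)) ^ 2 = rad y s x ^ (-α / 2) * rad y s x := by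
    intro x
    rw [← Real.rpow_natCast, ← Real.rpow_mul (hRpos x).le, ← Real.rpow_add_one (hRpos x).ne']
    congr 1; push_cast; ring
  have hwS := contDiff_rad_rpow (y := y) hs (-α / 2)
  have hvS := contDiff_rad_rpow (y := y) hs ((2 - α) / 4)
  have hζd := hζ.differentiable (by simp)
  have hφ : ContDiff ℝ (⊤ : ℕ∞) fun x => ζ x ^ 2 * rad y s x ^ (-α / 2) := (hζ.pow 2).mul hwS
  have hη : ContDiff ℝ (⊤ : ℕ∞) fun x => ζ x * rad y s x ^ ((2 - α) / 4) := hζ.mul hvS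
  have hζ0 : ∀ x ∉ tsupport ζ, ζ x = 0 := fun x hx => image_eq_zero_of_notMem_tsupport hx
  have hE0 : ∀ x ∉ tsupport ζ, gradSq ζ x = 0 := fun x hx => by
    simp [gradSq, fun i => pd_eq_zero_of_notMem_tsupport i hx]
  have hφc : HasCompactSupport fun x => ζ x ^ 2 * rad y s x ^ (-α / 2) :=
    HasCompactSupport.intro hζc fun x hx => by simp [hζ0 x hx]
  have hηc : HasCompactSupport fun x => ζ x * rad y s x ^ ((2 - α) / 4) := hζc.mul_right
  have hηΩ : tsupport (fun x => ζ x * rad y s x ^ ((2 - α) / 4)) ⊆ Ω :=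
    (tsupport_mul_subset_left).trans hζΩ
  have hpdφ : ∀ i x, pd i (fun x => ζ x ^ 2 * rad y s x ^ (-α / 2)) x =
      2 * ζ x * pd i ζ x * rad y s x ^ (-α / 2)
        - α * ζ x ^ 2 * (rad y s x ^ (-α / 2) / rad y s x) * (x i - y i) := by
    intro i x
    have h2 : pd i (fun x => ζ x ^ 2) x = 2 * ζ x * pd i ζ x := by
      simp only [sq]; rw [pd_mul i (hζd x) (hζd x)]; ring
    rw [pd_mul i ((hζd x).fun_pow 2) (hwS.differentiable (by simp) x), pd_rad_rpow hs, h2]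
    ring
  have hpdη : ∀ i x, pd i (fun x => ζ x * rad y s x ^ ((2 - α) / 4)) x =
      pd i ζ x * rad y s x ^ ((2 - α) / 4) + ζ x * ((2 - α) / 2 *
        (rad y s x ^ ((2 - α) / 4) / rad y s x) * (x i - y i)) := by
    intro i x
    rw [pd_mul i (hζd x) (hvS.differentiable (by simp) x), pd_rad_rpow hs]
    ring
  have hgη : ∀ x, gradSq (fun x => ζ x * rad y s x ^ ((2 - α) / 4)) x ≤
      (1 + t) * ((2 - α) / 2) ^ 2 * (ζ x ^ 2 * rad y s x ^ (-α / 2))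
        + (1 + 1 / t) * (rad y s x ^ (-α / 2) * rad y s x * gradSq ζ x) := by
    intro x
    have h := cutoff_pointwise (fun i => x i - y i) (fun i => pd i ζ x) (β := (2 - α) / 2)
      (ζ := ζ x) (v := rad y s x ^ ((2 - α) / 4)) (hRpos x) htpos (hXR x)
    rw [hv2, mul_div_assoc, div_self (hRpos x).ne', mul_one] at h
    simp only [gradSq, hpdη]
    exact h
  have cζ := hζ.continuous
  have cR := (contDiff_rad (y := y) (s := s)).continuous
  have cw := hwS.continuous
  have cP := (contDiff_gradSq hu).continuous
  have cE := (contDiff_gradSq hζ).continuous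
  have cEη := (contDiff_gradSq hη).continuous
  have iI : Integrable fun x => ζ x ^ 2 * rad y s x ^ (-α / 2) * gradSq u x :=
    integrable_of_eq_zero_off hζc (by fun_prop) fun x hx => by simp [hζ0 x hx]
  have iE : Integrable fun x => rad y s x ^ (-α / 2) * rad y s x * gradSq ζ x * gradSq u x :=
    integrable_of_eq_zero_off hζc (by fun_prop) fun x hx => by simp [hE0 x hx]
  have iG : Integrable fun x => gradSq u x * gradSq (fun x => ζ x * rad y s x ^ ((2 - α) / 4)) x :=
    integrable_of_eq_zero_off hηc (by fun_prop) fun x hx => by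
      simp [gradSq, fun i => pd_eq_zero_of_notMem_tsupport i hx]
  obtain ⟨I, hI⟩ : ∃ I, I = ∫ x, ζ x ^ 2 * rad y s x ^ (-α / 2) * gradSq u x := ⟨_, rfl⟩
  obtain ⟨E, hE⟩ : ∃ E, E = ∫ x, rad y s x ^ (-α / 2) * rad y s x * gradSq ζ x * gradSq u x :=
    ⟨_, rfl⟩
  rw [← hI, ← hE]
  have hI0 : 0 ≤ I := by
    rw [hI]
    refine integral_nonneg fun x => ?_
    have := gradSq_nonneg u x
    have := hRpos x
    positivity
  obtain ⟨M, hM⟩ : ∃ M : ℝ, M = (∫ x, gradSq (fun x => ζ x * rad y s x ^ ((2 - α) / 4)) x) -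
      ∫ x, deriv f (u x) * (ζ x * rad y s x ^ ((2 - α) / 4)) ^ 2 := ⟨_, rfl⟩
  have hGle : ∫ x, gradSq u x * gradSq (fun x => ζ x * rad y s x ^ ((2 - α) / 4)) x ≤
      (1 + t) * ((2 - α) / 2) ^ 2 * I + (1 + 1 / t) * E := by
    rw [hI, hE, ← integral_const_mul, ← integral_const_mul,
      ← integral_add (iI.const_mul _) (iE.const_mul _)]
    refine integral_mono iG ((iI.const_mul _).add (iE.const_mul _)) fun x => ?_
    have := mul_le_mul_of_nonneg_left (hgη x) (gradSq_nonneg u x)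
    linarith
  have main : ∀ ε : ℝ, 0 < ε → (N / 2 - κ) * I ≤
      b * ((1 + t) * ((2 - α) / 2) ^ 2 * I + (1 + 1 / t) * E + ε ^ 2 * M) + 1 / κ * E := by
    intro ε hε
    have hsz := sternberg_zumbrun hΩo hf hu heq hstab hη hηc hηΩ hε
    rw [← hM] at hsz
    have hid := hardy_identity hu hφ hφc y
    have cc := continuous_curv hε hu
    have iQ : Integrable fun x => (ζ x * rad y s x ^ ((2 - α) / 4)) ^ 2 * curv ε u x :=
      integrable_of_eq_zero_off hζc ((hη.continuous.pow 2).mul cc) fun x hx => by simp [hζ0 x hx]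
    have cX : ∀ i, Continuous fun x : EuclideanSpace ℝ (Fin n) => x i - y i := fun i =>
      (EuclideanSpace.proj (𝕜 := ℝ) i).continuous.sub continuous_const
    have cp := fun i => (contDiff_pd i hu).continuous
    have cpp := fun i => (contDiff_pd i (contDiff_pd i hu)).continuous
    have cq := fun i => (contDiff_hessGrad i hu).continuous
    have cpφ := fun i => (contDiff_pd i hφ).continuous
    have iD : Integrable fun x => (∑ i, pd i (fun x => ζ x ^ 2 * rad y s x ^ (-α / 2)) x *
          (gradSq u x * (x i - y i) - (∑ j, (x j - y j) * pd j u x) * pd i u x)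
        + ζ x ^ 2 * rad y s x ^ (-α / 2) * (((n : ℝ) - 1) * gradSq u x
          + ∑ i, (hessGrad i u x - (∑ k, pd k (pd k u) x) * pd i u x) * (x i - y i))) := by
      refine integrable_of_eq_zero_off hφc (by fun_prop) fun x hx => ?_
      have h0 : ζ x ^ 2 * rad y s x ^ (-α / 2) = 0 := image_eq_zero_of_notMem_tsupport
        (f := fun x => ζ x ^ 2 * rad y s x ^ (-α / 2)) hx
      simp [fun i => pd_eq_zero_of_notMem_tsupport i hx, h0]
    have iDQ : Integrable fun x => (∑ i, pd i (fun x => ζ x ^ 2 * rad y s x ^ (-α / 2)) x *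
          (gradSq u x * (x i - y i) - (∑ j, (x j - y j) * pd j u x) * pd i u x)
        + ζ x ^ 2 * rad y s x ^ (-α / 2) * (((n : ℝ) - 1) * gradSq u x
          + ∑ i, (hessGrad i u x - (∑ k, pd k (pd k u) x) * pd i u x) * (x i - y i)))
        + b * ((ζ x * rad y s x ^ ((2 - α) / 4)) ^ 2 * curv ε u x) := iD.add (iQ.const_mul b)
    have hpt : ∫ x, (N / 2 - κ) * (ζ x ^ 2 * rad y s x ^ (-α / 2) * gradSq u x) ≤
        ∫ x, ((∑ i, pd i (fun x => ζ x ^ 2 * rad y s x ^ (-α / 2)) x *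
          (gradSq u x * (x i - y i) - (∑ j, (x j - y j) * pd j u x) * pd i u x)
        + ζ x ^ 2 * rad y s x ^ (-α / 2) * (((n : ℝ) - 1) * gradSq u x
          + ∑ i, (hessGrad i u x - (∑ k, pd k (pd k u) x) * pd i u x) * (x i - y i)))
        + b * ((ζ x * rad y s x ^ ((2 - α) / 4)) ^ 2 * curv ε u x)
        + 1 / κ * (rad y s x ^ (-α / 2) * rad y s x * gradSq ζ x * gradSq u x)) := by
      refine integral_mono (iI.const_mul _) (iDQ.add (iE.const_mul _))
        fun x => ?_
      have h := hardy_pointwise hn (fun i j => pd i (pd j u) x)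
        (fun i j => by rw [pd_comm i j hu]) (fun i => pd i u x) (fun i => x i - y i)
        (fun i => pd i ζ x) (ζ := ζ x) hα0 hα1 hε hκpos
        (Real.rpow_nonneg (hRpos x).le (-α / 2)) (hRpos x) (hXR x)
      rw [← hN, ← hb] at h
      simp only [hpdφ, mul_pow, hv2]
      exact h
    rw [integral_add iDQ (iE.const_mul _),
      integral_add iD (iQ.const_mul b), hid, integral_const_mul, integral_const_mul,
      integral_const_mul, ← hI, ← hE, zero_add] at hpt
    refine hpt.trans (add_le_add_left (mul_le_mul_of_nonneg_left ?_ hbpos.le) _)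
    linarith
  -- the error term `ε² b M` is made smaller than any given `e > 0`
  have final : κ * I ≤ (b * (1 + 1 / t) + 1 / κ) * E := by
    have h1 : κ * I ≤ (N / 2 - κ - b * ((1 + t) * ((2 - α) / 2) ^ 2)) * I :=
      mul_le_mul_of_nonneg_right hγ hI0
    refine le_of_forall_pos_le_add fun e he => ?_
    have hden : 0 < b * |M| + 1 := by positivity
    have h2 := main (√(e / (b * |M| + 1))) (Real.sqrt_pos.2 (by positivity))
    rw [Real.sq_sqrt (by positivity)] at h2
    have h3 : b * (e / (b * |M| + 1) * M) ≤ e := by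
      have : e / (b * |M| + 1) * M ≤ e / (b * |M| + 1) * |M| :=
        mul_le_mul_of_nonneg_left (le_abs_self M) (by positivity)
      calc b * (e / (b * |M| + 1) * M) ≤ b * (e / (b * |M| + 1) * |M|) :=
            mul_le_mul_of_nonneg_left this hbpos.le
        _ = e * ((b * |M|) / (b * |M| + 1)) := by ring
        _ ≤ e * 1 := by
            refine mul_le_mul_of_nonneg_left ?_ he.le
            rw [div_le_one hden]; linarith
        _ = e := mul_one e
    linarith
  rw [div_mul_eq_mul_div, le_div_iff₀ hκpos]
  linarith

end Weights

/-! ### Choice of the cutoff and removal of the regularization -/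

section Limit

variable {n : ℕ}

lemma gradSq_eq (g : EuclideanSpace ℝ (Fin n) → ℝ) (x : EuclideanSpace ℝ (Fin n)) :
    ‖gradient g x‖ ^ 2 = gradSq g x := norm_gradient_sq g x

/-- A smooth cutoff supported in `Ω` whose plateau is the set of points at distance at least `d` from
the boundary. -/
lemma exists_cutoff {Ω : Set (EuclideanSpace ℝ (Fin n))} (hΩo : IsOpen Ω)
    (hΩb : Bornology.IsBounded Ω) {d : ℝ} (hd : 0 < d) :
    ∃ ζ : EuclideanSpace ℝ (Fin n) → ℝ, ContDiff ℝ (⊤ : ℕ∞) ζ ∧ HasCompactSupport ζ ∧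
      tsupport ζ ⊆ Ω ∧
      ∀ x ∈ Ω, d ≤ Metric.infDist x (frontier Ω) → ζ x = 1 ∧ gradSq ζ x = 0 := by
  have hK : IsClosed (closure Ω ∩ {x | d ≤ Metric.infDist x (frontier Ω)}) :=
    isClosed_closure.inter (isClosed_le continuous_const (Metric.continuous_infDist_pt _))
  have hdisj : Disjoint Ωᶜ (closure Ω ∩ {x | d ≤ Metric.infDist x (frontier Ω)}) := by
    rw [Set.disjoint_left]
    rintro x hx ⟨hx1, hx2⟩
    have hfr : x ∈ frontier Ω := by
      rw [hΩo.frontier_eq]; exact ⟨hx1, hx⟩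
    have := Metric.infDist_zero_of_mem hfr
    replace hx2 : d ≤ Metric.infDist x (frontier Ω) := hx2
    linarith
  obtain ⟨ζ, h0, h1, -⟩ := exists_contMDiffMap_zero_one_nhds_of_isClosed
    (n := (⊤ : ℕ∞)) (modelWithCornersSelf ℝ (EuclideanSpace ℝ (Fin n))) hΩo.isClosed_compl hK hdisj
  have hsub : tsupport ζ ⊆ Ω := by
    intro x hx
    by_contra hxΩ
    have h := Filter.eventually_iff.1 (h0.filter_mono (nhds_le_nhdsSet (by exact hxΩ : x ∈ Ωᶜ)))
    exact (notMem_tsupport_iff_eventuallyEq.2 h) hx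
  refine ⟨ζ, ζ.contMDiff.contDiff, ?_, hsub, fun x hx hxd => ?_⟩
  · exact Metric.isCompact_of_isClosed_isBounded (isClosed_tsupport _) (hΩb.subset hsub)
  · have h : (ζ : EuclideanSpace ℝ (Fin n) → ℝ) =ᶠ[nhds x] fun _ => (1 : ℝ) :=
      h1.filter_mono (nhds_le_nhdsSet (show x ∈ closure Ω ∩ {x | d ≤ Metric.infDist x (frontier Ω)}
        from ⟨subset_closure hx, hxd⟩))
    refine ⟨h.eq_of_nhds, ?_⟩
    simp [gradSq, pd, h.fderiv_eq]

lemma tendsto_rad_rpow {x y : EuclideanSpace ℝ (Fin n)} (hxy : x ≠ y) (α : ℝ) :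
    Filter.Tendsto (fun k : ℕ => rad y (1 / ((k : ℝ) + 1)) x ^ (-α / 2)) Filter.atTop
      (nhds (‖x - y‖ ^ (-α))) := by
  have hpos : 0 < ‖x - y‖ := norm_pos_iff.2 (sub_ne_zero.2 hxy)
  have h1 : Filter.Tendsto (fun k : ℕ => rad y (1 / ((k : ℝ) + 1)) x) Filter.atTop
      (nhds (‖x - y‖ ^ 2)) := by
    simp only [rad_eq]
    simpa using (tendsto_one_div_add_atTop_nhds_zero_nat (𝕜 := ℝ)).pow 2 |>.const_add (‖x - y‖ ^ 2)
  have h2 := h1.rpow_const (p := -α / 2) (Or.inl (by positivity))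
  rw [← Real.rpow_natCast, ← Real.rpow_mul hpos.le] at h2
  convert h2 using 3
  push_cast; ring

/-- Fatou's lemma for Bochner integrals of nonnegative functions. Integrability of the limit is not a
hypothesis: it follows from the uniform bound. -/
lemma integral_le_of_tendsto {X : Type*} [MeasurableSpace X] {μ : Measure X} {F : ℕ → X → ℝ}
    {G : X → ℝ} {B : ℝ} (hF : ∀ k, Integrable (F k) μ) (hF0 : ∀ k x, 0 ≤ F k x)
    (hlim : ∀ᵐ x ∂μ, Filter.Tendsto (fun k => F k x) Filter.atTop (nhds (G x)))
    (hB : ∀ k, ∫ x, F k x ∂μ ≤ B) : ∫ x, G x ∂μ ≤ B := by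
  have hB0 : 0 ≤ B := (integral_nonneg (hF0 0)).trans (hB 0)
  have hG0 : 0 ≤ᵐ[μ] G := by
    filter_upwards [hlim] with x hx
    exact ge_of_tendsto' hx fun k => hF0 k x
  rw [integral_eq_lintegral_of_nonneg_ae hG0
    (aestronglyMeasurable_of_tendsto_ae _ (fun k => (hF k).aestronglyMeasurable) hlim)]
  refine ENNReal.toReal_le_of_le_ofReal hB0 ?_
  calc ∫⁻ x, ENNReal.ofReal (G x) ∂μ
      = ∫⁻ x, Filter.liminf (fun k => ENNReal.ofReal (F k x)) Filter.atTop ∂μ := by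
        refine lintegral_congr_ae ?_
        filter_upwards [hlim] with x hx
        exact ((ENNReal.continuous_ofReal.tendsto _).comp hx).liminf_eq.symm
    _ ≤ Filter.liminf (fun k => ∫⁻ x, ENNReal.ofReal (F k x) ∂μ) Filter.atTop :=
        lintegral_liminf_le' fun k => (hF k).aestronglyMeasurable.aemeasurable.ennreal_ofReal
    _ ≤ Filter.liminf (fun _ : ℕ => ENNReal.ofReal B) Filter.atTop := by
        refine Filter.liminf_le_liminf (Filter.Eventually.of_forall fun k => ?_)
        rw [← ofReal_integral_eq_lintegral_ofReal (hF k) (Filter.Eventually.of_forall (hF0 k))]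
        exact ENNReal.ofReal_le_ofReal (hB k)
    _ = ENNReal.ofReal B := by simp

/-- The estimate for the regularized weight, with a constant independent of `s ∈ (0, 1]`: the
gradient of the cutoff lives at distance at most `δ/2` from the boundary, where `|x - y| ≥ δ/2`. -/
lemma regularized_estimate (Ω : Set (EuclideanSpace ℝ (Fin n))) (hΩo : IsOpen Ω)
    (hΩb : Bornology.IsBounded Ω) (δ : ℝ) (hδ : 0 < δ)
    (α : ℝ) (hα0 : 0 ≤ α) (hα1 : α < (n : ℝ) - 1)
    (hα2 : (α - 2) ^ 2 / 4 < ((n : ℝ) - 1 - α) ^ 2 / ((n : ℝ) - 1)) :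
    ∃ C : ℝ, 0 < C ∧ ∀ (f : ℝ → ℝ) (u : EuclideanSpace ℝ (Fin n) → ℝ),
      ContDiff ℝ 1 f → ContDiff ℝ (⊤ : ℕ∞) u →
      (∀ x ∈ Ω, -(lap u x) = f (u x)) →
      (∀ ξ : EuclideanSpace ℝ (Fin n) → ℝ, ContDiff ℝ 1 ξ →
        (∀ x ∈ frontier Ω, ξ x = 0) →
        ∫ x in Ω, deriv f (u x) * ξ x ^ 2 ≤ ∫ x in Ω, ‖gradient ξ x‖ ^ 2) →
      ∀ y ∈ {x ∈ Ω | δ ≤ Metric.infDist x (frontier Ω)}, ∀ s : ℝ, 0 < s → s ≤ 1 →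
        ∫ x in Ω, gradSq u x * rad y s x ^ (-α / 2)
          ≤ C * ∫ x in Ω \ {x ∈ Ω | δ ≤ Metric.infDist x (frontier Ω)}, gradSq u x := by
  obtain ⟨c, hc, hmain⟩ := weighted_cutoff_estimate n α hα0 hα1 hα2
  obtain ⟨ζ, hζ, hζc, hζΩ, hζ1⟩ := exists_cutoff hΩo hΩb (half_pos hδ)
  obtain ⟨r, hr⟩ := hΩb.exists_norm_le
  obtain ⟨Z, hZ⟩ : ∃ Z, ∀ x, gradSq ζ x ≤ Z := by
    have hcs : HasCompactSupport (gradSq ζ) := HasCompactSupport.intro hζc fun x hx => by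
      simp [gradSq, fun i => pd_eq_zero_of_notMem_tsupport i hx]
    obtain ⟨Z, hZ⟩ := hcs.exists_bound_of_continuous (contDiff_gradSq hζ).continuous
    exact ⟨Z, fun x => (le_abs_self _).trans (hZ x)⟩
  obtain ⟨A, hA⟩ : ∃ A : ℝ, A = ((δ / 2) ^ 2) ^ (-α / 2) := ⟨_, rfl⟩
  obtain ⟨B, hB⟩ : ∃ B : ℝ, B = A * ((2 * r) ^ 2 + 1) * Z := ⟨_, rfl⟩
  have hApos : 0 < A := by rw [hA]; positivity
  have hZ0 : 0 ≤ Z := (gradSq_nonneg ζ 0).trans (hZ 0)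
  have hB0 : 0 ≤ B := by rw [hB]; positivity
  refine ⟨c * B + A, by positivity, ?_⟩
  rintro f u hf hu heq hstab y ⟨hyΩ, hyδ⟩ s hs hs1
  obtain ⟨S, hS⟩ : ∃ S, S = Ω \ {x ∈ Ω | δ ≤ Metric.infDist x (frontier Ω)} := ⟨_, rfl⟩
  rw [← hS]
  have hSm : MeasurableSet S := by
    rw [hS]
    exact hΩo.measurableSet.diff (hΩo.measurableSet.inter
      (isClosed_le continuous_const (Metric.continuous_infDist_pt _)).measurableSet)
  have hSΩ : S ⊆ Ω := by rw [hS]; exact Set.sdiff_subset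
  have hRpos : ∀ x, 0 < rad y s x := rad_pos hs
  have hPn := gradSq_nonneg u
  have cP := (contDiff_gradSq hu).continuous
  have cE := (contDiff_gradSq hζ).continuous
  have cw := (contDiff_rad_rpow (y := y) hs (-α / 2)).continuous
  have cR := (contDiff_rad (y := y) (s := s)).continuous
  have cζ := hζ.continuous
  have hcomp : IsCompact (closure Ω) := hΩb.isCompact_closure
  have hint : ∀ {g : EuclideanSpace ℝ (Fin n) → ℝ}, Continuous g → IntegrableOn g Ω := fun hg =>
    (hg.continuousOn.integrableOn_compact hcomp).mono_set subset_closure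
  have hnear : ∀ x ∈ Ω, Metric.infDist x (frontier Ω) < δ / 2 →
      x ∈ S ∧ rad y s x ^ (-α / 2) ≤ A := by
    intro x hx hxd
    refine ⟨by rw [hS]; exact ⟨hx, fun h => by have := h.2; linarith⟩, ?_⟩
    have h1 : Metric.infDist y (frontier Ω) ≤ Metric.infDist x (frontier Ω) + dist y x :=
      Metric.infDist_le_infDist_add_dist
    rw [dist_comm, dist_eq_norm] at h1
    have h2 : δ / 2 ≤ ‖x - y‖ := by linarith
    have h3 : (δ / 2) ^ 2 ≤ rad y s x := by
      rw [rad_eq]; nlinarith [sq_nonneg s]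
    rw [hA]
    exact Real.rpow_le_rpow_of_nonpos (by positivity) h3 (by linarith)
  have hbulk : ∫ x, ζ x ^ 2 * rad y s x ^ (-α / 2) * gradSq u x ≤
      c * (B * ∫ x in S, gradSq u x) := by
    refine (hmain Ω f u ζ y s hΩo hf hu heq hstab hζ hζc hζΩ hs).trans
      (mul_le_mul_of_nonneg_left ?_ hc.le)
    rw [← integral_const_mul, ← integral_indicator hSm]
    refine integral_mono ?_
      ((integrable_indicator_iff hSm).2 (((hint cP).mono_set hSΩ).const_mul B))
      fun x => ?_
    · exact integrable_of_eq_zero_off hζc (by fun_prop) fun x hx => by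
        simp [gradSq, fun i => pd_eq_zero_of_notMem_tsupport i hx]
    · by_cases h0 : gradSq ζ x = 0
      · simp only [h0, mul_zero, zero_mul]
        exact Set.indicator_nonneg (fun x _ => mul_nonneg hB0 (hPn x)) x
      have hxΩ : x ∈ Ω := hζΩ <| by
        by_contra hx
        exact h0 (by simp [gradSq, fun i => pd_eq_zero_of_notMem_tsupport i hx])
      have hxd : Metric.infDist x (frontier Ω) < δ / 2 := by
        by_contra! h
        exact h0 (hζ1 x hxΩ h).2
      obtain ⟨hxS, hwA⟩ := hnear x hxΩ hxd
      rw [Set.indicator_of_mem hxS, hB]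
      have hR : rad y s x ≤ (2 * r) ^ 2 + 1 := by
        have h1 : ‖x - y‖ ≤ 2 * r := by
          have := norm_sub_le x y
          have := hr x hxΩ
          have := hr y hyΩ
          linarith
        rw [rad_eq]
        nlinarith [norm_nonneg (x - y)]
      refine mul_le_mul_of_nonneg_right ?_ (hPn x)
      exact mul_le_mul (mul_le_mul hwA hR (hRpos x).le hApos.le) (hZ x) (gradSq_nonneg ζ x)
        (by positivity)
  have hsplit : ∫ x in Ω, gradSq u x * rad y s x ^ (-α / 2) ≤
      ∫ x in Ω, (ζ x ^ 2 * rad y s x ^ (-α / 2) * gradSq u x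
        + S.indicator (fun x => A * gradSq u x) x) := by
    refine setIntegral_mono_on (hint (by fun_prop)) ?_ hΩo.measurableSet fun x hx => ?_
    · exact (hint (by fun_prop)).add (((hint cP).const_mul A).indicator hSm)
    · have hw0 := Real.rpow_nonneg (hRpos x).le (-α / 2)
      rcases le_or_gt (δ / 2) (Metric.infDist x (frontier Ω)) with h | h
      · have : 0 ≤ S.indicator (fun x => A * gradSq u x) x :=
          Set.indicator_nonneg (fun x _ => mul_nonneg hApos.le (hPn x)) x
        rw [(hζ1 x hx h).1]
        linarith
      · obtain ⟨hxS, hwA⟩ := hnear x hx h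
        rw [Set.indicator_of_mem hxS]
        have h1 := mul_le_mul_of_nonneg_right hwA (hPn x)
        have h2 := mul_nonneg (mul_nonneg (sq_nonneg (ζ x)) hw0) (hPn x)
        linarith
  have hwhole : ∫ x in Ω, ζ x ^ 2 * rad y s x ^ (-α / 2) * gradSq u x =
      ∫ x, ζ x ^ 2 * rad y s x ^ (-α / 2) * gradSq u x :=
    setIntegral_eq_integral_of_forall_compl_eq_zero fun x hx => by
      simp [image_eq_zero_of_notMem_tsupport fun h => hx (hζΩ h)]
  have hind : ∫ x in Ω, S.indicator (fun x => A * gradSq u x) x = A * ∫ x in S, gradSq u x := by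
    rw [setIntegral_indicator hSm, Set.inter_eq_self_of_subset_right hSΩ, integral_const_mul]
  rw [integral_add (hint (by fun_prop)) (((hint cP).const_mul A).indicator hSm), hwhole,
    hind] at hsplit
  linarith

end Limit

end StableEstimate

/-- Weighted Dirichlet estimate for stable solutions: if `0 ≤ α < n−1` and
`(α−2)²/4 < (n−1−α)²/(n−1)`, then for every stable solution `u` of `−Δu = f(u)`
and every `y ∈ K_δ`, `∫_Ω |∇u|²|x−y|^{−α} ≤ C ‖∇u‖²_{L²(Ω∖K_δ)}`, with `C`
depending only on `Ω`, `δ`, `α` (not on `f` or `u`). -/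
theorem weighted_dirichlet_estimate (n : ℕ)
    (Ω : Set (EuclideanSpace ℝ (Fin n))) (hΩo : IsOpen Ω)
    (hΩb : Bornology.IsBounded Ω)
    (δ : ℝ) (hδ : 0 < δ)
    (α : ℝ) (hα0 : 0 ≤ α) (hα1 : α < (n : ℝ) - 1)
    (hα2 : (α - 2) ^ 2 / 4 < ((n : ℝ) - 1 - α) ^ 2 / ((n : ℝ) - 1)) :
    ∃ C : ℝ, 0 < C ∧
      ∀ (f : ℝ → ℝ) (u : EuclideanSpace ℝ (Fin n) → ℝ),
        ContDiff ℝ 1 f → ContDiff ℝ (⊤ : ℕ∞) u →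
        (∀ x ∈ Ω, -(lap u x) = f (u x)) →
        (∀ ξ : EuclideanSpace ℝ (Fin n) → ℝ, ContDiff ℝ 1 ξ →
          (∀ x ∈ frontier Ω, ξ x = 0) →
          ∫ x in Ω, deriv f (u x) * ξ x ^ 2 ≤ ∫ x in Ω, ‖gradient ξ x‖ ^ 2) →
        ∀ y ∈ {x ∈ Ω | δ ≤ Metric.infDist x (frontier Ω)},
          ∫ x in Ω, ‖gradient u x‖ ^ 2 * ‖x - y‖ ^ (-α)
            ≤ C * ∫ x in Ω \ {x ∈ Ω | δ ≤ Metric.infDist x (frontier Ω)},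
                ‖gradient u x‖ ^ 2 := by
  obtain ⟨C, hC, h⟩ := StableEstimate.regularized_estimate Ω hΩo hΩb δ hδ α hα0 hα1 hα2
  refine ⟨C, hC, fun f u hf hu heq hstab y hy => ?_⟩
  -- in positive dimension the singleton `{y}` is a null set, so `|x - y| ^ (-α)` is the a.e. limit
  -- of the regularized weights
  have hn : 0 < n := by
    have : (0 : ℝ) < n := by linarith
    exact_mod_cast this
  have : Nonempty (Fin n) := ⟨⟨0, hn⟩⟩
  simp only [StableEstimate.gradSq_eq]
  have hs : ∀ k : ℕ, 0 < 1 / ((k : ℝ) + 1) := fun k => Nat.one_div_pos_of_nat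
  refine StableEstimate.integral_le_of_tendsto
    (F := fun k x => StableEstimate.gradSq u x *
      StableEstimate.rad y (1 / ((k : ℝ) + 1)) x ^ (-α / 2)) ?_ ?_ ?_ ?_
  · intro k
    have hcont : Continuous fun x => StableEstimate.gradSq u x *
        StableEstimate.rad y (1 / ((k : ℝ) + 1)) x ^ (-α / 2) :=
      (StableEstimate.contDiff_gradSq hu).continuous.mul
        (StableEstimate.contDiff_rad_rpow (hs k) _).continuous
    exact (hcont.continuousOn.integrableOn_compact hΩb.isCompact_closure).mono_set subset_closure
  · exact fun k x => mul_nonneg (StableEstimate.gradSq_nonneg u x)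
      (Real.rpow_nonneg (StableEstimate.rad_pos (hs k) x).le _)
  · refine ae_restrict_of_ae ?_
    filter_upwards [compl_mem_ae_iff.2 (measure_singleton y)] with x hx
    exact (StableEstimate.tendsto_rad_rpow hx α).const_mul _
  · intro k
    refine h f u hf hu heq hstab y hy _ (hs k) ?_
    rw [div_le_one (by positivity)]
    have : (0 : ℝ) ≤ k := k.cast_nonneg
    linarith

end
end

section
/- Interior L^∞ bound for stable solutions in dimensions 3 and 4: Let f ∈ C¹, Ω ⊂ ℝⁿ smooth bounded with 3 ≤ n ≤ 4, and u a smooth stable solution of −Δu = f(u) in Ω. Then for every δ > 0, ‖u‖_{L^∞(K_δ)} ≤ C(‖u‖_{L¹(Ω)} + ‖∇u‖_{L²(Ω∖K_δ)}), where K_δ = {x ∈ Ω : dist(x,∂Ω) ≥ δ} and C depends only on Ω and δ (in particular, not on f). -/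
/-!
Write `z = x - y`, and let `ζ` be a cutoff compactly supported in `Ω` and equal to `1` on the set
`dist(·, ∂Ω) ≥ δ/2`.

Testing stability with `ξ = √(|∇u|² + e) η` and using the differentiated equation gives the
Sternberg-Zumbrun inequality
`∫ (|D²u|² - |D²u ∇u|²/(|∇u|² + e)) η² ≤ ∫ (|∇u|² + e) |∇η|² - e ∫ f'(u) η²` (`stability_pd`).
Its left side controls the vector `(Δu) ∇u - D²u ∇u`: by Cauchy-Schwarz for matrices, the squared
length of this vector is at most `n - 1` times the integrand on the left times `|∇u|² + e`
(`matrix_ineq`).  That vector is what appears, paired with `z` and besides `(n - 1)|∇u|²`, in the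
divergence of `|∇u|² z - (∇u·z) ∇u` (`div_field`).  Integrating this divergence against `ζ² |z|^(3/2 - n)` and
taking `η = ζ |z|^(7/4 - n/2)`, the terms without `∇ζ` combine, for `n = 3` and `n = 4`, with the
right sign to leave a positive multiple of `∫ |∇u|² |z|^(3/2 - n) ζ²`; the remaining terms live
where `∇ζ ≠ 0` (`weighted_estimate`).  The exponent `n - 3/2` exceeds `n - 2`, which is what makes
the conclusion possible.

The divergence theorem for `|z|^(-n) z ζ² u` represents `u y` by the integral of
`|z|^(-n) z · ∇(ζ² u)` (`mollified_bound`, `kernel_limit`).  The part with `∇ζ` is controlled by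
the `L¹` norm of `u`.  The part with `∇u` is at most `∫ |z|^(1 - n) |∇u| ζ²`, hence by
Cauchy-Schwarz at most the square root of the weighted Dirichlet integral times that of
`∫ |z|^(1/2 - n) ζ²`, which is finite (`weight_mass`).  If `y` is at distance at least `δ` from the
boundary, then `|z| ≥ δ/2` wherever `∇ζ ≠ 0`, and such points lie in the complement of `K_δ`, so all
weights there are bounded in terms of `Ω` and `δ`.

All singular weights are regularised as powers of `|z|² + σ²`, and every estimate is uniform in
`σ`; the parameters `e` and `σ` are sent to `0` at the end of the respective arguments.
-/

open MeasureTheory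

noncomputable section

open scoped ContDiff

/-! ### Partial derivatives and the divergence theorem -/

/-- The partial derivative `∂ᵢg`. -/
def pd {n : ℕ} (i : Fin n) (g : EuclideanSpace ℝ (Fin n) → ℝ)
    (x : EuclideanSpace ℝ (Fin n)) : ℝ :=
  fderiv ℝ g x (EuclideanSpace.single i 1)

section calculus

variable {n : ℕ}

lemma pd_contDiff {i : Fin n} {g : EuclideanSpace ℝ (Fin n) → ℝ} (hg : ContDiff ℝ ∞ g) :
    ContDiff ℝ ∞ (pd i g) := by
  unfold pd
  exact (hg.fderiv_right (m := ∞) (by simp)).clm_apply contDiff_const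

lemma pd_continuous {i : Fin n} {g : EuclideanSpace ℝ (Fin n) → ℝ} (hg : ContDiff ℝ 1 g) :
    Continuous (pd i g) := by
  unfold pd
  exact (hg.continuous_fderiv (by simp)).clm_apply continuous_const

lemma pd_mul {i : Fin n} {g h : EuclideanSpace ℝ (Fin n) → ℝ} (hg : ContDiff ℝ 1 g)
    (hh : ContDiff ℝ 1 h) (x) :
    pd i (fun x => g x * h x) x = pd i g x * h x + g x * pd i h x := by
  unfold pd
  rw [fderiv_fun_mul (hg.differentiable (by simp) x) (hh.differentiable (by simp) x)]
  simp; ring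

lemma pd_sub {i : Fin n} {g h : EuclideanSpace ℝ (Fin n) → ℝ} (hg : ContDiff ℝ 1 g)
    (hh : ContDiff ℝ 1 h) (x) :
    pd i (fun x => g x - h x) x = pd i g x - pd i h x := by
  unfold pd
  rw [fderiv_fun_sub (hg.differentiable (by simp) x) (hh.differentiable (by simp) x)]
  simp

lemma pd_sum {i : Fin n} {g : Fin n → EuclideanSpace ℝ (Fin n) → ℝ}
    (hg : ∀ j, ContDiff ℝ 1 (g j)) (x) :
    pd i (fun x => ∑ j, g j x) x = ∑ j, pd i (g j) x := by
  unfold pd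
  rw [fderiv_fun_sum fun j _ => (hg j).differentiable (by simp) x]
  simp

lemma pd_sq {i : Fin n} {g : EuclideanSpace ℝ (Fin n) → ℝ} (hg : ContDiff ℝ 1 g) (x) :
    pd i (fun x => g x ^ 2) x = 2 * g x * pd i g x := by
  unfold pd
  rw [((hg.differentiable (by simp) x).hasFDerivAt.pow 2).fderiv]
  simp

/-- Chain rule for an outer function of one variable. -/
lemma pd_comp {i : Fin n} {g : EuclideanSpace ℝ (Fin n) → ℝ} (hg : ContDiff ℝ 1 g)
    {φ : ℝ → ℝ} {φ' : ℝ} (x) (hφ : HasDerivAt φ φ' (g x)) :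
    pd i (fun x => φ (g x)) x = φ' * pd i g x := by
  unfold pd
  have := hφ.comp_hasFDerivAt x (hg.differentiable (by simp) x).hasFDerivAt
  have h2 := this.fderiv
  simp only [Function.comp_def] at h2
  rw [h2]; simp

lemma pd_coord {i j : Fin n} (y x : EuclideanSpace ℝ (Fin n)) :
    pd i (fun x => x j - y j) x = if i = j then 1 else 0 := by
  unfold pd
  have h : HasFDerivAt (fun x : EuclideanSpace ℝ (Fin n) => x j - y j)
      (EuclideanSpace.proj j : EuclideanSpace ℝ (Fin n) →L[ℝ] ℝ) x :=
    (EuclideanSpace.proj j : EuclideanSpace ℝ (Fin n) →L[ℝ] ℝ).hasFDerivAt.sub_const _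
  rw [h.fderiv]
  simp [eq_comm]

lemma pd_comm {i j : Fin n} {g : EuclideanSpace ℝ (Fin n) → ℝ} (hg : ContDiff ℝ ∞ g) (x) :
    pd i (pd j g) x = pd j (pd i g) x := by
  have h := (hg.contDiffAt (x := x)).isSymmSndFDerivAt (n := ∞)
    (by simp only [minSmoothness_of_isRCLikeNormedField]; exact WithTop.coe_le_coe.2 le_top)
  have key : ∀ a b : Fin n, pd a (pd b g) x = fderiv ℝ (fderiv ℝ g) x
      (EuclideanSpace.single a 1) (EuclideanSpace.single b 1) := by
    intro a b
    unfold pd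
    have hd : DifferentiableAt ℝ (fderiv ℝ g) x :=
      (hg.fderiv_right (m := 1) (by norm_cast)).differentiable (by simp) x
    rw [fderiv_clm_apply hd (by fun_prop)]
    simp
  rw [key, key]
  exact h _ _

lemma pd_zero_off {i : Fin n} {g : EuclideanSpace ℝ (Fin n) → ℝ}
    {L : Set (EuclideanSpace ℝ (Fin n))} (hL : IsCompact L) (hg : ∀ x ∉ L, g x = 0) :
    ∀ x ∉ L, pd i g x = 0 := by
  intro x hx
  have : g =ᶠ[nhds x] fun _ => 0 := by
    filter_upwards [hL.isClosed.isOpen_compl.mem_nhds hx] with z hz using hg z hz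
  unfold pd
  rw [this.fderiv_eq]; simp

lemma integrable_off {g : EuclideanSpace ℝ (Fin n) → ℝ}
    {L : Set (EuclideanSpace ℝ (Fin n))} (hL : IsCompact L) (hc : Continuous g)
    (hg : ∀ x ∉ L, g x = 0) : Integrable g :=
  hc.integrable_of_hasCompactSupport (HasCompactSupport.intro hL hg)

lemma integral_pd {i : Fin n} {g : EuclideanSpace ℝ (Fin n) → ℝ}
    {L : Set (EuclideanSpace ℝ (Fin n))} (hL : IsCompact L) (hc : ContDiff ℝ 1 g)
    (hg : ∀ x ∉ L, g x = 0) : ∫ x, pd i g x = 0 := by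
  have h := integral_mul_fderiv_eq_neg_fderiv_mul_of_integrable (μ := volume)
    (f := fun _ : EuclideanSpace ℝ (Fin n) => (1 : ℝ)) (g := g)
    (v := EuclideanSpace.single i 1) (by simp)
    (by simpa [pd] using! integrable_off hL (pd_continuous (i := i) hc) (pd_zero_off hL hg))
    (by simpa using integrable_off hL hc.continuous hg)
    (fun x _ => by fun_prop) (fun x _ => hc.differentiable (by simp) x)
  simpa [pd] using h

/-- The divergence theorem for compactly supported fields. -/
lemma integral_div {Y : Fin n → EuclideanSpace ℝ (Fin n) → ℝ}
    {L : Set (EuclideanSpace ℝ (Fin n))} (hL : IsCompact L) (hc : ∀ i, ContDiff ℝ 1 (Y i))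
    (hg : ∀ i, ∀ x ∉ L, Y i x = 0) : ∫ x, ∑ i, pd i (Y i) x = 0 := by
  rw [integral_finsetSum _ fun i _ =>
    integrable_off hL (pd_continuous (hc i)) (pd_zero_off hL (hg i))]
  exact Finset.sum_eq_zero fun i _ => integral_pd hL (hc i) (hg i)

lemma norm_gradient_sq (g : EuclideanSpace ℝ (Fin n) → ℝ) (x) :
    ‖gradient g x‖ ^ 2 = ∑ i, pd i g x ^ 2 := by
  rw [EuclideanSpace.norm_sq_eq]
  refine Finset.sum_congr rfl fun i _ => ?_
  have : gradient g x i = pd i g x := by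
    have h := InnerProductSpace.toDual_symm_apply (𝕜 := ℝ)
      (x := EuclideanSpace.single i (1 : ℝ)) (y := fderiv ℝ g x)
    unfold pd
    rw [← h, EuclideanSpace.inner_single_right]
    simp [gradient]
  rw [this, Real.norm_eq_abs, sq_abs]

end calculus

/-! ### The matrix inequality -/

section algebra

variable {n : ℕ}

lemma two_mul_le_of_sq_le {t A B : ℝ} (h : t ^ 2 ≤ A * B) (hA : 0 ≤ A) (hB : 0 ≤ B) :
    2 * t ≤ A + B := by
  have : (2 * t) ^ 2 ≤ (A + B) ^ 2 := by nlinarith [sq_nonneg (A - B)]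
  exact (abs_le_of_sq_le_sq' this (by positivity)).2

lemma sum_cs (p q : Fin n → ℝ) : (∑ i, p i * q i) ^ 2 ≤ (∑ i, p i ^ 2) * ∑ i, q i ^ 2 :=
  Finset.sum_mul_sq_le_sq_mul_sq _ _ _

/-- The algebraic core.  For `c² = |p|² + e`, the quantity `|M|² - |Mp|²/c²` controls the
vector `(tr M) p - M p`.  With `ν = p/|p|`, one has
`⟨(tr M)p - Mp, X⟩ = ⟨M - (Mν)νᵀ, (p·X) I - p Xᵀ⟩`,
and the matrix on the right has squared norm `(n-2)(p·X)² + |p|²|X|²`. -/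
lemma matrix_ineq (hn : 2 ≤ n) (M : Fin n → Fin n → ℝ) (p X : Fin n → ℝ) {e : ℝ} (he : 0 < e) :
    ((∑ i, p i * X i) * (∑ i, M i i) - ∑ i, ∑ j, M i j * p i * X j) ^ 2 ≤
      ((n : ℝ) - 1) * (∑ i, X i ^ 2) * ((∑ i, p i ^ 2 + e) *
        ((∑ i, ∑ j, M i j ^ 2) - (∑ i, (∑ j, M i j * p j) ^ 2) / (∑ i, p i ^ 2 + e))) := by
  have hn' : (2 : ℝ) ≤ n := by exact_mod_cast hn
  set P := ∑ i, p i ^ 2 with hP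
  set s := ∑ i, p i * X i with hs
  set N := ∑ i, ∑ j, M i j ^ 2 with hN
  set w : Fin n → ℝ := fun i => ∑ j, M i j * p j with hw
  set ww := ∑ i, (∑ j, M i j * p j) ^ 2 with hww
  set XX := ∑ i, X i ^ 2 with hXX
  have hP0 : 0 ≤ P := Finset.sum_nonneg fun i _ => sq_nonneg _
  have hN0 : 0 ≤ N := Finset.sum_nonneg fun i _ => Finset.sum_nonneg fun i _ => sq_nonneg _
  have hX0 : 0 ≤ XX := Finset.sum_nonneg fun i _ => sq_nonneg _
  have hcs : s ^ 2 ≤ P * XX := sum_cs p X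
  have e1 : (P + e) * (N - ww / (P + e)) = (P * N - ww) + e * N := by
    field_simp; ring
  rw [e1]
  have hww0 : ww ≤ P * N := by
    have : ww ≤ ∑ i, (∑ j, M i j ^ 2) * P :=
      Finset.sum_le_sum fun i _ => sum_cs _ _
    rw [← Finset.sum_mul] at this
    linarith
  suffices hmain : (s * (∑ i, M i i) - ∑ i, ∑ j, M i j * p i * X j) ^ 2 ≤
      ((n : ℝ) - 1) * XX * (P * N - ww) by
    have : 0 ≤ ((n : ℝ) - 1) * XX * (e * N) := by
      have : 0 ≤ (n : ℝ) - 1 := by linarith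
      positivity
    linarith
  rcases hP0.eq_or_lt with h0 | hpos
  · have hp : ∀ i, p i = 0 := by
      intro i
      have := (Finset.sum_eq_zero_iff_of_nonneg (fun i _ => sq_nonneg (p i))).1 h0.symm i
        (Finset.mem_univ i)
      exact pow_eq_zero_iff (two_ne_zero) |>.1 this
    have hs0 : s = 0 := by simp [hs, hp]
    have hw0 : ww = 0 := by simp [hww, hp]
    rw [hs0, hw0, ← h0]
    simp [hp]
  -- `q` is the matrix `(p·X) I - p Xᵀ`, which annihilates `p`
  set q : Fin n → Fin n → ℝ := fun i j => (if i = j then s else 0) - p i * X j with hq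
  have hqp : ∀ i, ∑ j, q i j * p j = 0 := by
    intro i
    simp only [hq, sub_mul, Finset.sum_sub_distrib, ite_mul, zero_mul, Finset.sum_ite_eq,
      Finset.mem_univ, if_true]
    have : ∑ j, p i * X j * p j = p i * s := by
      rw [hs, Finset.mul_sum]; exact Finset.sum_congr rfl fun j _ => by ring
    rw [this]; ring
  have hMq : s * (∑ i, M i i) - ∑ i, ∑ j, M i j * p i * X j = ∑ i, ∑ j, M i j * q i j := by
    simp only [hq, mul_sub, Finset.sum_sub_distrib, mul_ite, mul_zero, Finset.sum_ite_eq,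
      Finset.mem_univ, if_true]
    rw [Finset.mul_sum]
    congr 1
    · exact Finset.sum_congr rfl fun j _ => by ring
    · exact Finset.sum_congr rfl fun j _ => Finset.sum_congr rfl fun j _ => by ring
  have hNq : ∑ i, ∑ j, M i j * q i j = ∑ i, ∑ j, (M i j - w i * p j / P) * q i j := by
    refine Finset.sum_congr rfl fun i _ => ?_
    have : ∑ j, (M i j - w i * p j / P) * q i j =
        ∑ j, M i j * q i j - w i / P * ∑ j, q i j * p j := by
      rw [Finset.mul_sum, ← Finset.sum_sub_distrib]
      exact Finset.sum_congr rfl fun j _ => by ring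
    rw [this, hqp]; ring
  have hN2 : ∑ i, ∑ j, (M i j - w i * p j / P) ^ 2 = N - ww / P := by
    have : ∀ i, ∑ j, (M i j - w i * p j / P) ^ 2 = ∑ j, M i j ^ 2 - w i ^ 2 / P := by
      intro i
      have h1 : ∑ j, (M i j - w i * p j / P) ^ 2 = ∑ j, M i j ^ 2
          - 2 * w i / P * (∑ j, M i j * p j) + (w i / P) ^ 2 * P := by
        have h2 : ∀ j, (M i j - w i * p j / P) ^ 2 = M i j ^ 2
            - 2 * w i / P * (M i j * p j) + (w i / P) ^ 2 * p j ^ 2 := fun j => by ring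
        rw [Finset.sum_congr rfl fun j _ => h2 j, Finset.sum_add_distrib,
          Finset.sum_sub_distrib, ← Finset.mul_sum, ← Finset.mul_sum]
      rw [h1]
      change _ - 2 * w i / P * w i + _ = _
      field_simp; ring
    rw [Finset.sum_congr rfl fun i _ => this i, Finset.sum_sub_distrib, ← Finset.sum_div]
  have hq2 : ∑ i, ∑ j, q i j ^ 2 = (n - 2) * s ^ 2 + P * XX := by
    have : ∀ i, ∑ j, q i j ^ 2 = s ^ 2 - 2 * s * (p i * X i) + p i ^ 2 * XX := by
      intro i
      have : ∀ j, q i j ^ 2 = (if i = j then s ^ 2 - 2 * s * (p i * X j) else 0)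
          + p i ^ 2 * X j ^ 2 := by
        intro j
        simp only [hq]
        split_ifs <;> ring
      rw [Finset.sum_congr rfl fun j _ => this j, Finset.sum_add_distrib, ← Finset.mul_sum]
      simp [hXX]
    rw [Finset.sum_congr rfl fun i _ => this i, Finset.sum_add_distrib, Finset.sum_sub_distrib,
      ← Finset.mul_sum, ← Finset.sum_mul]
    simp [← hs, ← hP]; ring
  have hCS : (∑ i, ∑ j, (M i j - w i * p j / P) * q i j) ^ 2 ≤
      (∑ i, ∑ j, (M i j - w i * p j / P) ^ 2) * ∑ i, ∑ j, q i j ^ 2 := by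
    simp only [← Fintype.sum_prod_type']
    exact Finset.sum_mul_sq_le_sq_mul_sq _ _ _
  rw [hMq, hNq]
  refine hCS.trans ?_
  rw [hN2, hq2]
  have h3 : 0 ≤ N - ww / P := by
    rw [sub_nonneg, div_le_iff₀ hpos]; linarith
  have h4 : ((n : ℝ) - 2) * s ^ 2 + P * XX ≤ (n - 1) * (P * XX) := by nlinarith
  calc _ ≤ (N - ww / P) * ((n - 1) * (P * XX)) := by gcongr
    _ = _ := by field_simp

end algebra

/-! ### The stability inequality -/

section pde

lemma integral_sub_sub {α : Type*} [MeasurableSpace α] {μ : Measure α} {a b c : α → ℝ}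
    (ha : Integrable a μ) (hb : Integrable b μ) (hc : Integrable c μ) :
    ∫ x, (a x - b x - c x) ∂μ = (∫ x, a x ∂μ) - (∫ x, b x ∂μ) - ∫ x, c x ∂μ := by
  rw [← integral_sub ha hb]
  exact integral_sub (ha.sub hb) hc

variable {n : ℕ}

/-- Differentiating `-Δu = f(u)`. -/
lemma pd_lap {Ω : Set (EuclideanSpace ℝ (Fin n))} (hΩ : IsOpen Ω)
    {f : ℝ → ℝ} {u : EuclideanSpace ℝ (Fin n) → ℝ} (hf : ContDiff ℝ 1 f) (hu : ContDiff ℝ ∞ u)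
    (heq : ∀ x ∈ Ω, -(lap u x) = f (u x)) {x} (hx : x ∈ Ω) (j : Fin n) :
    ∑ i, pd i (pd i (pd j u)) x = -(deriv f (u x) * pd j u x) := by
  have h1 : ∑ i, pd i (pd i (pd j u)) x = pd j (lap u) x := by
    have : lap u = fun x => ∑ i, pd i (pd i u) x := rfl
    rw [this, pd_sum fun i => (pd_contDiff (pd_contDiff hu)).of_le (by simp)]
    refine Finset.sum_congr rfl fun i _ => ?_
    have : pd i (pd j u) = pd j (pd i u) := funext fun x => pd_comm hu x
    rw [this, pd_comm (pd_contDiff hu)]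
  have h2 : lap u =ᶠ[nhds x] fun z => (fun t => - f t) (u z) := by
    filter_upwards [hΩ.mem_nhds hx] with z hz
    rw [← heq z hz, neg_neg]
  have h3 : pd j (lap u) x = pd j (fun z => (fun t => - f t) (u z)) x := by
    unfold pd; rw [h2.fderiv_eq]
  have hd : HasDerivAt (fun t => - f t) (- deriv f (u x)) (u x) :=
    ((hf.differentiable (by simp)) (u x)).hasDerivAt.neg
  rw [h1, h3, pd_comp (hu.of_le (by simp)) x hd]
  ring

/-- Stability tested with `ξ = √(|∇u|² + e) η`; the constant `e > 0` makes `ξ` smooth at the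
critical points of `u`. -/
lemma stability_pd {Ω L : Set (EuclideanSpace ℝ (Fin n))} (hΩ : IsOpen Ω) (hL : IsCompact L)
    (hLΩ : L ⊆ Ω) {f : ℝ → ℝ} {u : EuclideanSpace ℝ (Fin n) → ℝ}
    (hf : ContDiff ℝ 1 f) (hu : ContDiff ℝ ∞ u)
    (heq : ∀ x ∈ Ω, -(lap u x) = f (u x))
    (hst : ∀ ξ : EuclideanSpace ℝ (Fin n) → ℝ, ContDiff ℝ 1 ξ →
          (∀ x ∈ frontier Ω, ξ x = 0) →
          ∫ x in Ω, deriv f (u x) * ξ x ^ 2 ≤ ∫ x in Ω, ‖gradient ξ x‖ ^ 2)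
    {η : EuclideanSpace ℝ (Fin n) → ℝ} (hη : ContDiff ℝ ∞ η) (hη0 : ∀ x ∉ L, η x = 0)
    {e : ℝ} (he : 0 < e) :
    ∫ x, ((∑ i, ∑ j, pd j (pd i u) x ^ 2) -
        (∑ i, (∑ j, pd j (pd i u) x * pd j u x) ^ 2) / (∑ i, pd i u x ^ 2 + e)) * η x ^ 2 ≤
      (∫ x, (∑ i, pd i u x ^ 2 + e) * ∑ i, pd i η x ^ 2)
        - e * ∫ x, deriv f (u x) * η x ^ 2 := by
  have hu1 : ∀ i, ContDiff ℝ ∞ (pd i u) := fun i => pd_contDiff hu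
  have hu2 : ∀ i j, ContDiff ℝ ∞ (pd j (pd i u)) := fun i j => pd_contDiff (hu1 i)
  have hη1 : ∀ i, ContDiff ℝ ∞ (pd i η) := fun i => pd_contDiff hη
  have hη10 : ∀ i, ∀ x ∉ L, pd i η x = 0 := fun i => pd_zero_off hL hη0
  set S : EuclideanSpace ℝ (Fin n) → ℝ := fun x => ∑ i, pd i u x ^ 2 + e with hS
  have hSpos : ∀ x, 0 < S x := fun x => by
    have : 0 ≤ ∑ i, pd i u x ^ 2 := Finset.sum_nonneg fun i _ => sq_nonneg _
    simp only [hS]; linarith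
  have hSc : ContDiff ℝ ∞ S := (ContDiff.sum fun i _ => (hu1 i).pow 2).add contDiff_const
  set c : EuclideanSpace ℝ (Fin n) → ℝ := fun x => √(S x) with hc
  have hcc : ContDiff ℝ ∞ c := hSc.sqrt fun x => (hSpos x).ne'
  have hcpos : ∀ x, 0 < c x := fun x => Real.sqrt_pos.2 (hSpos x)
  have hc2 : ∀ x, c x ^ 2 = S x := fun x => Real.sq_sqrt (hSpos x).le
  set w : Fin n → EuclideanSpace ℝ (Fin n) → ℝ :=
    fun i x => ∑ j, pd j (pd i u) x * pd j u x with hw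
  have hwc : ∀ i, ContDiff ℝ ∞ (w i) := fun i =>
    ContDiff.sum fun j _ => (hu2 i j).mul (hu1 j)
  have hpc : ∀ i x, pd i c x = w i x / c x := by
    intro i x
    have h1 : HasDerivAt Real.sqrt (1 / (2 * √(S x))) (S x) := Real.hasDerivAt_sqrt (hSpos x).ne'
    have h2 := pd_comp (i := i) (hSc.of_le (by simp)) x h1
    have h3 : pd i S x = 2 * w i x := by
      have : S = fun x => ∑ j, (pd j u x ^ 2 + e / n) := by
        funext x
        have hn : (n : ℝ) ≠ 0 := by
          have := i.pos
          positivity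
        simp only [hS, Finset.sum_add_distrib, Finset.sum_const, Finset.card_univ,
          Fintype.card_fin, nsmul_eq_mul]
        field_simp
      rw [this, pd_sum fun j => ((((hu1 j).pow 2).add contDiff_const).of_le (by simp))]
      rw [hw, Finset.mul_sum]
      refine Finset.sum_congr rfl fun j _ => ?_
      have h4 : pd i (fun x => pd j u x ^ 2 + e / n) x = pd i (fun x => pd j u x ^ 2) x := by
        unfold pd; rw [fderiv_add_const]
      rw [h4, pd_sq ((hu1 j).of_le (by simp)), pd_comm hu]
      ring
    change pd i c x = _ at h2
    rw [h2, h3]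
    change 1 / (2 * c x) * (2 * w i x) = _
    have := (hcpos x).ne'
    field_simp
  set ξ : EuclideanSpace ℝ (Fin n) → ℝ := fun x => c x * η x with hξ
  have hξc : ContDiff ℝ ∞ ξ := hcc.mul hη
  have hξ0 : ∀ x ∉ L, ξ x = 0 := fun x hx => by simp [hξ, hη0 x hx]
  have hpξ : ∀ i x, pd i ξ x = w i x / c x * η x + c x * pd i η x := fun i x => by
    rw [hξ, pd_mul (hcc.of_le (by simp)) (hη.of_le (by simp)), hpc]
  have hf' : Continuous fun x => deriv f (u x) :=
    (hf.continuous_deriv (by simp)).comp hu.continuous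
  -- the stability inequality, as integrals over the whole space
  have hs0 : ∀ x ∈ frontier Ω, ξ x = 0 := by
    intro x hx
    refine hξ0 x fun hxL => ?_
    rw [hΩ.frontier_eq] at hx
    exact hx.2 (hLΩ hxL)
  have hs := hst ξ (hξc.of_le (by simp)) hs0
  rw [setIntegral_eq_integral_of_forall_compl_eq_zero
      (fun x hx => by simp [hξ0 x fun h => hx (hLΩ h)]),
    setIntegral_eq_integral_of_forall_compl_eq_zero
      (fun x hx => by
        rw [norm_gradient_sq]
        exact Finset.sum_eq_zero fun i _ => by
          rw [pd_zero_off hL hξ0 x fun h => hx (hLΩ h)]; simp)] at hs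
  simp only [norm_gradient_sq] at hs
  have hdiv := integral_div (Y := fun i x => w i x * η x ^ 2) hL
    (fun i => ((hwc i).mul (hη.pow 2)).of_le (by simp))
    (fun i x hx => by simp [hη0 x hx])
  -- the divergence, computed pointwise
  have hpw : ∀ x, (∑ i, pd i ξ x ^ 2) - deriv f (u x) * ξ x ^ 2
      - ∑ i, pd i (fun x => w i x * η x ^ 2) x =
      S x * (∑ i, pd i η x ^ 2) - e * (deriv f (u x) * η x ^ 2)
      - ((∑ i, ∑ j, pd j (pd i u) x ^ 2) - (∑ i, w i x ^ 2) / S x) * η x ^ 2 := by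
    intro x
    by_cases hx : x ∈ L
    swap
    · have h1 : ∀ i, pd i (fun x => w i x * η x ^ 2) x = 0 := fun i =>
        pd_zero_off hL (fun x hx => by simp [hη0 x hx]) x hx
      simp [h1, hξ0 x hx, hη0 x hx, hη10 _ x hx, pd_zero_off hL hξ0 x hx]
    have h1 : ∀ i, pd i (fun x => w i x * η x ^ 2) x =
        pd i (w i) x * η x ^ 2 + w i x * (2 * η x * pd i η x) := fun i => by
      rw [pd_mul ((hwc i).of_le (by simp)) ((hη.pow 2).of_le (by simp)),
        pd_sq (hη.of_le (by simp))]
    have h2 : ∑ i, pd i (w i) x = (∑ i, ∑ j, pd j (pd i u) x ^ 2)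
        - deriv f (u x) * ∑ j, pd j u x ^ 2 := by
      have h3 : ∀ i, pd i (w i) x = ∑ j, (pd j (pd i u) x ^ 2
          + pd j u x * pd i (pd i (pd j u)) x) := by
        intro i
        rw [hw, pd_sum fun j => ((hu2 i j).mul (hu1 j)).of_le (by simp)]
        refine Finset.sum_congr rfl fun j _ => ?_
        rw [pd_mul ((hu2 i j).of_le (by simp)) ((hu1 j).of_le (by simp))]
        have : pd j (pd i u) = pd i (pd j u) := funext fun x => pd_comm hu x
        rw [this]; ring
      rw [Finset.sum_congr rfl fun i _ => h3 i]
      simp only [Finset.sum_add_distrib]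
      rw [Finset.sum_comm (f := fun i j => pd j u x * pd i (pd i (pd j u)) x)]
      simp only [← Finset.mul_sum]
      simp only [pd_lap hΩ hf hu heq (hLΩ hx)]
      rw [Finset.mul_sum, sub_eq_add_neg, ← Finset.sum_neg_distrib]
      congr 1
      exact Finset.sum_congr rfl fun j _ => by ring
    have h4 : ∀ i, pd i ξ x ^ 2 = w i x ^ 2 / S x * η x ^ 2
        + 2 * (w i x * η x * pd i η x) + S x * pd i η x ^ 2 := by
      intro i
      rw [hpξ, ← hc2]
      have := (hcpos x).ne'
      field_simp
      ring
    rw [Finset.sum_congr rfl fun i _ => h1 i, Finset.sum_congr rfl fun i _ => h4 i]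
    simp only [Finset.sum_add_distrib]
    rw [← Finset.sum_mul, ← Finset.sum_mul, h2, ← Finset.sum_div, ← Finset.mul_sum,
      ← Finset.mul_sum]
    have h5 : ∑ i, w i x * (2 * η x * pd i η x) = 2 * ∑ i, w i x * η x * pd i η x := by
      rw [Finset.mul_sum]; exact Finset.sum_congr rfl fun j _ => by ring
    have h6 : ξ x ^ 2 = S x * η x ^ 2 := by simp only [hξ, mul_pow, hc2]
    have h7 : ∑ j, pd j u x ^ 2 = S x - e := by simp [hS]
    rw [h5, h6, h7]
    ring
  -- every integrand is continuous and vanishes off `L`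
  have i1 : Integrable fun x => ∑ i, pd i ξ x ^ 2 := integrable_off hL
    (continuous_finsetSum _ fun i _ => (pd_contDiff hξc).continuous.pow 2)
    (fun x hx => by simp [pd_zero_off hL hξ0 x hx])
  have i2 : Integrable fun x => deriv f (u x) * ξ x ^ 2 := integrable_off hL
    (hf'.mul (hξc.continuous.pow 2)) (fun x hx => by simp [hξ0 x hx])
  have i3 : Integrable fun x => ∑ i, pd i (fun x => w i x * η x ^ 2) x := integrable_off hL
    (continuous_finsetSum _ fun i _ => (pd_contDiff ((hwc i).mul (hη.pow 2))).continuous)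
    (fun x hx => Finset.sum_eq_zero fun i _ =>
      pd_zero_off hL (fun x hx => by simp [hη0 x hx]) x hx)
  have i4 : Integrable fun x => S x * ∑ i, pd i η x ^ 2 := integrable_off hL
    (hSc.continuous.mul (continuous_finsetSum _ fun i _ => (hη1 i).continuous.pow 2))
    (fun x hx => by simp [hη10 _ x hx])
  have i5 : Integrable fun x => e * (deriv f (u x) * η x ^ 2) := integrable_off hL
    (continuous_const.mul (hf'.mul (hη.continuous.pow 2))) (fun x hx => by simp [hη0 x hx])
  have i6 : Integrable fun x => ((∑ i, ∑ j, pd j (pd i u) x ^ 2) - (∑ i, w i x ^ 2) / S x)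
      * η x ^ 2 := integrable_off hL
    (((continuous_finsetSum _ fun i _ => continuous_finsetSum _ fun j _ =>
      (hu2 i j).continuous.pow 2).sub
      ((continuous_finsetSum _ fun i _ => (hwc i).continuous.pow 2).div hSc.continuous
        fun x => (hSpos x).ne')).mul (hη.continuous.pow 2))
    (fun x hx => by simp [hη0 x hx])
  have hI := congrArg (fun g : EuclideanSpace ℝ (Fin n) → ℝ => ∫ x, g x) (funext hpw)
  rw [integral_sub_sub i1 i2 i3, integral_sub_sub i4 i5 i6, hdiv, integral_const_mul] at hI
  linarith

end pde

/-! ### Regularised weights -/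

section weights

variable {n : ℕ}

/-- The regularised squared distance `|x - y|² + σ²`; its powers are smooth weights. -/
def wt (y : EuclideanSpace ℝ (Fin n)) (σ : ℝ) (x : EuclideanSpace ℝ (Fin n)) : ℝ :=
  ∑ i, (x i - y i) ^ 2 + σ ^ 2

lemma wt_pos (y : EuclideanSpace ℝ (Fin n)) {σ : ℝ} (hσ : 0 < σ) (x) : 0 < wt y σ x := by
  have : 0 ≤ ∑ i, (x i - y i) ^ 2 := Finset.sum_nonneg fun i _ => sq_nonneg _
  unfold wt; positivity

lemma coord_contDiff (y : EuclideanSpace ℝ (Fin n)) (i : Fin n) :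
    ContDiff ℝ ∞ fun x : EuclideanSpace ℝ (Fin n) => x i - y i :=
  (EuclideanSpace.proj i : EuclideanSpace ℝ (Fin n) →L[ℝ] ℝ).contDiff.sub contDiff_const

lemma wt_contDiff (y : EuclideanSpace ℝ (Fin n)) (σ : ℝ) : ContDiff ℝ ∞ (wt y σ) :=
  (ContDiff.sum fun i _ => (coord_contDiff y i).pow 2).add contDiff_const

lemma wt_eq (y : EuclideanSpace ℝ (Fin n)) (σ : ℝ) (x) : wt y σ x = ‖x - y‖ ^ 2 + σ ^ 2 := by
  rw [EuclideanSpace.norm_sq_eq]; simp [wt]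

lemma pd_wt (y : EuclideanSpace ℝ (Fin n)) (σ : ℝ) (i : Fin n) (x) :
    pd i (wt y σ) x = 2 * (x i - y i) := by
  have h : pd i (wt y σ) x = pd i (fun x => ∑ j, (x j - y j) ^ 2) x := by
    unfold pd wt; rw [fderiv_add_const]
  rw [h, pd_sum fun j => ((coord_contDiff y j).pow 2).of_le (by simp)]
  have : ∀ j, pd i (fun x : EuclideanSpace ℝ (Fin n) => (x j - y j) ^ 2) x =
      if i = j then 2 * (x j - y j) else 0 := fun j => by
    rw [pd_sq ((coord_contDiff y j).of_le (by simp)), pd_coord]; simp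
  simp [this]

lemma wt_rpow_contDiff (y : EuclideanSpace ℝ (Fin n)) {σ : ℝ} (hσ : 0 < σ) (r : ℝ) :
    ContDiff ℝ ∞ fun x => wt y σ x ^ r :=
  (wt_contDiff y σ).rpow_const_of_ne fun x => (wt_pos y hσ x).ne'

lemma pd_wt_rpow (y : EuclideanSpace ℝ (Fin n)) {σ : ℝ} (hσ : 0 < σ) (r : ℝ) (i : Fin n) (x) :
    pd i (fun x => wt y σ x ^ r) x = 2 * r * (x i - y i) * (wt y σ x ^ r / wt y σ x) := by
  have h := Real.hasDerivAt_rpow_const (x := wt y σ x) (p := r) (Or.inl (wt_pos y hσ x).ne')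
  rw [pd_comp (φ := fun t => t ^ r) ((wt_contDiff y σ).of_le (by simp)) x h, pd_wt,
    Real.rpow_sub_one (wt_pos y hσ x).ne']
  ring

end weights

/-! ### The weighted gradient estimate -/

section weighted

variable {n : ℕ}

/-- The pointwise inequality behind the weighted estimate.  Here `p = ∇u`, `M = D²u`, `z = x - y`,
`q = ∇ζ`, `Q` the regularised squared distance and `W = Q ^ (3/4 - n/2)`; the sum over `i` on the
right is the divergence of `W ζ² (|p|² z - (p·z) p)`. -/
lemma pointwise_ineq (hn3 : 3 ≤ n) (hn4 : n ≤ 4) (M : Fin n → Fin n → ℝ) (p z q : Fin n → ℝ)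
    {e Q W ζ : ℝ} (he : 0 < e) (hQ : 0 < Q) (hW : 0 < W) (hz : ∑ i, z i ^ 2 ≤ Q) :
    1 / 2 * (W * ζ ^ 2 * ∑ i, p i ^ 2) ≤
      (W * ζ ^ 2 * ((n - 1) * (∑ i, p i ^ 2) -
          ((∑ i, p i * z i) * (∑ i, M i i) - ∑ i, ∑ j, M i j * p i * z j))
        + W * (-(n - 3 / 2) * ζ ^ 2 / Q * ((∑ i, p i ^ 2) * (∑ i, z i ^ 2) - (∑ i, p i * z i) ^ 2)
        + 2 * ζ * ((∑ i, p i ^ 2) * (∑ i, z i * q i) - (∑ i, p i * z i) * ∑ i, p i * q i)))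
      + 1 / 4 * ((∑ i, p i ^ 2 + e) * (W * ζ ^ 2))
      + 3 * (((∑ i, ∑ j, M i j ^ 2) -
          (∑ i, (∑ j, M i j * p j) ^ 2) / (∑ i, p i ^ 2 + e)) * (Q * W * ζ ^ 2))
      + 1 / 64 * (W * ζ ^ 2 * ∑ i, p i ^ 2)
      + 256 * (Q * W * (∑ i, q i ^ 2) * ∑ i, p i ^ 2) := by
  have hn3' : (3 : ℝ) ≤ n := by exact_mod_cast hn3
  have hn4' : (n : ℝ) ≤ 4 := by exact_mod_cast hn4
  have hmat := matrix_ineq (by omega) M p z he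
  set P := ∑ i, p i ^ 2
  set Z := ∑ i, z i ^ 2
  set g := ∑ i, q i ^ 2
  set m := ∑ i, p i * z i
  set t := m * (∑ i, M i i) - ∑ i, ∑ j, M i j * p i * z j
  set A := (∑ i, ∑ j, M i j ^ 2) - (∑ i, (∑ j, M i j * p j) ^ 2) / (P + e)
  set zq := ∑ i, z i * q i
  set pq := ∑ i, p i * q i
  have hP : 0 ≤ P := Finset.sum_nonneg fun i _ => sq_nonneg _
  have hZ : 0 ≤ Z := Finset.sum_nonneg fun i _ => sq_nonneg _
  have hg : 0 ≤ g := Finset.sum_nonneg fun i _ => sq_nonneg _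
  have hm : m ^ 2 ≤ P * Z := sum_cs _ _
  have hzq : zq ^ 2 ≤ Z * g := sum_cs _ _
  have hpq : pq ^ 2 ≤ P * g := sum_cs _ _
  have hPe : 0 < P + e := by linarith
  have hA : 0 ≤ A := by
    have h1 : (∑ i, (∑ j, M i j * p j) ^ 2) ≤ (∑ i, ∑ j, M i j ^ 2) * P := by
      rw [Finset.sum_mul]
      exact Finset.sum_le_sum fun i _ => sum_cs _ _
    have h2 : 0 ≤ ∑ i, ∑ j, M i j ^ 2 :=
      Finset.sum_nonneg fun i _ => Finset.sum_nonneg fun j _ => sq_nonneg _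
    rw [sub_nonneg, div_le_iff₀ hPe]
    nlinarith
  -- `n ≤ 4` enters through `n - 1 ≤ 3`
  have ht : 2 * t ≤ 1 / 2 * (P + e) + 6 * (Q * A) := by
    refine two_mul_le_of_sq_le (hmat.trans ?_) (by positivity) (by positivity)
    have h1 : ((n : ℝ) - 1) * Z ≤ 3 * Q := by nlinarith
    calc _ ≤ 3 * Q * ((P + e) * A) := by gcongr
      _ = _ := by ring
  set k := P * zq - m * pq
  have hk : 2 * (-(ζ * k)) ≤ 1 / 64 * (ζ ^ 2 * P) + 256 * (Q * g * P) := by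
    refine two_mul_le_of_sq_le ?_ (by positivity) (by positivity)
    have h1 : k ^ 2 ≤ 4 * (P ^ 2 * (Z * g)) := by
      have h2 : (m * pq) ^ 2 ≤ P ^ 2 * (Z * g) := by
        calc (m * pq) ^ 2 = m ^ 2 * pq ^ 2 := by ring
          _ ≤ (P * Z) * (P * g) := by gcongr
          _ = _ := by ring
      have h3 : (P * zq) ^ 2 ≤ P ^ 2 * (Z * g) := by
        rw [mul_pow]; gcongr
      simp only [k]
      nlinarith [sq_nonneg (P * zq + m * pq)]
    have h4 : P ^ 2 * (Z * g) ≤ P ^ 2 * (Q * g) := by gcongr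
    calc (-(ζ * k)) ^ 2 = ζ ^ 2 * k ^ 2 := by ring
      _ ≤ ζ ^ 2 * (4 * (P ^ 2 * (Q * g))) := by gcongr; linarith
      _ = _ := by ring
  have hr : (n - 3 / 2) * ζ ^ 2 / Q * (P * Z - m ^ 2) ≤ (n - 3 / 2) * (ζ ^ 2 * P) := by
    rw [div_mul_eq_mul_div, div_le_iff₀ hQ]
    have : P * Z - m ^ 2 ≤ P * Q := by nlinarith [sq_nonneg m]
    have h0 : 0 ≤ ((n : ℝ) - 3 / 2) * ζ ^ 2 := by
      have : 0 ≤ (n : ℝ) - 3 / 2 := by linarith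
      positivity
    nlinarith
  -- divide by the common factor `W`
  suffices h : 1 / 2 * (ζ ^ 2 * P) ≤ (ζ ^ 2 * ((n - 1) * P - t)
      + (-(n - 3 / 2) * ζ ^ 2 / Q * (P * Z - m ^ 2) + 2 * ζ * k))
      + 1 / 4 * ((P + e) * ζ ^ 2) + 3 * (A * (Q * ζ ^ 2)) + 1 / 64 * (ζ ^ 2 * P)
      + 256 * (Q * g * P) by
    have := mul_le_mul_of_nonneg_left h hW.le
    linarith
  have h5 : -(n - 3 / 2) * ζ ^ 2 / Q * (P * Z - m ^ 2) =
    -((n - 3 / 2) * ζ ^ 2 / Q * (P * Z - m ^ 2)) := by ring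
  rw [h5]
  have h6 := mul_le_mul_of_nonneg_left ht (sq_nonneg ζ)
  linarith

lemma le_of_forall_le_add_mul {a b B : ℝ} (h : ∀ e, 0 < e → a ≤ b + e * B) : a ≤ b := by
  refine le_of_forall_pos_le_add fun d hd => ?_
  have h1 := h (d / (|B| + 1)) (by positivity)
  have h2 : d / (|B| + 1) * B ≤ d := by
    rw [div_mul_eq_mul_div, div_le_iff₀ (by positivity)]
    nlinarith [le_abs_self B]
  linarith

end weighted

section weighted2

variable {n : ℕ}

/-- Integral of a five-term linear combination; unused slots are filled with coefficient `0`. -/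
lemma integral_comb {a b c d k : EuclideanSpace ℝ (Fin n) → ℝ} (ha : Integrable a)
    (hb : Integrable b) (hc : Integrable c) (hd : Integrable d) (hk : Integrable k)
    (r₁ r₂ r₃ r₄ r₅ : ℝ) :
    Integrable (fun x => r₁ * a x + r₂ * b x + r₃ * c x + r₄ * d x + r₅ * k x) ∧
      ∫ x, (r₁ * a x + r₂ * b x + r₃ * c x + r₄ * d x + r₅ * k x) =
        r₁ * (∫ x, a x) + r₂ * (∫ x, b x) + r₃ * (∫ x, c x) + r₄ * (∫ x, d x) +
          r₅ * ∫ x, k x := by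
  have i1 := ha.const_mul r₁
  have i2 : Integrable fun x => r₁ * a x + r₂ * b x := i1.add (hb.const_mul r₂)
  have i3 : Integrable fun x => r₁ * a x + r₂ * b x + r₃ * c x := i2.add (hc.const_mul r₃)
  have i4 : Integrable fun x => r₁ * a x + r₂ * b x + r₃ * c x + r₄ * d x :=
    i3.add (hd.const_mul r₄)
  refine ⟨i4.add (hk.const_mul r₅), ?_⟩
  rw [integral_add i4 (hk.const_mul r₅), integral_add i3 (hd.const_mul r₄),
    integral_add i2 (hc.const_mul r₃), integral_add i1 (hb.const_mul r₂)]
  simp only [integral_const_mul]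

/-- The divergence of `h (|∇u|² z - (∇u·z) ∇u)` with `z = x - y`. -/
lemma div_field {u h : EuclideanSpace ℝ (Fin n) → ℝ} (hu : ContDiff ℝ ∞ u) (hh : ContDiff ℝ ∞ h)
    (y x : EuclideanSpace ℝ (Fin n)) :
    ∑ i, pd i (fun x => h x * ((∑ j, pd j u x ^ 2) * (x i - y i) -
        (∑ j, pd j u x * (x j - y j)) * pd i u x)) x =
      (∑ i, pd i h x * ((∑ j, pd j u x ^ 2) * (x i - y i) -
        (∑ j, pd j u x * (x j - y j)) * pd i u x)) +
      h x * ((n - 1) * (∑ i, pd i u x ^ 2) -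
        ((∑ i, pd i u x * (x i - y i)) * (∑ i, pd i (pd i u) x) -
          ∑ i, ∑ j, pd j (pd i u) x * pd i u x * (x j - y j))) := by
  have hu1 : ∀ i, ContDiff ℝ ∞ (pd i u) := fun i => pd_contDiff hu
  have hz := coord_contDiff y
  have hP : ContDiff ℝ ∞ fun x => ∑ j, pd j u x ^ 2 := ContDiff.sum fun j _ => (hu1 j).pow 2
  have hm : ContDiff ℝ ∞ fun x : EuclideanSpace ℝ (Fin n) => ∑ j, pd j u x * (x j - y j) :=
    ContDiff.sum fun j _ => (hu1 j).mul (hz j)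
  have hPd : ∀ i, pd i (fun x => ∑ j, pd j u x ^ 2) x =
      2 * ∑ j, pd i (pd j u) x * pd j u x := fun i => by
    rw [pd_sum fun j => ((hu1 j).pow 2).of_le (by simp), Finset.mul_sum]
    exact Finset.sum_congr rfl fun j _ => by rw [pd_sq ((hu1 j).of_le (by simp))]; ring
  have hmd : ∀ i, pd i (fun x : EuclideanSpace ℝ (Fin n) => ∑ j, pd j u x * (x j - y j)) x =
      (∑ j, pd i (pd j u) x * (x j - y j)) + pd i u x := fun i => by
    rw [pd_sum fun j => ((hu1 j).mul (hz j)).of_le (by simp)]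
    have : ∀ j, pd i (fun x : EuclideanSpace ℝ (Fin n) => pd j u x * (x j - y j)) x =
        pd i (pd j u) x * (x j - y j) + (if i = j then pd j u x else 0) := fun j => by
      rw [pd_mul ((hu1 j).of_le (by simp)) ((hz j).of_le (by simp)), pd_coord]
      simp
    rw [Finset.sum_congr rfl fun j _ => this j, Finset.sum_add_distrib]
    simp
  have hBd : ∀ i, pd i (fun x => h x * ((∑ j, pd j u x ^ 2) * (x i - y i) -
        (∑ j, pd j u x * (x j - y j)) * pd i u x)) x =
      pd i h x * ((∑ j, pd j u x ^ 2) * (x i - y i) -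
        (∑ j, pd j u x * (x j - y j)) * pd i u x) +
      h x * (2 * (∑ j, pd i (pd j u) x * pd j u x * (x i - y i)) + (∑ j, pd j u x ^ 2) -
        ((∑ j, pd i (pd j u) x * pd i u x * (x j - y j)) + pd i u x ^ 2 +
          (∑ j, pd j u x * (x j - y j)) * pd i (pd i u) x)) := fun i => by
    rw [pd_mul (hh.of_le (by simp)) (((hP.mul (hz i)).sub (hm.mul (hu1 i))).of_le (by simp)),
      pd_sub ((hP.mul (hz i)).of_le (by simp)) ((hm.mul (hu1 i)).of_le (by simp)),
      pd_mul (hP.of_le (by simp)) ((hz i).of_le (by simp)),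
      pd_mul (hm.of_le (by simp)) ((hu1 i).of_le (by simp)), hPd, hmd, pd_coord, if_pos rfl]
    have e1 : ∑ j, pd i (pd j u) x * pd j u x * (x i - y i) =
        (∑ j, pd i (pd j u) x * pd j u x) * (x i - y i) := by rw [Finset.sum_mul]
    have e2 : ∑ j, pd i (pd j u) x * pd i u x * (x j - y j) =
        (∑ j, pd i (pd j u) x * (x j - y j)) * pd i u x := by
      rw [Finset.sum_mul]; exact Finset.sum_congr rfl fun j _ => by ring
    rw [e1, e2]
    ring
  rw [Finset.sum_congr rfl fun i _ => hBd i, Finset.sum_add_distrib, ← Finset.mul_sum]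
  congr 2
  simp only [Finset.sum_sub_distrib, Finset.sum_add_distrib, ← Finset.mul_sum]
  have e3 : ∑ i, ∑ j, pd i (pd j u) x * pd j u x * (x i - y i) =
      ∑ i, ∑ j, pd j (pd i u) x * pd i u x * (x j - y j) := Finset.sum_comm
  have e4 : ∑ i, ∑ j, pd i (pd j u) x * pd i u x * (x j - y j) =
      ∑ i, ∑ j, pd j (pd i u) x * pd i u x * (x j - y j) :=
    Finset.sum_congr rfl fun i _ => Finset.sum_congr rfl fun j _ => by rw [pd_comm hu]
  rw [e3, e4]
  simp
  ring

lemma grad_weight (y : EuclideanSpace ℝ (Fin n)) {σ : ℝ} (hσ : 0 < σ) (r : ℝ)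
    {ζ : EuclideanSpace ℝ (Fin n) → ℝ} (hζ : ContDiff ℝ ∞ ζ) (i : Fin n) (x) :
    pd i (fun x => wt y σ x ^ r * ζ x) x =
      wt y σ x ^ r * (2 * r * (x i - y i) / wt y σ x * ζ x + pd i ζ x) := by
  rw [pd_mul ((wt_rpow_contDiff y hσ r).of_le (by simp)) (hζ.of_le (by simp)),
    pd_wt_rpow y hσ]
  ring

/-- The weighted gradient estimate: `∫ |∇u|² |x - y|^(3/2 - n) ζ²` is controlled by the integral
over the region where the cutoff `ζ` varies, uniformly in the regularisation `σ`. -/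
lemma weighted_estimate (hn3 : 3 ≤ n) (hn4 : n ≤ 4)
    {Ω L : Set (EuclideanSpace ℝ (Fin n))} (hΩ : IsOpen Ω) (hL : IsCompact L)
    (hLΩ : L ⊆ Ω) {f : ℝ → ℝ} {u : EuclideanSpace ℝ (Fin n) → ℝ}
    (hf : ContDiff ℝ 1 f) (hu : ContDiff ℝ ∞ u)
    (heq : ∀ x ∈ Ω, -(lap u x) = f (u x))
    (hst : ∀ ξ : EuclideanSpace ℝ (Fin n) → ℝ, ContDiff ℝ 1 ξ →
          (∀ x ∈ frontier Ω, ξ x = 0) →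
          ∫ x in Ω, deriv f (u x) * ξ x ^ 2 ≤ ∫ x in Ω, ‖gradient ξ x‖ ^ 2)
    {ζ : EuclideanSpace ℝ (Fin n) → ℝ} (hζ : ContDiff ℝ ∞ ζ) (hζ0 : ∀ x ∉ L, ζ x = 0)
    (y : EuclideanSpace ℝ (Fin n)) {σ : ℝ} (hσ : 0 < σ) :
    ∫ x, wt y σ x ^ (3 / 4 - n / 2 : ℝ) * ζ x ^ 2 * ∑ i, pd i u x ^ 2 ≤
      17728 * ∫ x, wt y σ x * wt y σ x ^ (3 / 4 - n / 2 : ℝ) * (∑ i, pd i ζ x ^ 2) *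
        ∑ i, pd i u x ^ 2 := by
  have hn3' : (3 : ℝ) ≤ n := by exact_mod_cast hn3
  have hn4' : (n : ℝ) ≤ 4 := by exact_mod_cast hn4
  set Q := wt y σ with hQdef
  have hQ := wt_pos y hσ
  have hQc : ContDiff ℝ ∞ Q := wt_contDiff y σ
  set W : EuclideanSpace ℝ (Fin n) → ℝ := fun x => Q x ^ (3 / 4 - n / 2 : ℝ) with hW
  have hWc : ContDiff ℝ ∞ W := wt_rpow_contDiff y hσ _
  have hWpos : ∀ x, 0 < W x := fun x => Real.rpow_pos_of_pos (hQ x) _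
  -- with `r` half of `1 + (3/4 - n/2)`, the test function `η = Q ^ r ζ` has `η² = Q W ζ²`
  set r : ℝ := 7 / 8 - n / 4 with hr
  have hr2 : 4 * r ^ 2 ≤ 1 / 16 := by
    rw [hr]
    nlinarith [mul_nonneg (sub_nonneg.2 hn3') (sub_nonneg.2 hn4')]
  set η : EuclideanSpace ℝ (Fin n) → ℝ := fun x => Q x ^ r * ζ x with hη
  have hηc : ContDiff ℝ ∞ η := (wt_rpow_contDiff y hσ _).mul hζ
  have hη0 : ∀ x ∉ L, η x = 0 := fun x hx => by simp [hη, hζ0 x hx]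
  have hV2 : ∀ x, (Q x ^ r) ^ 2 = Q x * W x := fun x => by
    rw [← Real.rpow_natCast, ← Real.rpow_mul (hQ x).le, hW]
    change _ = Q x * Q x ^ _
    have h1 := Real.rpow_add (hQ x) 1 (3 / 4 - n / 2 : ℝ)
    rw [Real.rpow_one] at h1
    rw [← h1]
    congr 1
    rw [hr]; push_cast; ring
  have hη2 : ∀ x, η x ^ 2 = Q x * W x * ζ x ^ 2 := fun x => by
    simp only [hη, mul_pow, hV2]
  have hu1 : ∀ i, ContDiff ℝ ∞ (pd i u) := fun i => pd_contDiff hu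
  have hu2 : ∀ i j, ContDiff ℝ ∞ (pd j (pd i u)) := fun i j => pd_contDiff (hu1 i)
  have hζ1 : ∀ i, ContDiff ℝ ∞ (pd i ζ) := fun i => pd_contDiff hζ
  have hζ10 : ∀ i, ∀ x ∉ L, pd i ζ x = 0 := fun i => pd_zero_off hL hζ0
  set P : EuclideanSpace ℝ (Fin n) → ℝ := fun x => ∑ i, pd i u x ^ 2 with hP
  set g : EuclideanSpace ℝ (Fin n) → ℝ := fun x => ∑ i, pd i ζ x ^ 2 with hg
  have hPc : ContDiff ℝ ∞ P := ContDiff.sum fun i _ => (hu1 i).pow 2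
  have hgc : ContDiff ℝ ∞ g := ContDiff.sum fun i _ => (hζ1 i).pow 2
  have hg0 : ∀ x ∉ L, g x = 0 := fun x hx => by simp [hg, hζ10 _ x hx]
  have hP0 : ∀ x, 0 ≤ P x := fun x => Finset.sum_nonneg fun i _ => sq_nonneg _
  have hz := coord_contDiff y
  have hzQ : ∀ x : EuclideanSpace ℝ (Fin n), ∑ i, (x i - y i) ^ 2 ≤ Q x := fun x => by
    rw [hQdef, wt]; nlinarith
  -- the vector field of the divergence identity
  set h : EuclideanSpace ℝ (Fin n) → ℝ := fun x => W x * ζ x ^ 2 with hh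
  have hhc : ContDiff ℝ ∞ h := hWc.mul (hζ.pow 2)
  set Y : Fin n → EuclideanSpace ℝ (Fin n) → ℝ := fun i x =>
    h x * ((∑ j, pd j u x ^ 2) * (x i - y i) -
        (∑ j, pd j u x * (x j - y j)) * pd i u x) with hY
  have hYc : ∀ i, ContDiff ℝ ∞ (Y i) := fun i => hhc.mul ((hPc.mul (hz i)).sub
    ((ContDiff.sum fun j _ => (hu1 j).mul (hz j)).mul (hu1 i)))
  have hY0 : ∀ i, ∀ x ∉ L, Y i x = 0 := fun i x hx => by simp [hY, hh, hζ0 x hx]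
  have hYint := integral_div hL (fun i => (hYc i).of_le (by simp)) hY0
  have hdh : ∀ i x, pd i h x =
      W x * (-(n - 3 / 2) * ζ x ^ 2 / Q x * (x i - y i) + 2 * ζ x * pd i ζ x) := fun i x => by
    rw [hh, hW, grad_weight y hσ _ (hζ.pow 2), pd_sq (hζ.of_le (by simp))]
    ring
  have hdiv : ∀ x, ∑ i, pd i (Y i) x =
      h x * ((n - 1) * (∑ i, pd i u x ^ 2) -
          ((∑ i, pd i u x * (x i - y i)) * (∑ i, pd i (pd i u) x) -
            ∑ i, ∑ j, pd j (pd i u) x * pd i u x * (x j - y j)))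
        + W x * (-(n - 3 / 2) * ζ x ^ 2 / Q x * ((∑ i, pd i u x ^ 2) * (∑ i, (x i - y i) ^ 2)
          - (∑ i, pd i u x * (x i - y i)) ^ 2)
        + 2 * ζ x * ((∑ i, pd i u x ^ 2) * (∑ i, (x i - y i) * pd i ζ x)
          - (∑ i, pd i u x * (x i - y i)) * ∑ i, pd i u x * pd i ζ x)) := fun x => by
    rw [hY, div_field hu hhc y x, add_comm]
    congr 1
    simp only [hdh]
    set P' := ∑ j, pd j u x ^ 2
    set m := ∑ j, pd j u x * (x j - y j) with hm
    have : ∀ i, W x * (-(n - 3 / 2) * ζ x ^ 2 / Q x * (x i - y i) + 2 * ζ x * pd i ζ x) *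
        (P' * (x i - y i) - m * pd i u x) =
        W x * (-(n - 3 / 2) * ζ x ^ 2 / Q x) * P' * (x i - y i) ^ 2 -
        W x * (-(n - 3 / 2) * ζ x ^ 2 / Q x) * m * (pd i u x * (x i - y i)) +
        W x * (2 * ζ x) * P' * ((x i - y i) * pd i ζ x) -
        W x * (2 * ζ x) * m * (pd i u x * pd i ζ x) := fun i => by ring
    rw [Finset.sum_congr rfl fun i _ => this i]
    simp only [Finset.sum_sub_distrib, Finset.sum_add_distrib, ← Finset.mul_sum, ← hm]
    ring
  set I := ∫ x, W x * ζ x ^ 2 * P x with hI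
  set J := ∫ x, Q x * W x * g x * P x with hJ
  have iI : Integrable fun x => W x * ζ x ^ 2 * P x := integrable_off hL
    ((hhc.mul hPc).continuous) (fun x hx => by simp [hζ0 x hx])
  have ih : Integrable h := integrable_off hL hhc.continuous (fun x hx => by simp [hh, hζ0 x hx])
  have iJ : Integrable fun x => Q x * W x * g x * P x := integrable_off hL
    ((((hQc.mul hWc).mul hgc).mul hPc).continuous) (fun x hx => by simp [hg0 x hx])
  have iG : Integrable fun x => Q x * W x * g x := integrable_off hL
    (((hQc.mul hWc).mul hgc).continuous) (fun x hx => by simp [hg0 x hx])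
  suffices key : ∀ e : ℝ, 0 < e → 1 / 64 * I ≤ 277 * J + e * (1 / 4 * (∫ x, h x) +
      3 * (7 / 96 * (∫ x, h x) + 7 * (∫ x, Q x * W x * g x)
        - ∫ x, deriv f (u x) * η x ^ 2)) by
    have := le_of_forall_le_add_mul key
    linarith
  intro e he
  -- the stability inequality bounds the curvature term
  have hstab := stability_pd hΩ hL hLΩ hf hu heq hst hηc hη0 he
  set A : EuclideanSpace ℝ (Fin n) → ℝ := fun x => ((∑ i, ∑ j, pd j (pd i u) x ^ 2) -
        (∑ i, (∑ j, pd j (pd i u) x * pd j u x) ^ 2) / (∑ i, pd i u x ^ 2 + e)) * η x ^ 2 with hA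
  have hPe : ∀ x, 0 < P x + e := fun x => by have := hP0 x; linarith
  have iA : Integrable A := integrable_off hL
    (((continuous_finsetSum _ fun i _ => continuous_finsetSum _ fun j _ =>
      (hu2 i j).continuous.pow 2).sub
      ((continuous_finsetSum _ fun i _ => (continuous_finsetSum _ fun j _ =>
        (hu2 i j).continuous.mul (hu1 j).continuous).pow 2).div
        (hPc.continuous.add continuous_const)
        fun x => (hPe x).ne')).mul (hηc.continuous.pow 2))
    (fun x hx => by simp [hA, hη0 x hx])
  have hgrad : ∀ x, ∑ i, pd i η x ^ 2 ≤ 7 / 96 * h x + 7 * (Q x * W x * g x) := fun x => by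
    have h1 : ∀ i, pd i η x ^ 2 ≤ Q x * W x * (7 / 6 * (4 * r ^ 2) * ζ x ^ 2 / Q x ^ 2 *
        (x i - y i) ^ 2 + 7 * pd i ζ x ^ 2) := fun i => by
      rw [hη, grad_weight y hσ r hζ, mul_pow, hV2]
      have hQW : 0 < Q x * W x := mul_pos (hQ x) (hWpos x)
      refine mul_le_mul_of_nonneg_left ?_ hQW.le
      set a := 2 * r * (x i - y i) / wt y σ x * ζ x with ha
      have : 7 / 6 * (4 * r ^ 2) * ζ x ^ 2 / Q x ^ 2 * (x i - y i) ^ 2 = 7 / 6 * a ^ 2 := by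
        rw [ha, hQdef]; ring
      rw [this]
      -- `(a + b)² ≤ 7/6 a² + 7 b²`: little is lost on the term without `∇ζ`
      nlinarith [sq_nonneg (a - 6 * pd i ζ x)]
    refine (Finset.sum_le_sum fun i _ => h1 i).trans ?_
    rw [← Finset.mul_sum, Finset.sum_add_distrib, ← Finset.mul_sum, ← Finset.mul_sum]
    have h2 : 7 / 6 * (4 * r ^ 2) * ζ x ^ 2 / Q x ^ 2 * ∑ i, (x i - y i) ^ 2 ≤
        7 / 96 * ζ x ^ 2 / Q x := by
      have hQx := hQ x
      calc _ ≤ 7 / 6 * (1 / 16) * ζ x ^ 2 / Q x ^ 2 * Q x := by gcongr; exact hzQ x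
        _ = _ := by field_simp; ring
    have hQW : 0 < Q x * W x := mul_pos (hQ x) (hWpos x)
    calc Q x * W x * (_ + 7 * ∑ i, pd i ζ x ^ 2) ≤
        Q x * W x * (7 / 96 * ζ x ^ 2 / Q x + 7 * g x) := by gcongr
      _ = _ := by
        have : Q x ≠ 0 := (hQ x).ne'
        simp only [hh]; field_simp
  have hE : (∫ x, (∑ i, pd i u x ^ 2 + e) * ∑ i, pd i η x ^ 2) ≤
      7 / 96 * I + 7 * J + e * (7 / 96 * (∫ x, h x) + 7 * (∫ x, Q x * W x * g x)) := by
    obtain ⟨hi, hs⟩ := integral_comb iI iJ ih iG iG (7 / 96) 7 (e * (7 / 96)) (e * 7) 0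
    have : 7 / 96 * I + 7 * J + e * (7 / 96 * (∫ x, h x) + 7 * (∫ x, Q x * W x * g x)) =
        7 / 96 * I + 7 * J + e * (7 / 96) * (∫ x, h x) + e * 7 * (∫ x, Q x * W x * g x) +
          0 * ∫ x, Q x * W x * g x := by ring
    rw [this, hI, hJ, ← hs]
    refine integral_mono (integrable_off hL ((hPc.add contDiff_const).continuous.mul
      (continuous_finsetSum _ fun i _ => (pd_contDiff hηc).continuous.pow 2))
      (fun x hx => by simp [pd_zero_off hL hη0 x hx])) hi fun x => ?_
    have := mul_le_mul_of_nonneg_left (hgrad x) (hPe x).le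
    refine this.trans (le_of_eq ?_)
    simp only [hh]
    ring
  -- integrate the pointwise inequality
  have hmain : 1 / 2 * I ≤ 0 + 1 / 4 * (I + e * ∫ x, h x) + 3 * (∫ x, A x) + 1 / 64 * I
      + 256 * J := by
    have iD : Integrable fun x => ∑ i, pd i (Y i) x := integrable_off hL
      (continuous_finsetSum _ fun i _ => (pd_contDiff (hYc i)).continuous)
      (fun x hx => Finset.sum_eq_zero fun i _ => pd_zero_off hL (hY0 i) x hx)
    obtain ⟨hi, hs⟩ := integral_comb iD iI ih iA iJ 1 (1 / 4 + 1 / 64) (e / 4) 3 256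
    have e1 : 0 + 1 / 4 * (I + e * ∫ x, h x) + 3 * (∫ x, A x) + 1 / 64 * I + 256 * J =
        1 * 0 + (1 / 4 + 1 / 64) * I + e / 4 * (∫ x, h x) + 3 * (∫ x, A x) + 256 * J := by
      ring
    rw [e1, ← hYint, hI, hJ, ← hs, ← integral_const_mul]
    refine integral_mono (iI.const_mul _) hi fun x => ?_
    have hp := pointwise_ineq hn3 hn4 (fun i j => pd j (pd i u) x) (fun i => pd i u x)
      (fun i => x i - y i) (fun i => pd i ζ x) (ζ := ζ x) he (hQ x) (hWpos x) (hzQ x)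
    simp only [hdiv x]
    refine hp.trans (le_of_eq ?_)
    simp only [hA, hη2, hh, hP, hg]
    ring
  linarith

end weighted2

/-! ### The representation formula -/

section representation

variable {n : ℕ}

/-- The divergence theorem for the radial field `|x - y|^(2r) φ (x - y)`, regularised. -/
lemma radial_ibp {L : Set (EuclideanSpace ℝ (Fin n))} (hL : IsCompact L)
    {φ : EuclideanSpace ℝ (Fin n) → ℝ} (hφ : ContDiff ℝ ∞ φ) (hφ0 : ∀ x ∉ L, φ x = 0)
    (y : EuclideanSpace ℝ (Fin n)) {σ : ℝ} (hσ : 0 < σ) (r : ℝ) :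
    (n + 2 * r) * (∫ x, wt y σ x ^ r * φ x) -
      2 * r * (∫ x, σ ^ 2 * (wt y σ x ^ r / wt y σ x) * φ x) +
      ∫ x, wt y σ x ^ r * ∑ i, (x i - y i) * pd i φ x = 0 := by
  have hwc := wt_rpow_contDiff y hσ r
  have hz := coord_contDiff y
  have hφ1 : ∀ i, ContDiff ℝ ∞ (pd i φ) := fun i => pd_contDiff hφ
  have hdiv := integral_div hL (Y := fun i x => (x i - y i) * (wt y σ x ^ r * φ x))
    (fun i => ((hz i).mul (hwc.mul hφ)).of_le (by simp)) (fun i x hx => by simp [hφ0 x hx])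
  have i1 : Integrable fun x => wt y σ x ^ r * φ x :=
    integrable_off hL (hwc.mul hφ).continuous (fun x hx => by simp [hφ0 x hx])
  have i2 : Integrable fun x => σ ^ 2 * (wt y σ x ^ r / wt y σ x) * φ x :=
    integrable_off hL ((continuous_const.mul (hwc.continuous.div (wt_contDiff y σ).continuous
      fun x => (wt_pos y hσ x).ne')).mul hφ.continuous) (fun x hx => by simp [hφ0 x hx])
  have i3 : Integrable fun x => wt y σ x ^ r * ∑ i, (x i - y i) * pd i φ x :=
    integrable_off hL (hwc.continuous.mul (continuous_finsetSum _ fun i _ =>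
      ((hz i).mul (hφ1 i)).continuous)) (fun x hx => by simp [pd_zero_off hL hφ0 x hx])
  have hs := (integral_comb i1 i2 i3 i3 i3 (n + 2 * r) (-(2 * r)) 1 0 0).2
  have hpt : ∀ x, ∑ i, pd i (fun x => (x i - y i) * (wt y σ x ^ r * φ x)) x =
      (n + 2 * r) * (wt y σ x ^ r * φ x) +
        -(2 * r) * (σ ^ 2 * (wt y σ x ^ r / wt y σ x) * φ x) +
        1 * (wt y σ x ^ r * ∑ i, (x i - y i) * pd i φ x) +
        0 * (wt y σ x ^ r * ∑ i, (x i - y i) * pd i φ x) +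
        0 * (wt y σ x ^ r * ∑ i, (x i - y i) * pd i φ x) := fun x => by
    have h1 : ∀ i, pd i (fun x => (x i - y i) * (wt y σ x ^ r * φ x)) x =
        wt y σ x ^ r * φ x + wt y σ x ^ r * (2 * r / wt y σ x * φ x) * (x i - y i) ^ 2 +
          wt y σ x ^ r * ((x i - y i) * pd i φ x) := fun i => by
      rw [pd_mul ((hz i).of_le (by simp)) ((hwc.mul hφ).of_le (by simp)), pd_coord, if_pos rfl,
        grad_weight y hσ r hφ]
      ring
    rw [Finset.sum_congr rfl fun i _ => h1 i]
    simp only [Finset.sum_add_distrib, ← Finset.mul_sum]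
    have h2 : ∑ i, (x i - y i) ^ 2 = wt y σ x - σ ^ 2 := by unfold wt; ring
    have h3 := (wt_pos y hσ x).ne'
    rw [h2]
    simp
    field_simp
    ring
  rw [integral_congr_ae (Filter.Eventually.of_forall hpt), hs] at hdiv
  linarith

/-- The regularised weight `|x - y|^(1/2 - n)`, localised by `ζ²`, has integral controlled by
quantities living where `ζ` varies, hence uniformly bounded when `y` is away from there.  This is
the divergence theorem for the radial field, whose divergence has the constant `n + 2r = 1/2`. -/
lemma weight_mass (hn3 : 3 ≤ n) {L : Set (EuclideanSpace ℝ (Fin n))} (hL : IsCompact L)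
    {ζ : EuclideanSpace ℝ (Fin n) → ℝ} (hζ : ContDiff ℝ ∞ ζ) (hζ0 : ∀ x ∉ L, ζ x = 0)
    (y : EuclideanSpace ℝ (Fin n)) {σ : ℝ} (hσ : 0 < σ) :
    ∫ x, wt y σ x ^ (1 / 4 - n / 2 : ℝ) * ζ x ^ 2 ≤
      16 * ∫ x, wt y σ x * wt y σ x ^ (1 / 4 - n / 2 : ℝ) * ∑ i, pd i ζ x ^ 2 := by
  have hn3' : (3 : ℝ) ≤ n := by exact_mod_cast hn3
  set r : ℝ := 1 / 4 - n / 2 with hr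
  have hwc := wt_rpow_contDiff y hσ r
  have hz := coord_contDiff y
  have hζ1 : ∀ i, ContDiff ℝ ∞ (pd i ζ) := fun i => pd_contDiff hζ
  have hζ10 : ∀ i, ∀ x ∉ L, pd i ζ x = 0 := fun i => pd_zero_off hL hζ0
  have hib := radial_ibp hL (hζ.pow 2) (fun x hx => by simp [hζ0 x hx]) y hσ r
  have hpos : 0 ≤ ∫ x, σ ^ 2 * (wt y σ x ^ r / wt y σ x) * ζ x ^ 2 :=
    integral_nonneg fun x => by
      have := wt_pos y hσ x
      have := Real.rpow_pos_of_pos this r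
      positivity
  have i1 : Integrable fun x => wt y σ x ^ r * ζ x ^ 2 :=
    integrable_off hL (hwc.mul (hζ.pow 2)).continuous (fun x hx => by simp [hζ0 x hx])
  have i2 : Integrable fun x => wt y σ x * wt y σ x ^ r * ∑ i, pd i ζ x ^ 2 :=
    integrable_off hL (((wt_contDiff y σ).mul hwc).mul
      (ContDiff.sum fun i _ => (hζ1 i).pow 2)).continuous (fun x hx => by simp [hζ10 _ x hx])
  have i3 : Integrable fun x => wt y σ x ^ r * ∑ i, (x i - y i) * pd i (fun x => ζ x ^ 2) x :=
    integrable_off hL (hwc.mul (ContDiff.sum fun i _ => (hz i).mul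
      (pd_contDiff (hζ.pow 2)))).continuous
      (fun x hx => by simp [pd_zero_off hL (g := fun x => ζ x ^ 2)
        (fun x hx => by simp [hζ0 x hx]) x hx])
  obtain ⟨hi, hs⟩ := integral_comb i1 i2 i2 i2 i2 (1 / 4) 4 0 0 0
  have hle : -(∫ x, wt y σ x ^ r * ∑ i, (x i - y i) * pd i (fun x => ζ x ^ 2) x) ≤
      1 / 4 * (∫ x, wt y σ x ^ r * ζ x ^ 2) +
        4 * ∫ x, wt y σ x * wt y σ x ^ r * ∑ i, pd i ζ x ^ 2 := by
    have e1 : ∀ a b : ℝ, 1 / 4 * a + 4 * b = 1 / 4 * a + 4 * b + 0 * b + 0 * b + 0 * b :=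
      fun a b => by ring
    rw [e1, ← hs, ← integral_neg]
    refine integral_mono i3.neg hi fun x => ?_
    have hw := wt_pos y hσ x
    have hwr := Real.rpow_pos_of_pos hw r
    have e2 : ∑ i, (x i - y i) * pd i (fun x => ζ x ^ 2) x =
        2 * ζ x * ∑ i, (x i - y i) * pd i ζ x := by
      rw [Finset.mul_sum]
      exact Finset.sum_congr rfl fun i _ => by rw [pd_sq (hζ.of_le (by simp))]; ring
    have h1 : (∑ i, (x i - y i) * pd i ζ x) ^ 2 ≤ wt y σ x * ∑ i, pd i ζ x ^ 2 := by
      refine (sum_cs _ _).trans (mul_le_mul_of_nonneg_right ?_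
        (Finset.sum_nonneg fun i _ => sq_nonneg _))
      unfold wt; nlinarith
    simp only [e2]
    set s := ∑ i, (x i - y i) * pd i ζ x
    set g := ∑ i, pd i ζ x ^ 2
    have h2 : -(2 * ζ x * s) ≤ 1 / 4 * ζ x ^ 2 + 4 * (wt y σ x * g) := by
      nlinarith [sq_nonneg (ζ x + 4 * s)]
    have h3 := mul_le_mul_of_nonneg_left h2 hwr.le
    linarith
  have h4 : (n : ℝ) + 2 * r = 1 / 2 := by rw [hr]; ring
  rw [h4] at hib
  have h5 : 0 ≤ -(2 * r) := by rw [hr]; linarith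
  nlinarith [mul_nonneg h5 hpos]

/-- The representation formula, after Cauchy-Schwarz with parameter `t`: the mollification of
`ζ² u` at `y` is controlled by `u` where `ζ` varies and by a weighted Dirichlet integral. -/
lemma mollified_bound {L : Set (EuclideanSpace ℝ (Fin n))} (hL : IsCompact L)
    {u : EuclideanSpace ℝ (Fin n) → ℝ} (hu : ContDiff ℝ ∞ u)
    {ζ : EuclideanSpace ℝ (Fin n) → ℝ} (hζ : ContDiff ℝ ∞ ζ) (hζ0 : ∀ x ∉ L, ζ x = 0)
    (y : EuclideanSpace ℝ (Fin n)) {σ : ℝ} (hσ : 0 < σ) {t : ℝ} (ht : 0 < t) :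
    |n * ∫ x, σ ^ 2 * (wt y σ x ^ (-(n / 2) : ℝ) / wt y σ x) * (ζ x ^ 2 * u x)| ≤
      (∫ x, wt y σ x ^ (-(n / 2) : ℝ) * |2 * ζ x * ∑ i, (x i - y i) * pd i ζ x| * |u x|) +
      1 / 2 * (t * (∫ x, wt y σ x ^ (3 / 4 - n / 2 : ℝ) * ζ x ^ 2 * ∑ i, pd i u x ^ 2) +
        t⁻¹ * ∫ x, wt y σ x ^ (1 / 4 - n / 2 : ℝ) * ζ x ^ 2) := by
  set r : ℝ := -(n / 2) with hr
  have hwc := fun r => wt_rpow_contDiff y hσ r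
  have hz := coord_contDiff y
  have hζ1 : ∀ i, ContDiff ℝ ∞ (pd i ζ) := fun i => pd_contDiff hζ
  have hu1 : ∀ i, ContDiff ℝ ∞ (pd i u) := fun i => pd_contDiff hu
  have hib := radial_ibp hL ((hζ.pow 2).mul hu) (fun x hx => by simp [hζ0 x hx]) y hσ r
  have h4 : (n : ℝ) + 2 * r = 0 := by rw [hr]; ring
  have h5 : (n : ℝ) = -(2 * r) := by linarith
  have e0 : n * ∫ x, σ ^ 2 * (wt y σ x ^ r / wt y σ x) * (ζ x ^ 2 * u x) =
      -∫ x, wt y σ x ^ r * ∑ i, (x i - y i) * pd i (fun x => ζ x ^ 2 * u x) x := by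
    rw [h4] at hib
    rw [h5]
    linarith
  rw [e0, abs_neg]
  have i1 : Integrable fun x =>
      wt y σ x ^ r * |2 * ζ x * ∑ i, (x i - y i) * pd i ζ x| * |u x| :=
    integrable_off hL (((hwc r).continuous.mul ((contDiff_const.mul hζ).mul (ContDiff.sum fun i _ =>
      (hz i).mul (hζ1 i))).continuous.abs).mul hu.continuous.abs)
      (fun x hx => by simp [hζ0 x hx])
  have i2 : Integrable fun x => wt y σ x ^ (3 / 4 - n / 2 : ℝ) * ζ x ^ 2 * ∑ i, pd i u x ^ 2 :=
    integrable_off hL (((hwc _).mul (hζ.pow 2)).mul (ContDiff.sum fun i _ =>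
      (hu1 i).pow 2)).continuous (fun x hx => by simp [hζ0 x hx])
  have i3 : Integrable fun x => wt y σ x ^ (1 / 4 - n / 2 : ℝ) * ζ x ^ 2 :=
    integrable_off hL ((hwc _).mul (hζ.pow 2)).continuous (fun x hx => by simp [hζ0 x hx])
  obtain ⟨hi, hs⟩ := integral_comb i1 i2 i3 i3 i3 1 (1 / 2 * t) (1 / 2 * t⁻¹) 0 0
  have e1 : ∀ a b c : ℝ, a + 1 / 2 * (t * b + t⁻¹ * c) =
      1 * a + 1 / 2 * t * b + 1 / 2 * t⁻¹ * c + 0 * c + 0 * c := fun a b c => by ring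
  rw [e1, ← hs, ← Real.norm_eq_abs]
  refine norm_integral_le_of_norm_le hi (Filter.Eventually.of_forall fun x => ?_)
  have hw := wt_pos y hσ x
  have e2 : ∑ i, (x i - y i) * pd i (fun x => ζ x ^ 2 * u x) x =
      (2 * ζ x * ∑ i, (x i - y i) * pd i ζ x) * u x +
        ζ x ^ 2 * ∑ i, (x i - y i) * pd i u x := by
    have : ∀ i, (x i - y i) * pd i (fun x => ζ x ^ 2 * u x) x =
        2 * ζ x * u x * ((x i - y i) * pd i ζ x) + ζ x ^ 2 * ((x i - y i) * pd i u x) :=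
      fun i => by
        rw [pd_mul ((hζ.pow 2).of_le (by simp)) (hu.of_le (by simp)),
          pd_sq (hζ.of_le (by simp))]
        ring
    rw [Finset.sum_congr rfl fun i _ => this i, Finset.sum_add_distrib, ← Finset.mul_sum,
      ← Finset.mul_sum]
    ring
  have h1 : (∑ i, (x i - y i) * pd i u x) ^ 2 ≤ wt y σ x * ∑ i, pd i u x ^ 2 := by
    refine (sum_cs _ _).trans (mul_le_mul_of_nonneg_right ?_
      (Finset.sum_nonneg fun i _ => sq_nonneg _))
    unfold wt; nlinarith
  have hP : 0 ≤ ∑ i, pd i u x ^ 2 := Finset.sum_nonneg fun i _ => sq_nonneg _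
  have hr0 := Real.rpow_pos_of_pos hw r
  have hr1 := Real.rpow_pos_of_pos hw (3 / 4 - n / 2 : ℝ)
  have hr2 := Real.rpow_pos_of_pos hw (1 / 4 - n / 2 : ℝ)
  have hexp : (wt y σ x ^ r) ^ 2 * wt y σ x =
      wt y σ x ^ (3 / 4 - n / 2 : ℝ) * wt y σ x ^ (1 / 4 - n / 2 : ℝ) := by
    have h := Real.rpow_add hw (r + r) 1
    rw [Real.rpow_one, Real.rpow_add hw r r] at h
    rw [sq, ← h, ← Real.rpow_add hw]
    congr 1
    rw [hr]; ring
  rw [e2, Real.norm_eq_abs, mul_add]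
  set s := ∑ i, (x i - y i) * pd i u x
  set P := ∑ i, pd i u x ^ 2
  set k := 2 * ζ x * ∑ i, (x i - y i) * pd i ζ x
  set w := wt y σ x
  have h2 : 2 * (w ^ r * |s|) ≤ t * (w ^ (3 / 4 - n / 2 : ℝ) * P) +
      t⁻¹ * w ^ (1 / 4 - n / 2 : ℝ) := by
    refine two_mul_le_of_sq_le ?_ (by positivity) (by positivity)
    rw [mul_pow, sq_abs]
    calc _ ≤ (w ^ r) ^ 2 * (w * P) := by gcongr
      _ = ((w ^ r) ^ 2 * w) * P := by ring
      _ = _ := by rw [hexp]; field_simp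
  have h3 := mul_le_mul_of_nonneg_right h2 (sq_nonneg (ζ x))
  have h6 : |w ^ r * (k * u x) + w ^ r * (ζ x ^ 2 * s)| ≤
      w ^ r * |k| * |u x| + w ^ r * |s| * ζ x ^ 2 := by
    refine (abs_add_le _ _).trans (le_of_eq ?_)
    have h7 : |w ^ r * (k * u x)| = w ^ r * |k| * |u x| := by
      rw [abs_mul, abs_mul k, abs_of_pos hr0]; ring
    have h8 : |w ^ r * (ζ x ^ 2 * s)| = w ^ r * |s| * ζ x ^ 2 := by
      rw [abs_mul, abs_mul (ζ x ^ 2), abs_of_pos hr0, abs_of_nonneg (sq_nonneg (ζ x))]; ring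
    rw [h7, h8]
  linarith

end representation

/-! ### The approximate identity and the cutoff -/

section limit

variable {n : ℕ}

/-- The rescaled kernels `σ² (|x - y|² + σ²)^(-n/2-1)` form, up to a positive constant, an
approximate identity at `y`. -/
lemma kernel_limit : ∃ c : ℝ, 0 < c ∧
    ∀ (v : EuclideanSpace ℝ (Fin n) → ℝ) (B : ℝ), Continuous v → (∀ x, |v x| ≤ B) →
    ∀ y, Filter.Tendsto
      (fun σ : ℝ => ∫ x, σ ^ 2 * (wt y σ x ^ (-(n / 2) : ℝ) / wt y σ x) * v x)
      (nhdsWithin 0 (Set.Ioi 0)) (nhds (c * v y)) := by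
  set k : EuclideanSpace ℝ (Fin n) → ℝ := fun z => (1 + ‖z‖ ^ 2) ^ (-((n : ℝ) + 2) / 2) with hk
  have hki : Integrable k := integrable_rpow_neg_one_add_norm_sq (by simp)
  have hkp : ∀ z, 0 < k z := fun z => Real.rpow_pos_of_pos (by positivity) _
  have hkc : Continuous k := (continuous_const.add (continuous_norm.pow 2)).rpow_const
    fun z => Or.inl (show (0 : ℝ) < 1 + ‖z‖ ^ 2 by positivity).ne'
  refine ⟨∫ z, k z, integral_pos_of_integrable_nonneg_nonzero (x := 0) hkc hki
    (fun z => (hkp z).le) (hkp 0).ne', fun v B hv hB y => ?_⟩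
  -- the substitution `x = y + σ z`
  have hsub : ∀ σ : ℝ, 0 < σ →
      ∫ x, σ ^ 2 * (wt y σ x ^ (-(n / 2) : ℝ) / wt y σ x) * v x =
        ∫ z, k z * v (y + σ • z) := fun σ hσ => by
    set F : EuclideanSpace ℝ (Fin n) → ℝ :=
      fun x => σ ^ 2 * (wt y σ x ^ (-(n / 2) : ℝ) / wt y σ x) * v x with hF
    have h1 := integral_add_left_eq_self (μ := volume) F y
    have h2 := Measure.integral_comp_smul volume (fun x => F (y + x)) σ
    have hσn : 0 < σ ^ n := by positivity
    rw [finrank_euclideanSpace_fin, abs_of_pos (inv_pos.2 hσn), smul_eq_mul, h1] at h2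
    have h3 : ∀ z, F (y + σ • z) = (σ ^ n)⁻¹ * (k z * v (y + σ • z)) := fun z => by
      have h4 : wt y σ (y + σ • z) = σ ^ 2 * (1 + ‖z‖ ^ 2) := by
        rw [wt_eq, add_sub_cancel_left, norm_smul, Real.norm_eq_abs, mul_pow, sq_abs]; ring
      have h5 : (0 : ℝ) < 1 + ‖z‖ ^ 2 := by positivity
      have h6 : (σ ^ 2) ^ (-(n / 2) : ℝ) = (σ ^ n)⁻¹ := by
        rw [← Real.rpow_natCast σ 2, ← Real.rpow_mul hσ.le, ← Real.rpow_natCast σ n,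
          ← Real.rpow_neg hσ.le]
        congr 1; push_cast; ring
      have h7 : k z = (1 + ‖z‖ ^ 2) ^ (-(n / 2) : ℝ) / (1 + ‖z‖ ^ 2) := by
        rw [← Real.rpow_sub_one h5.ne']
        change (1 + ‖z‖ ^ 2) ^ (-((n : ℝ) + 2) / 2) = _
        congr 1; ring
      simp only [hF]
      rw [h4, Real.mul_rpow (by positivity) h5.le, h6, h7]
      field_simp
    simp only [h3, integral_const_mul] at h2
    exact (mul_left_cancel₀ (inv_pos.2 hσn).ne' h2).symm
  have hlim : Filter.Tendsto (fun σ : ℝ => ∫ z, k z * v (y + σ • z))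
      (nhdsWithin 0 (Set.Ioi 0)) (nhds (∫ z, k z * v y)) := by
    refine tendsto_integral_filter_of_dominated_convergence (fun z => k z * B)
      (Filter.Eventually.of_forall fun σ => (hkc.mul (hv.comp (by fun_prop))).aestronglyMeasurable)
      (Filter.Eventually.of_forall fun σ => Filter.Eventually.of_forall fun z => ?_)
      (hki.mul_const B) (Filter.Eventually.of_forall fun z => ?_)
    · rw [norm_mul, Real.norm_eq_abs, Real.norm_eq_abs, abs_of_pos (hkp z)]
      exact mul_le_mul_of_nonneg_left (hB _) (hkp z).le
    · have : Continuous fun σ : ℝ => k z * v (y + σ • z) :=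
        continuous_const.mul (hv.comp (by fun_prop))
      have h := (this.tendsto 0).mono_left (nhdsWithin_le_nhds (s := Set.Ioi 0))
      simpa using h
  rw [integral_mul_const] at hlim
  refine hlim.congr' ?_
  filter_upwards [self_mem_nhdsWithin] with σ hσ
  exact (hsub σ hσ).symm

/-- A smooth cutoff equal to `1` on `{dist(·, ∂Ω) ≥ d}` and supported in a compact subset
of `Ω`. -/
lemma exists_cutoff {Ω : Set (EuclideanSpace ℝ (Fin n))} (hΩ : IsOpen Ω)
    (hb : Bornology.IsBounded Ω) {d : ℝ} (hd : 0 < d) :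
    ∃ (L : Set (EuclideanSpace ℝ (Fin n))) (ζ : EuclideanSpace ℝ (Fin n) → ℝ),
      IsCompact L ∧ L ⊆ Ω ∧ ContDiff ℝ ∞ ζ ∧ (∀ x ∉ L, ζ x = 0) ∧
      (∀ x, 0 ≤ ζ x) ∧ (∀ x, ζ x ≤ 1) ∧
      ∀ x ∈ Ω, d ≤ Metric.infDist x (frontier Ω) → ζ x = 1 ∧ ∀ i, pd i ζ x = 0 := by
  set K := closure Ω ∩ {x | d ≤ Metric.infDist x (frontier Ω)} with hK
  have hKcl : IsClosed K := isClosed_closure.inter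
    (isClosed_le continuous_const (Metric.continuous_infDist_pt _))
  have hKc : IsCompact K := (hb.closure.isCompact_closure).of_isClosed_subset hKcl
    (Set.inter_subset_left.trans subset_closure)
  have hKΩ : K ⊆ Ω := fun x hx => by
    by_contra hxΩ
    have : x ∈ frontier Ω := by
      rw [hΩ.frontier_eq]; exact ⟨hx.1, hxΩ⟩
    have h2 : d ≤ Metric.infDist x (frontier Ω) := hx.2
    rw [Metric.infDist_zero_of_mem this] at h2
    linarith
  obtain ⟨L, hL, hKL, hLΩ⟩ := exists_compact_between hKc hΩ hKΩ
  obtain ⟨ζ, h0, h1, h01⟩ := exists_contMDiffMap_zero_one_of_isClosed (n := ⊤)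
    (modelWithCornersSelf ℝ (EuclideanSpace ℝ (Fin n)))
    (isOpen_interior (s := L)).isClosed_compl hKcl
    (Set.disjoint_left.2 fun x hx hxK => hx (hKL hxK))
  refine ⟨L, ζ, hL, hLΩ, ζ.contMDiff.contDiff, fun x hx => h0 fun h => hx (interior_subset h),
    fun x => (h01 x).1, fun x => (h01 x).2, fun x hx hxd => ?_⟩
  have hx1 : ζ x = 1 := h1 ⟨subset_closure hx, hxd⟩
  refine ⟨hx1, fun i => ?_⟩
  have hmax : IsLocalMax (ζ : EuclideanSpace ℝ (Fin n) → ℝ) x :=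
    Filter.Eventually.of_forall fun z => by rw [hx1]; exact (h01 z).2
  unfold pd
  rw [hmax.fderiv_eq_zero]; simp

end limit

/-! ### The interior bound -/

section final

variable {n : ℕ}

/-- Optimisation in the Cauchy-Schwarz parameter `t`. -/
lemma le_of_forall_param {a b C₁ C₂ E : ℝ} (hC₁ : 0 ≤ C₁) (hE : 0 ≤ E)
    (h : ∀ t, 0 < t → a ≤ b + 1 / 2 * (t * (C₁ * E) + t⁻¹ * C₂)) :
    a ≤ b + 1 / 2 * (C₁ + C₂) * √E := by
  refine le_of_forall_le_add_mul (B := C₂ / 2) fun e he => ?_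
  have hs := Real.sqrt_nonneg E
  have hpos : 0 < √E + e := by linarith
  have h1 := h (√E + e)⁻¹ (inv_pos.2 hpos)
  rw [inv_inv] at h1
  have h2 : (√E + e)⁻¹ * E ≤ √E := by
    rw [inv_mul_le_iff₀ hpos]
    nlinarith [Real.mul_self_sqrt hE]
  have h3 := mul_le_mul_of_nonneg_left h2 hC₁
  nlinarith

lemma abs_two_mul_le {a s A : ℝ} (ha : a ^ 2 ≤ 1) (hs : s ^ 2 ≤ A) : |2 * a * s| ≤ 1 + A := by
  rw [abs_le]
  constructor <;> nlinarith [sq_nonneg (a + s), sq_nonneg (a - s)]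

lemma integrableOn_of_isBounded {S : Set (EuclideanSpace ℝ (Fin n))}
    (hS : Bornology.IsBounded S) {g : EuclideanSpace ℝ (Fin n) → ℝ} (hg : Continuous g) :
    IntegrableOn g S :=
  (hg.continuousOn.integrableOn_compact hS.isCompact_closure).mono_set subset_closure

/-- Comparison of an integral over the whole space with one over a bounded set, when the
integrand is nontrivial only on that set. -/
lemma integral_le_setIntegral {S : Set (EuclideanSpace ℝ (Fin n))} (hSm : MeasurableSet S)
    (hS : Bornology.IsBounded S) {F g : EuclideanSpace ℝ (Fin n) → ℝ} (hF : Integrable F)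
    (hg : Continuous g) (hg0 : ∀ x, 0 ≤ g x) {K : ℝ} (hK : 0 ≤ K)
    (h : ∀ x, F x ≠ 0 → x ∈ S ∧ F x ≤ K * g x) : ∫ x, F x ≤ K * ∫ x in S, g x := by
  rw [← integral_const_mul, ← integral_indicator hSm]
  refine integral_mono hF
    ((integrable_indicator_iff hSm).2 (integrableOn_of_isBounded hS (hg.const_mul K)))
    fun x => ?_
  by_cases hx : F x = 0
  · simp only [hx]
    exact Set.indicator_nonneg (fun x _ => mul_nonneg hK (hg0 x)) x
  · simp only [Set.indicator_of_mem (h x hx).1]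
    exact (h x hx).2

end final

set_option maxHeartbeats 1000000 in
/-- Interior `L^∞` bound for stable solutions in dimensions `3 ≤ n ≤ 4`:
`‖u‖_{L^∞(K_δ)} ≤ C(‖u‖_{L¹(Ω)} + ‖∇u‖_{L²(Ω∖K_δ)})` with `C = C(Ω, δ)`
independent of `f`. -/
theorem interior_Linfty_bound_dim_3_4 (n : ℕ) (hn3 : 3 ≤ n) (hn4 : n ≤ 4)
    (Ω : Set (EuclideanSpace ℝ (Fin n))) (hΩo : IsOpen Ω)
    (hΩb : Bornology.IsBounded Ω)
    (δ : ℝ) (hδ : 0 < δ) :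
    ∃ C : ℝ, 0 < C ∧
      ∀ (f : ℝ → ℝ) (u : EuclideanSpace ℝ (Fin n) → ℝ),
        ContDiff ℝ 1 f → ContDiff ℝ (⊤ : ℕ∞) u →
        (∀ x ∈ Ω, -(lap u x) = f (u x)) →
        (∀ ξ : EuclideanSpace ℝ (Fin n) → ℝ, ContDiff ℝ 1 ξ →
          (∀ x ∈ frontier Ω, ξ x = 0) →
          ∫ x in Ω, deriv f (u x) * ξ x ^ 2 ≤ ∫ x in Ω, ‖gradient ξ x‖ ^ 2) →
        ∀ y ∈ {x ∈ Ω | δ ≤ Metric.infDist x (frontier Ω)},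
          |u y| ≤ C * ((∫ x in Ω, |u x|) +
            Real.sqrt (∫ x in Ω \ {x ∈ Ω | δ ≤ Metric.infDist x (frontier Ω)},
              ‖gradient u x‖ ^ 2)) := by
  have hn3' : (3 : ℝ) ≤ n := by exact_mod_cast hn3
  obtain ⟨L, ζ, hL, hLΩ, hζ, hζ0, hζnn, hζle, hζK⟩ := exists_cutoff hΩo hΩb (half_pos hδ)
  obtain ⟨c, hc, hlim⟩ := kernel_limit (n := n)
  have hζ1 : ∀ i, ContDiff ℝ ∞ (pd i ζ) := fun i => pd_contDiff hζ
  set g : EuclideanSpace ℝ (Fin n) → ℝ := fun x => ∑ i, pd i ζ x ^ 2 with hg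
  have hgc : Continuous g := continuous_finsetSum _ fun i _ => (hζ1 i).continuous.pow 2
  have hgnn : ∀ x, 0 ≤ g x := fun x => Finset.sum_nonneg fun i _ => sq_nonneg _
  have hg0 : ∀ x ∉ L, g x = 0 := fun x hx => by simp [hg, pd_zero_off hL hζ0 x hx]
  have hgi : Integrable g := integrable_off hL hgc hg0
  obtain ⟨G, hG0, hG⟩ : ∃ G, 0 ≤ G ∧ ∀ x, g x ≤ G := by
    obtain ⟨G, hG⟩ := hL.exists_bound_of_continuousOn hgc.continuousOn
    refine ⟨|G|, abs_nonneg _, fun x => ?_⟩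
    by_cases hx : x ∈ L
    · exact (le_abs_self _).trans ((hG x hx).trans (le_abs_self _))
    · rw [hg0 x hx]; exact abs_nonneg _
  obtain ⟨R, hR⟩ := Metric.isBounded_iff.1 hΩb
  set M : ℝ := R ^ 2 + 1 with hM
  have hM0 : 0 ≤ M := by positivity
  set ρ : ℝ := (δ / 2) ^ 2 with hρ
  have hρ0 : 0 < ρ := by positivity
  set C₁ : ℝ := 17728 * (M * ρ ^ (3 / 4 - n / 2 : ℝ) * G) with hC₁
  set C₂ : ℝ := 16 * (M * ρ ^ (1 / 4 - n / 2 : ℝ) * ∫ x, g x) with hC₂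
  set C₃ : ℝ := ρ ^ (-(n / 2) : ℝ) * (1 + M * G) with hC₃
  have hC₁0 : 0 ≤ C₁ := by positivity
  have hgI : 0 ≤ ∫ x, g x := integral_nonneg hgnn
  have hC₂0 : 0 ≤ C₂ := by positivity
  have hC₃0 : 0 ≤ C₃ := by positivity
  have hnc : 0 < n * c := by positivity
  -- the summand `1` only serves to make the constant positive
  refine ⟨(C₃ + 1 / 2 * (C₁ + C₂) + 1) / (n * c), by positivity, ?_⟩
  intro f u hf hu heq hst y hy
  set S := Ω \ {x ∈ Ω | δ ≤ Metric.infDist x (frontier Ω)} with hS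
  have hSm : MeasurableSet S := hΩo.measurableSet.diff (hΩo.measurableSet.inter
    (isClosed_le continuous_const (Metric.continuous_infDist_pt _)).measurableSet)
  have hSb : Bornology.IsBounded S := hΩb.subset Set.sdiff_subset
  have hu1 : ∀ i, ContDiff ℝ ∞ (pd i u) := fun i => pd_contDiff hu
  simp only [norm_gradient_sq u]
  set P : EuclideanSpace ℝ (Fin n) → ℝ := fun x => ∑ i, pd i u x ^ 2 with hP
  have hPc : Continuous P := continuous_finsetSum _ fun i _ => (hu1 i).continuous.pow 2
  have hPnn : ∀ x, 0 ≤ P x := fun x => Finset.sum_nonneg fun i _ => sq_nonneg _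
  set E := ∫ x in S, P x with hE
  have hE0 : 0 ≤ E := integral_nonneg hPnn
  set U := ∫ x in Ω, |u x| with hU
  have hU0 : 0 ≤ U := integral_nonneg fun x => abs_nonneg _
  -- where the cutoff varies, `x` is close to the boundary, hence far from `y`
  have hfar : ∀ x, g x ≠ 0 → x ∈ S ∧ ρ ≤ ‖x - y‖ ^ 2 ∧ ‖x - y‖ ^ 2 ≤ R ^ 2 := fun x hx => by
    have hxL : x ∈ L := by by_contra h; exact hx (hg0 x h)
    have hxΩ := hLΩ hxL
    have hxd : Metric.infDist x (frontier Ω) < δ / 2 := by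
      by_contra! h
      exact hx (by simp [hg, (hζK x hxΩ h).2])
    have h1 := Metric.infDist_le_infDist_add_dist (s := frontier Ω) (x := y) (y := x)
    have h2 : δ ≤ Metric.infDist y (frontier Ω) := hy.2
    rw [dist_comm, dist_eq_norm] at h1
    have h3 := hR hxΩ hy.1
    rw [dist_eq_norm] at h3
    refine ⟨⟨hxΩ, fun h => ?_⟩, ?_, ?_⟩
    · have : δ ≤ Metric.infDist x (frontier Ω) := h.2
      linarith
    · rw [hρ]; gcongr; linarith
    · gcongr
  -- uniform bounds, for `0 < σ ≤ 1`
  have hunif : ∀ σ : ℝ, 0 < σ → σ ≤ 1 → ∀ t : ℝ, 0 < t →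
      |n * ∫ x, σ ^ 2 * (wt y σ x ^ (-(n / 2) : ℝ) / wt y σ x) * (ζ x ^ 2 * u x)| ≤
        C₃ * U + 1 / 2 * (t * (C₁ * E) + t⁻¹ * C₂) := fun σ hσ hσ1 t ht => by
    have hw := wt_pos y hσ
    have hwρ : ∀ x, g x ≠ 0 → ρ ≤ wt y σ x ∧ wt y σ x ≤ M := fun x hx => by
      obtain ⟨-, h1, h2⟩ := hfar x hx
      rw [wt_eq]
      constructor <;> nlinarith
    have hwr : ∀ r : ℝ, r ≤ 0 → ∀ x, g x ≠ 0 → wt y σ x ^ r ≤ ρ ^ r := fun r hr x hx =>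
      Real.rpow_le_rpow_of_nonpos hρ0 (hwρ x hx).1 hr
    have hwc := fun r => wt_rpow_contDiff y hσ r
    have hwg : ∀ r : ℝ, r ≤ 0 → ∀ x, g x ≠ 0 → wt y σ x * wt y σ x ^ r * g x ≤
        M * ρ ^ r * g x := fun r hr x hx => by
      have h1 := hwr r hr x hx
      have h2 := (hwρ x hx).2
      have h3 := (Real.rpow_pos_of_pos (hw x) r).le
      have h4 := hgnn x
      gcongr
    have b1 : ∫ x, wt y σ x ^ (3 / 4 - n / 2 : ℝ) * ζ x ^ 2 * P x ≤ C₁ * E := by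
      refine (weighted_estimate hn3 hn4 hΩo hL hLΩ hf hu heq hst hζ hζ0 y hσ).trans ?_
      rw [hC₁, mul_assoc]
      refine mul_le_mul_of_nonneg_left ?_ (by norm_num)
      refine integral_le_setIntegral hSm hSb (integrable_off hL
        ((((wt_contDiff y σ).mul (hwc _)).continuous.mul hgc).mul hPc)
        (fun x hx => by simp [hg0 x hx])) hPc hPnn (by positivity) fun x hx => ?_
      have hgx : g x ≠ 0 := fun h => hx (by
        change _ * g x * _ = 0
        rw [h]; ring)
      refine ⟨(hfar x hgx).1, mul_le_mul_of_nonneg_right ?_ (hPnn x)⟩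
      refine (hwg _ (by linarith) x hgx).trans ?_
      gcongr
      exact hG x
    have b2 : ∫ x, wt y σ x ^ (1 / 4 - n / 2 : ℝ) * ζ x ^ 2 ≤ C₂ := by
      refine (weight_mass hn3 hL hζ hζ0 y hσ).trans ?_
      rw [hC₂]
      refine mul_le_mul_of_nonneg_left ?_ (by norm_num)
      rw [← integral_const_mul]
      refine integral_mono (integrable_off hL
        (((wt_contDiff y σ).mul (hwc _)).continuous.mul hgc)
        (fun x hx => mul_eq_zero_of_right _ (hg0 x hx))) (hgi.const_mul _) fun x => ?_
      by_cases hgx : g x = 0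
      · change _ * g x ≤ _ * g x
        simp [hgx]
      · exact hwg _ (by linarith) x hgx
    have b3 : ∫ x, wt y σ x ^ (-(n / 2) : ℝ) * |2 * ζ x * ∑ i, (x i - y i) * pd i ζ x| * |u x| ≤
        C₃ * U := by
      refine integral_le_setIntegral hΩo.measurableSet hΩb (integrable_off hL
        (((hwc _).continuous.mul ((contDiff_const.mul hζ).mul (ContDiff.sum fun i _ =>
          (coord_contDiff y i).mul (hζ1 i))).continuous.abs).mul hu.continuous.abs)
        (fun x hx => by simp [hζ0 x hx])) hu.continuous.abs (fun x => abs_nonneg _) hC₃0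
        fun x hx => ?_
      have hgx : g x ≠ 0 := fun h => hx (by
        have : ∀ i, pd i ζ x = 0 := fun i => by
          have := (Finset.sum_eq_zero_iff_of_nonneg fun i _ => sq_nonneg (pd i ζ x)).1 h i
            (Finset.mem_univ i)
          exact pow_eq_zero_iff two_ne_zero |>.1 this
        simp [this])
      refine ⟨(hfar x hgx).1.1, mul_le_mul_of_nonneg_right ?_ (abs_nonneg _)⟩
      have h1 := hwr (-(n / 2)) (by linarith) x hgx
      have h2 : |2 * ζ x * ∑ i, (x i - y i) * pd i ζ x| ≤ 1 + M * G := by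
        have hcs := sum_cs (fun i => x i - y i) (fun i => pd i ζ x)
        set s := ∑ i, (x i - y i) * pd i ζ x
        have hZ : ∑ i, (x i - y i) ^ 2 ≤ M := by
          refine le_trans ?_ (hwρ x hgx).2
          unfold wt; nlinarith
        have h3 : s ^ 2 ≤ M * G := hcs.trans (mul_le_mul hZ (hG x) (hgnn x) hM0)
        have h4 : ζ x ^ 2 ≤ 1 := pow_le_one₀ (hζnn x) (hζle x)
        exact abs_two_mul_le h4 h3
      rw [hC₃]
      exact mul_le_mul h1 h2 (abs_nonneg _) (Real.rpow_pos_of_pos hρ0 _).le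
    have hmb := mollified_bound hL hu hζ hζ0 y hσ ht
    have htb := mul_le_mul_of_nonneg_left b1 ht.le
    have htc := mul_le_mul_of_nonneg_left b2 (inv_pos.2 ht).le
    linarith
  -- let `σ` tend to `0`
  obtain ⟨B, hB⟩ := ((hζ.continuous.pow 2).mul hu.continuous).bounded_above_of_compact_support
    (HasCompactSupport.intro hL fun x hx => by simp [hζ0 x hx])
  have hlim' := ((hlim (fun x => ζ x ^ 2 * u x) B ((hζ.continuous.pow 2).mul hu.continuous)
    hB y).const_mul (n : ℝ)).abs
  have hy1 : ζ y = 1 := (hζK y hy.1 (by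
    have : δ ≤ Metric.infDist y (frontier Ω) := hy.2
    linarith)).1
  have hbound : |(n : ℝ) * (c * u y)| ≤ C₃ * U + 1 / 2 * (C₁ + C₂) * √E := by
    refine le_of_forall_param hC₁0 hE0 fun t ht => ?_
    rw [hy1, one_pow, one_mul] at hlim'
    refine le_of_tendsto hlim' ?_
    filter_upwards [Ioc_mem_nhdsGT (zero_lt_one (α := ℝ))] with σ hσ
    exact hunif σ hσ.1 hσ.2 t ht
  rw [← mul_assoc, abs_mul, abs_of_pos hnc] at hbound
  rw [div_mul_eq_mul_div, le_div_iff₀ hnc]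
  have hs := Real.sqrt_nonneg E
  nlinarith [mul_nonneg hC₃0 hs, mul_nonneg (add_nonneg hC₁0 hC₂0) hU0]

end
end
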